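/- arXiv:2507.03827 — 2 statements merged into one kernel-verified Lean document; each statement's English description precedes it below -/
import Mathlib

section
/- Let 𝒜 ∈ Struc_{c1,c2} with {c1,c2} ∈ SDEC_𝒜, let Q = {c1,c2}^∞ or Q = {c1,c2}², and let P ⊆ U_𝒜^∞. Consider: (i) P ∈ SDEC_𝒜; (ii) P ∈ (SDEC_𝒜^ν)^Q; (iii) P ∈ SDEC_𝒜^{DND}; (iv) P ∈ SDEC_𝒜^{ND}. Then (i) implies (ii), (ii) implies (iii), and (iii) implies (iv). -/
/-!
Every halting computation of a machine without `orGoto` is determined by its input, by the tuples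
guessed by its `ν`-instructions, and by a *script* of natural numbers: the exits taken at relational
tests and the lengths of the guessed tuples (`haltsFrom_iff`).  The script is purely combinatorial,
and natural numbers are available to a deterministic machine in its index registers, so scripts
need not be guessed: a deterministic machine enumerates them and checks one after the other whether
they describe a legitimate halting run (`exists_search`).  Only the components of the guessed tuples
are elements of the structure; they are read from the digital tuple that a DND-machine obtains with
its input, each from a register assigned to it in advance by an injection (`oaddr`).

*Checking a script.*  Index registers can compute all primitive recursive functions
(`exists_calc`).  Following a script, the control flow, the index registers and the copy
instructions of the simulated program are executed symbolically: a register is represented by a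
pointer to the value it holds, and all pointers are primitive recursive in the script
(`primrec_symRun`).  What remains for each step is to fetch at most a fixed number of values into
workspace registers and to apply one operation, constant or relation (`exists_simIns`).

*Digitality.*  A value read for a guess has to be one of `c₁`, `c₂`, and testing this must terminate
for every value, since otherwise the search could get stuck.  The hypothesis `{c₁, c₂} ∈ SDEC A`
suffices: fix halting runs of the semi-deciding machine on `c₁` and on `c₂`, and follow the
run on the given value only as long as it takes the same exits as one of these two.  This test
terminates, accepts `c₁` and `c₂`, and accepts nothing else (`exists_digitTest`).

*The three implications.*  The first one is trivial, because the oracle is irrelevant for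
deterministic machines.  The other two are instances of `exists_guess_machine`: in the second one,
guesses occur during the run and have lengths `c + 1` for `{c₁, c₂}^∞`, or `2` for `{c₁, c₂}²`; in
the third one, there is a single digital tuple, guessed together with the input, and the new machine
verifies that the components it uses are digital, so that arbitrary guesses do no harm.  Since the
boundary between the input and the guess cannot be seen by a machine, the number of guessed
components that are used is part of the script as well.
-/

/-!
A formalization of BSS RAMs over first-order structures (following C. Gaßner,
"Abstract computation over first-order structures", Part II b).

We model a first-order structure with indexed constants, operations and
relations, machines given by finite programs of labeled instructions
(including binary non-deterministic branching `orGoto` and Moschovakis'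
`ν`-operator instructions `nuGuess`), configurations, the (non-deterministic)
transition relation, halting sets, semi-decidability and decidability, the
various non-deterministic machine classes and their result functions.
-/

/-- A first-order structure: a universe together with indexed constants,
operations and relations. -/
structure FOStruct where
  U : Type
  constIdx : Type
  consts : constIdx → U
  opIdx : Type
  ops : opIdx → List U → U
  relIdx : Type
  rels : relIdx → List U → Prop

/-- `U^∞`: all finite nonempty tuples over the universe of `A`. -/
abbrev Tup (A : FOStruct) : Type := { l : List A.U // l ≠ [] }

/-- Instructions of BSS RAMs over `A`.  The first seven kinds are the
deterministic instruction types; `orGoto` is the binary non-deterministic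
branching instruction `goto ℓ₁ or goto ℓ₂`; `nuGuess j` is a ν-oracle
instruction writing a non-deterministically chosen tuple of the oracle set
into the registers `Z_j, Z_{j+1}, …`. -/
inductive Instr (A : FOStruct) : Type where
  | apply (j : ℕ) (i : A.opIdx) (args : List ℕ)
  | const (j : ℕ) (i : A.constIdx)
  | copy (j k : ℕ)
  | branchRel (i : A.relIdx) (args : List ℕ) (l₁ l₂ : ℕ)
  | branchIdx (j k l₁ l₂ : ℕ)
  | incIdx (j : ℕ)
  | resetIdx (j : ℕ)
  | orGoto (l₁ l₂ : ℕ)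
  | nuGuess (j : ℕ)

/-- A configuration: current label, index registers, and `Z`-registers. -/
structure Config (A : FOStruct) where
  label : ℕ
  idx : ℕ → ℕ
  reg : ℕ → A.U

/-- A machine: a finite program together with an oracle set (only used by
`nuGuess` instructions). -/
structure Machine (A : FOStruct) where
  prog : List (Instr A)
  oracle : Set (Tup A)

open scoped Classical in
/-- Execution of a deterministic instruction. -/
noncomputable def execDet {A : FOStruct} (ins : Instr A) (c : Config A) : Config A :=
  match ins with
  | .apply j i args =>
      { c with label := c.label + 1, reg := Function.update c.reg j (A.ops i (args.map c.reg)) }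
  | .const j i =>
      { c with label := c.label + 1, reg := Function.update c.reg j (A.consts i) }
  | .copy j k =>
      { c with label := c.label + 1, reg := Function.update c.reg (c.idx j) (c.reg (c.idx k)) }
  | .branchRel i args l₁ l₂ =>
      { c with label := if A.rels i (args.map c.reg) then l₁ else l₂ }
  | .branchIdx j k l₁ l₂ =>
      { c with label := if c.idx j = c.idx k then l₁ else l₂ }
  | .incIdx j =>
      { c with label := c.label + 1, idx := Function.update c.idx j (c.idx j + 1) }
  | .resetIdx j =>
      { c with label := c.label + 1, idx := Function.update c.idx j 1 }
  | .orGoto l₁ _ => { c with label := l₁ }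
  | .nuGuess _ => { c with label := c.label + 1 }

/-- Write the components of the list `l` into the registers `j, j+1, …`. -/
def writeFrom {A : FOStruct} (reg : ℕ → A.U) (j : ℕ) (l : List A.U) : ℕ → A.U :=
  fun i => if j ≤ i ∧ i - j < l.length then l.getD (i - j) (reg i) else reg i

/-- The (in general non-deterministic) one-step transition relation of `M`. -/
def NStep {A : FOStruct} (M : Machine A) (c c' : Config A) : Prop :=
  ∃ ins, M.prog[c.label]? = some ins ∧
    match ins with
    | Instr.orGoto l₁ l₂ => c' = { c with label := l₁ } ∨ c' = { c with label := l₂ }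
    | Instr.nuGuess j =>
        ∃ y ∈ M.oracle, c' = { c with label := c.label + 1, reg := writeFrom c.reg j y.1 }
    | _ => c' = execDet ins c

/-- Reachability of configurations. -/
def Reaches {A : FOStruct} (M : Machine A) : Config A → Config A → Prop :=
  Relation.ReflTransGen (NStep M)

/-- A configuration is halted if its label is the stop label (or beyond the
program). -/
def Halted {A : FOStruct} (M : Machine A) (c : Config A) : Prop := M.prog.length ≤ c.label

/-- Some computation of `M` starting in `c` reaches the stop instruction. -/
def HaltsFrom {A : FOStruct} (M : Machine A) (c : Config A) : Prop :=
  ∃ c', Reaches M c c' ∧ Halted M c'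

/-- The initial configuration for the input tuple `x` (single-valued input
function (I1)): `(1 . (n,1,…,1) . x . (x_n, x_n, …))`. -/
def inputConfig (A : FOStruct) (x : Tup A) : Config A :=
  { label := 0
    idx := fun j => if j = 1 then x.1.length else 1
    reg := fun i => x.1.getD i (x.1.getLast x.2) }

/-- The initial configuration for input `x` together with a guessed tuple `y`
(multi-valued input function (I3′)): `((n,1,…,1) . x . y . (x_n, x_n, …))`. -/
def inputConfigG (A : FOStruct) (x y : Tup A) : Config A :=
  { label := 0
    idx := fun j => if j = 1 then x.1.length else 1
    reg := fun i => (x.1 ++ y.1).getD i (x.1.getLast x.2) }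

/-- The output of a configuration: the tuple `(u_1, …, u_{ν₁})`. -/
def output {A : FOStruct} (c : Config A) : Tup A :=
  ⟨(List.range (max (c.idx 1) 1)).map c.reg, by
    intro hcon
    have h1 := congrArg List.length hcon
    simp only [List.length_map, List.length_range, List.length_nil] at h1
    omega⟩

/-- All outputs of halting computations of `M` starting in `c`. -/
def ResFrom {A : FOStruct} (M : Machine A) (c : Config A) : Set (Tup A) :=
  { z | ∃ c', Reaches M c c' ∧ Halted M c' ∧ output c' = z }

/-- The result function of `M` (for machines with input function (I1)). -/
def Res {A : FOStruct} (M : Machine A) (x : Tup A) : Set (Tup A) :=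
  ResFrom M (inputConfig A x)

/-- Deterministic instructions: neither `orGoto` nor `nuGuess`. -/
def Instr.isDet {A : FOStruct} : Instr A → Prop
  | .orGoto _ _ => False
  | .nuGuess _ => False
  | _ => True

/-- Instructions allowed in `M_A^{NDB}`-machines: no ν-instructions. -/
def Instr.noNu {A : FOStruct} : Instr A → Prop
  | .nuGuess _ => False
  | _ => True

/-- Instructions allowed in ν-oracle machines: no binary branching. -/
def Instr.noOr {A : FOStruct} : Instr A → Prop
  | .orGoto _ _ => False
  | _ => True

/-- `M` is a deterministic BSS RAM (a machine in `M_A`). -/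
def Machine.Det {A : FOStruct} (M : Machine A) : Prop := ∀ ins ∈ M.prog, ins.isDet

/-- `M` is a machine in `M_A^{NDB}` (binary non-deterministic branching
allowed). -/
def Machine.NDB {A : FOStruct} (M : Machine A) : Prop := ∀ ins ∈ M.prog, ins.noNu

/-- `M` is a ν-oracle machine in `M_A^ν(Q)`. -/
def Machine.NuMach {A : FOStruct} (M : Machine A) (Q : Set (Tup A)) : Prop :=
  (∀ ins ∈ M.prog, ins.noOr) ∧ M.oracle = Q

/-- `SDEC_A`: the class of problems semi-decidable by a deterministic
BSS RAM in `M_A`. -/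
def SDEC (A : FOStruct) : Set (Set (Tup A)) :=
  { P | ∃ M : Machine A, M.Det ∧ ∀ x, x ∈ P ↔ HaltsFrom M (inputConfig A x) }

/-- `DEC_A`: the class of decidable problems. -/
def DEC (A : FOStruct) : Set (Set (Tup A)) :=
  { P | P ∈ SDEC A ∧ Pᶜ ∈ SDEC A }

/-- `SDEC_A^{NDB}`: semi-decidability by machines with binary
non-deterministic branchings. -/
def SDECndb (A : FOStruct) : Set (Set (Tup A)) :=
  { P | ∃ M : Machine A, M.NDB ∧ ∀ x, x ∈ P ↔ HaltsFrom M (inputConfig A x) }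

/-- `(SDEC_A^ν)^Q`: semi-decidability by ν-oracle machines with oracle `Q`. -/
def SDECnu (A : FOStruct) (Q : Set (Tup A)) : Set (Set (Tup A)) :=
  { P | ∃ M : Machine A, M.NuMach Q ∧ ∀ x, x ∈ P ↔ HaltsFrom M (inputConfig A x) }

/-- A tuple is digital (w.r.t. `c₁, c₂`) if all its components are among the
two constants. -/
def Digital {A : FOStruct} (c₁ c₂ : A.U) (y : Tup A) : Prop := ∀ u ∈ y.1, u = c₁ ∨ u = c₂

/-- `SDEC_A^{ND}`: acceptance by machines guessing arbitrary tuples. -/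
def SDECnd (A : FOStruct) : Set (Set (Tup A)) :=
  { P | ∃ M : Machine A, M.Det ∧ ∀ x, x ∈ P ↔ ∃ y : Tup A, HaltsFrom M (inputConfigG A x y) }

/-- `SDEC_A^{DND}`: acceptance by digitally non-deterministic machines whose
guesses range over tuples of the two constants. -/
def SDECdnd (A : FOStruct) (c₁ c₂ : A.U) : Set (Set (Tup A)) :=
  { P | ∃ M : Machine A, M.Det ∧
      ∀ x, x ∈ P ↔ ∃ y : Tup A, Digital c₁ c₂ y ∧ HaltsFrom M (inputConfigG A x y) }

/-- The result function of a machine used non-deterministically with guesses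
ranging over all tuples. -/
def ResND {A : FOStruct} (M : Machine A) (x : Tup A) : Set (Tup A) :=
  { z | ∃ y : Tup A, z ∈ ResFrom M (inputConfigG A x y) }

/-- The result function of a digitally non-deterministic machine. -/
def ResDND {A : FOStruct} (c₁ c₂ : A.U) (M : Machine A) (x : Tup A) : Set (Tup A) :=
  { z | ∃ y : Tup A, Digital c₁ c₂ y ∧ z ∈ ResFrom M (inputConfigG A x y) }

/-- The identity relation `id_{U_A}` viewed as a decision problem
(the set of pairs `(x, x)`). -/
def idSet (A : FOStruct) : Set (Tup A) := { p | ∃ x : A.U, p.1 = [x, x] }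

/-- The one-component tuple `(c)`. -/
def singTup (A : FOStruct) (c : A.U) : Tup A := ⟨[c], by simp⟩

/-- The singleton `{c}` viewed as a decision problem. -/
def singSet (A : FOStruct) (c : A.U) : Set (Tup A) := { p | p.1 = [c] }

/-- The two-element set `{c₁, c₂}` viewed as a decision problem. -/
def constPair (A : FOStruct) (c₁ c₂ : A.U) : Set (Tup A) := { p | p.1 = [c₁] ∨ p.1 = [c₂] }

/-- `{c₁,c₂}^∞`: all finite nonempty tuples over the two constants. -/
def binTups (A : FOStruct) (c₁ c₂ : A.U) : Set (Tup A) := { p | ∀ u ∈ p.1, u = c₁ ∨ u = c₂ }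

/-- `{c₁,c₂}²`: all pairs over the two constants. -/
def pairTups (A : FOStruct) (c₁ c₂ : A.U) : Set (Tup A) :=
  { p | ∃ u v : A.U, (u = c₁ ∨ u = c₂) ∧ (v = c₁ ∨ v = c₂) ∧ p.1 = [u, v] }

open scoped Classical in
/-- The characteristic function `χ_P` with values `c₁` (yes) and `c₂` (no). -/
noncomputable def chi (A : FOStruct) (c₁ c₂ : A.U) (P : Set (Tup A)) (x : Tup A) : Tup A :=
  if x ∈ P then singTup A c₁ else singTup A c₂

/-- `M` (a deterministic BSS RAM) computes the total function `f`. -/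
def ComputesFn (A : FOStruct) (M : Machine A) (f : Tup A → Tup A) : Prop :=
  M.Det ∧ ∀ x, Res M x = {f x}

/-- `A` contains the identity relation `id_{U_A}` among its relations. -/
def HasIdRel (A : FOStruct) : Prop := ∃ r : A.relIdx, ∀ x y : A.U, A.rels r [x, y] ↔ x = y

/-- `c` is a constant of the structure `A`. -/
def HasConst (A : FOStruct) (c : A.U) : Prop := ∃ i : A.constIdx, A.consts i = c

/-- The class of result functions of deterministic machines. -/
def ResClassDet (A : FOStruct) : Set (Tup A → Set (Tup A)) :=
  { f | ∃ M : Machine A, M.Det ∧ f = Res M }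

/-- `{Res_M | M ∈ M_A^{NDB}}`. -/
def ResClassNDB (A : FOStruct) : Set (Tup A → Set (Tup A)) :=
  { f | ∃ M : Machine A, M.NDB ∧ f = Res M }

/-- `{Res_M | M ∈ M_A^ν(Q)}`. -/
def ResClassNu (A : FOStruct) (Q : Set (Tup A)) : Set (Tup A → Set (Tup A)) :=
  { f | ∃ M : Machine A, M.NuMach Q ∧ f = Res M }

/-- `{Res_M | M ∈ M_A^{ND}}`. -/
def ResClassND (A : FOStruct) : Set (Tup A → Set (Tup A)) :=
  { f | ∃ M : Machine A, M.Det ∧ f = ResND M }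

/-- `{Res_M | M ∈ M_A^{DND}}`. -/
def ResClassDND (A : FOStruct) (c₁ c₂ : A.U) : Set (Tup A → Set (Tup A)) :=
  { f | ∃ M : Machine A, M.Det ∧ f = ResDND c₁ c₂ M }

/-! ### A structured deterministic language and its compilation -/

/-- A program state without the label: the index registers and the `Z`-registers. -/
structure St (A : FOStruct) where
  idx : ℕ → ℕ
  reg : ℕ → A.U

/-- The configuration with label `l` and memory `s`. -/
def St.at {A : FOStruct} (s : St A) (l : ℕ) : Config A := ⟨l, s.idx, s.reg⟩

/-- Structured deterministic commands.  `whl j k c` repeats `c` as long as the index registers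
`j` and `k` differ; the other constructors mirror the deterministic instructions. -/
inductive Cmd (A : FOStruct) : Type where
  | skip
  | app (j : ℕ) (i : A.opIdx) (args : List ℕ)
  | con (j : ℕ) (i : A.constIdx)
  | cpy (j k : ℕ)
  | inc (j : ℕ)
  | rst (j : ℕ)
  | seq (c d : Cmd A)
  | ifI (j k : ℕ) (c d : Cmd A)
  | ifR (i : A.relIdx) (args : List ℕ) (c d : Cmd A)
  | whl (j k : ℕ) (c : Cmd A)

namespace Cmd
variable {A : FOStruct}

/-- The number of instructions a command compiles to. -/
def len : Cmd A → ℕ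
  | skip => 0
  | app _ _ _ => 1
  | con _ _ => 1
  | cpy _ _ => 1
  | inc _ => 1
  | rst _ => 1
  | seq c d => c.len + d.len
  | ifI _ _ c d => 1 + (c.len + (1 + d.len))
  | ifR _ _ c d => 1 + (c.len + (1 + d.len))
  | whl _ _ c => 1 + (c.len + 1)

/-- The instructions of a command whose code starts at label `o`.  Unconditional jumps are
written as comparisons of index register `0` with itself. -/
def code : Cmd A → ℕ → List (Instr A)
  | skip, _ => []
  | app j i args, _ => [.apply j i args]
  | con j i, _ => [.const j i]
  | cpy j k, _ => [.copy j k]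
  | inc j, _ => [.incIdx j]
  | rst j, _ => [.resetIdx j]
  | seq c d, o => c.code o ++ d.code (o + c.len)
  | ifI j k c d, o =>
      [.branchIdx j k (o + 1) (o + 1 + c.len + 1)] ++ (c.code (o + 1) ++
        ([.branchIdx 0 0 (o + 1 + c.len + 1 + d.len) (o + 1 + c.len + 1 + d.len)] ++
          d.code (o + 1 + c.len + 1)))
  | ifR i args c d, o =>
      [.branchRel i args (o + 1) (o + 1 + c.len + 1)] ++ (c.code (o + 1) ++
        ([.branchIdx 0 0 (o + 1 + c.len + 1 + d.len) (o + 1 + c.len + 1 + d.len)] ++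
          d.code (o + 1 + c.len + 1)))
  | whl j k c, o =>
      [.branchIdx j k (o + 1 + c.len + 1) (o + 1)] ++ (c.code (o + 1) ++ [.branchIdx 0 0 o o])

theorem length_code (c : Cmd A) (o : ℕ) : (c.code o).length = c.len := by
  induction c generalizing o <;> simp_all [code, len] <;> omega

theorem isDet_code (c : Cmd A) (o : ℕ) : ∀ ins ∈ c.code o, ins.isDet := by
  induction c generalizing o with
  | seq c d hc hd =>
    intro ins h
    rcases List.mem_append.1 h with h | h
    · exact hc _ _ h
    · exact hd _ _ h
  | ifI j k c d hc hd =>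
    intro ins h
    simp only [code, List.mem_append, List.mem_singleton] at h
    rcases h with rfl | h | rfl | h
    · trivial
    · exact hc _ _ h
    · trivial
    · exact hd _ _ h
  | ifR j k c d hc hd =>
    intro ins h
    simp only [code, List.mem_append, List.mem_singleton] at h
    rcases h with rfl | h | rfl | h
    · trivial
    · exact hc _ _ h
    · trivial
    · exact hd _ _ h
  | whl j k c hc =>
    intro ins h
    simp only [code, List.mem_append, List.mem_singleton] at h
    rcases h with rfl | h | rfl
    · trivial
    · exact hc _ _ h
    · trivial
  | _ => simp [code, Instr.isDet]

/-- Big-step semantics: `Exec c s s'` says that `c` started in `s` terminates in `s'`. -/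
inductive Exec : Cmd A → St A → St A → Prop
  | skip (s) : Exec skip s s
  | app (s j i args) :
      Exec (app j i args) s ⟨s.idx, Function.update s.reg j (A.ops i (args.map s.reg))⟩
  | con (s j i) : Exec (con j i) s ⟨s.idx, Function.update s.reg j (A.consts i)⟩
  | cpy (s j k) :
      Exec (cpy j k) s ⟨s.idx, Function.update s.reg (s.idx j) (s.reg (s.idx k))⟩
  | inc (s j) : Exec (inc j) s ⟨Function.update s.idx j (s.idx j + 1), s.reg⟩
  | rst (s j) : Exec (rst j) s ⟨Function.update s.idx j 1, s.reg⟩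
  | seq {c d s t u} : Exec c s t → Exec d t u → Exec (seq c d) s u
  | ifI_pos {j k c d s t} : s.idx j = s.idx k → Exec c s t → Exec (ifI j k c d) s t
  | ifI_neg {j k c d s t} : s.idx j ≠ s.idx k → Exec d s t → Exec (ifI j k c d) s t
  | ifR_pos {i args c d s t} : A.rels i (args.map s.reg) → Exec c s t → Exec (ifR i args c d) s t
  | ifR_neg {i args c d s t} : ¬ A.rels i (args.map s.reg) → Exec d s t → Exec (ifR i args c d) s t
  | whl_exit {j k c s} : s.idx j = s.idx k → Exec (whl j k c) s s
  | whl_step {j k c s t u} : s.idx j ≠ s.idx k → Exec c s t → Exec (whl j k c) t u →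
      Exec (whl j k c) s u

end Cmd

/-- The list `l` of instructions occurs in the program `p` starting at label `o`. -/
def CodeAt {A : FOStruct} (p : List (Instr A)) (o : ℕ) (l : List (Instr A)) : Prop :=
  ∀ i, i < l.length → p[o + i]? = l[i]?

section compile
variable {A : FOStruct}

theorem CodeAt.append {p : List (Instr A)} {o : ℕ} {l m : List (Instr A)}
    (h : CodeAt p o (l ++ m)) : CodeAt p o l ∧ CodeAt p (o + l.length) m := by
  refine ⟨fun i hi => ?_, fun i hi => ?_⟩
  · rw [h i (by simp; omega), List.getElem?_append_left hi]
  · rw [add_assoc, h (l.length + i) (by simp; omega),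
      List.getElem?_append_right (by omega), Nat.add_sub_cancel_left]

theorem CodeAt.single {p : List (Instr A)} {o : ℕ} {a : Instr A}
    (h : CodeAt p o [a]) : p[o]? = some a := by
  simpa using h 0 (by simp)

theorem NStep.of_det {M : Machine A} {c : Config A} {ins : Instr A}
    (h : M.prog[c.label]? = some ins) (hd : ins.isDet) : NStep M c (execDet ins c) := by
  refine ⟨ins, h, ?_⟩
  cases ins <;> first | rfl | exact hd.elim

theorem NStep.eq_of_det {M : Machine A} (hM : M.Det) {c c' : Config A} (h : NStep M c c') :
    ∃ ins, M.prog[c.label]? = some ins ∧ c' = execDet ins c := by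
  obtain ⟨ins, h1, h2⟩ := h
  have hd := hM ins (List.mem_of_getElem? h1)
  refine ⟨ins, h1, ?_⟩
  cases ins <;> first | exact h2 | exact hd.elim

theorem NStep.unique {M : Machine A} (hM : M.Det) {c c₁ c₂ : Config A} (h1 : NStep M c c₁)
    (h2 : NStep M c c₂) : c₁ = c₂ := by
  obtain ⟨i, hi, rfl⟩ := h1.eq_of_det hM
  obtain ⟨j, hj, rfl⟩ := h2.eq_of_det hM
  rw [hi] at hj
  cases hj
  rfl

theorem step_branchIdx {M : Machine A} {j k l₁ l₂ o : ℕ} (s : St A)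
    (h : M.prog[o]? = some (.branchIdx j k l₁ l₂)) :
    NStep M (s.at o) (s.at (if s.idx j = s.idx k then l₁ else l₂)) := by
  refine ⟨_, h, ?_⟩
  show s.at _ = execDet _ _
  simp only [execDet, St.at]
  congr

theorem step_branchRel_pos {M : Machine A} {i : A.relIdx} {args : List ℕ} {l₁ l₂ o : ℕ} (s : St A)
    (h : M.prog[o]? = some (.branchRel i args l₁ l₂)) (hr : A.rels i (args.map s.reg)) :
    NStep M (s.at o) (s.at l₁) := by
  refine ⟨_, h, ?_⟩
  simp [execDet, St.at, hr]

theorem step_branchRel_neg {M : Machine A} {i : A.relIdx} {args : List ℕ} {l₁ l₂ o : ℕ} (s : St A)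
    (h : M.prog[o]? = some (.branchRel i args l₁ l₂)) (hr : ¬ A.rels i (args.map s.reg)) :
    NStep M (s.at o) (s.at l₂) := by
  refine ⟨_, h, ?_⟩
  simp [execDet, St.at, hr]

/-- Compiled code realizes the big-step semantics. -/
theorem Cmd.Exec.reaches {M : Machine A} {c : Cmd A} {s t : St A} (h : c.Exec s t) :
    ∀ o, CodeAt M.prog o (c.code o) → Reaches M (s.at o) (t.at (o + c.len)) := by
  have jump : ∀ (s : St A) (o l : ℕ), M.prog[o]? = some (.branchIdx 0 0 l l) →
      NStep M (s.at o) (s.at l) := fun s o l h => by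
    have := step_branchIdx s h
    simpa using this
  induction h with
  | skip s => intro o _; exact .refl
  | app s j i args => intro o h; exact .single (NStep.of_det (c := s.at o) h.single trivial)
  | con s j i => intro o h; exact .single (NStep.of_det (c := s.at o) h.single trivial)
  | cpy s j k => intro o h; exact .single (NStep.of_det (c := s.at o) h.single trivial)
  | inc s j => intro o h; exact .single (NStep.of_det (c := s.at o) h.single trivial)
  | rst s j => intro o h; exact .single (NStep.of_det (c := s.at o) h.single trivial)
  | @seq c d s t u _ _ hc hd =>
    intro o h
    obtain ⟨h1, h2⟩ := CodeAt.append h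
    rw [Cmd.length_code] at h2
    have := (hc o h1).trans (hd _ h2)
    rwa [add_assoc] at this
  | @ifI_pos j k c d s t hjk _ ih =>
    intro o h
    obtain ⟨h1, h⟩ := CodeAt.append h
    obtain ⟨h2, h⟩ := CodeAt.append h
    obtain ⟨h3, h⟩ := CodeAt.append h
    simp only [Cmd.length_code, List.length_singleton] at h1 h2 h3 h
    have e1 := step_branchIdx s h1.single
    rw [if_pos hjk] at e1
    have e3 := jump t _ _ h3.single
    have := ((Relation.ReflTransGen.single e1).trans (ih _ h2)).trans (.single e3)
    simpa only [Reaches, Cmd.len, add_assoc] using this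
  | @ifI_neg j k c d s t hjk _ ih =>
    intro o h
    obtain ⟨h1, h⟩ := CodeAt.append h
    obtain ⟨h2, h⟩ := CodeAt.append h
    obtain ⟨h3, h⟩ := CodeAt.append h
    simp only [Cmd.length_code, List.length_singleton] at h1 h2 h3 h
    have e1 := step_branchIdx s h1.single
    rw [if_neg hjk] at e1
    have := (Relation.ReflTransGen.single e1).trans (ih _ h)
    simpa only [Reaches, Cmd.len, add_assoc] using this
  | @ifR_pos i args c d s t hjk _ ih =>
    intro o h
    obtain ⟨h1, h⟩ := CodeAt.append h
    obtain ⟨h2, h⟩ := CodeAt.append h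
    obtain ⟨h3, h⟩ := CodeAt.append h
    simp only [Cmd.length_code, List.length_singleton] at h1 h2 h3 h
    have e1 := step_branchRel_pos s h1.single hjk
    have e3 := jump t _ _ h3.single
    have := ((Relation.ReflTransGen.single e1).trans (ih _ h2)).trans (.single e3)
    simpa only [Reaches, Cmd.len, add_assoc] using this
  | @ifR_neg i args c d s t hjk _ ih =>
    intro o h
    obtain ⟨h1, h⟩ := CodeAt.append h
    obtain ⟨h2, h⟩ := CodeAt.append h
    obtain ⟨h3, h⟩ := CodeAt.append h
    simp only [Cmd.length_code, List.length_singleton] at h1 h2 h3 h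
    have e1 := step_branchRel_neg s h1.single hjk
    have := (Relation.ReflTransGen.single e1).trans (ih _ h)
    simpa only [Reaches, Cmd.len, add_assoc] using this
  | @whl_exit j k c s hjk =>
    intro o h
    obtain ⟨h1, -⟩ := CodeAt.append h
    have e1 := step_branchIdx s h1.single
    rw [if_pos hjk] at e1
    exact .single (by simpa only [Cmd.len, add_assoc] using e1)
  | @whl_step j k c s t u hjk _ _ ih ih2 =>
    intro o h
    obtain ⟨h1, h'⟩ := CodeAt.append h
    obtain ⟨h2, h3⟩ := CodeAt.append h'
    simp only [Cmd.length_code, List.length_singleton] at h1 h2 h3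
    have e1 := step_branchIdx s h1.single
    rw [if_neg hjk] at e1
    have e3 := jump t _ _ h3.single
    exact (((Relation.ReflTransGen.single e1).trans (ih _ h2)).trans (.single e3)).trans (ih2 o h)

/-- In a deterministic relation, no element of a set that can be left only by returning to it
after at least one step reaches an element without successors. -/
theorem no_halt_of_recurrent {α : Type*} {r : α → α → Prop}
    (hr : ∀ a b c, r a b → r a c → b = c) (I : Set α)
    (hI : ∀ a ∈ I, ∃ b ∈ I, Relation.TransGen r a b) {a z : α} (ha : a ∈ I)
    (haz : Relation.ReflTransGen r a z) (hz : ∀ b, ¬ r z b) : False := by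
  have hacc : Acc (fun b a => r a b) a := by
    clear ha
    induction haz using Relation.ReflTransGen.head_induction_on with
    | refl => exact ⟨_, fun b hb => (hz b hb).elim⟩
    | head h1 _ ih => exact ⟨_, fun b hb => hr _ _ _ hb h1 ▸ ih⟩
  have hacc' := hacc.transGen
  clear hacc haz
  induction hacc' with
  | intro a _ ih =>
    obtain ⟨b, hb, hab⟩ := hI a ha
    exact ih b hab.swap hb

/-- Total correctness: `c` started in `s` terminates in a state satisfying `Q`. -/
def Ter (c : Cmd A) (s : St A) (Q : St A → Prop) : Prop := ∃ s', c.Exec s s' ∧ Q s'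

theorem Ter.mono {c : Cmd A} {s : St A} {P Q : St A → Prop} (h : Ter c s P)
    (hPQ : ∀ s', P s' → Q s') : Ter c s Q :=
  let ⟨s', h1, h2⟩ := h; ⟨s', h1, hPQ s' h2⟩

theorem Ter.skip {s : St A} {Q : St A → Prop} (h : Q s) : Ter .skip s Q := ⟨_, .skip s, h⟩

theorem Ter.seq {c d : Cmd A} {s : St A} {Q : St A → Prop}
    (h : Ter c s fun s' => Ter d s' Q) : Ter (.seq c d) s Q :=
  let ⟨_, h1, _, h2, h3⟩ := h; ⟨_, .seq h1 h2, h3⟩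

theorem Ter.app {j i args} {s : St A} {Q : St A → Prop}
    (h : Q ⟨s.idx, Function.update s.reg j (A.ops i (args.map s.reg))⟩) : Ter (.app j i args) s Q :=
  ⟨_, .app .., h⟩

theorem Ter.con {j i} {s : St A} {Q : St A → Prop}
    (h : Q ⟨s.idx, Function.update s.reg j (A.consts i)⟩) : Ter (.con j i) s Q :=
  ⟨_, .con .., h⟩

theorem Ter.cpy {j k} {s : St A} {Q : St A → Prop}
    (h : Q ⟨s.idx, Function.update s.reg (s.idx j) (s.reg (s.idx k))⟩) : Ter (.cpy j k) s Q :=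
  ⟨_, .cpy .., h⟩

theorem Ter.inc {j} {s : St A} {Q : St A → Prop}
    (h : Q ⟨Function.update s.idx j (s.idx j + 1), s.reg⟩) : Ter (.inc j) s Q :=
  ⟨_, .inc .., h⟩

theorem Ter.rst {j} {s : St A} {Q : St A → Prop}
    (h : Q ⟨Function.update s.idx j 1, s.reg⟩) : Ter (.rst j) s Q :=
  ⟨_, .rst .., h⟩

theorem Ter.ifI {j k} {c d : Cmd A} {s : St A} {Q : St A → Prop}
    (h1 : s.idx j = s.idx k → Ter c s Q) (h2 : s.idx j ≠ s.idx k → Ter d s Q) :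
    Ter (.ifI j k c d) s Q := by
  by_cases h : s.idx j = s.idx k
  · obtain ⟨s', h3, h4⟩ := h1 h
    exact ⟨s', .ifI_pos h h3, h4⟩
  · obtain ⟨s', h3, h4⟩ := h2 h
    exact ⟨s', .ifI_neg h h3, h4⟩

theorem Ter.ifR {i args} {c d : Cmd A} {s : St A} {Q : St A → Prop}
    (h1 : A.rels i (args.map s.reg) → Ter c s Q) (h2 : ¬ A.rels i (args.map s.reg) → Ter d s Q) :
    Ter (.ifR i args c d) s Q := by
  by_cases h : A.rels i (args.map s.reg)
  · obtain ⟨s', h3, h4⟩ := h1 h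
    exact ⟨s', .ifR_pos h h3, h4⟩
  · obtain ⟨s', h3, h4⟩ := h2 h
    exact ⟨s', .ifR_neg h h3, h4⟩

/-- Rule for loops in which index register `k` counts up to the bound held in register `r`. -/
theorem Ter.count {k r : ℕ} {c : Cmd A} (N : ℕ) (Inv : ℕ → St A → Prop)
    (hidx : ∀ t s, Inv t s → (s.idx k = s.idx r ↔ t = N))
    (hstep : ∀ t s, t < N → Inv t s → Ter c s (Inv (t + 1)))
    {t : ℕ} {s : St A} (ht : t ≤ N) (h : Inv t s) : Ter (.whl k r c) s (Inv N) := by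
  induction h' : N - t generalizing t s with
  | zero =>
    obtain rfl : t = N := by omega
    exact ⟨s, .whl_exit ((hidx _ _ h).2 rfl), h⟩
  | succ n ih =>
    obtain ⟨s1, h1, h2⟩ := hstep t s (by omega) h
    obtain ⟨s2, h3, h4⟩ := ih (by omega) h2 (by omega)
    exact ⟨s2, .whl_step (fun e => by have := (hidx _ _ h).1 e; omega) h1 h3, h4⟩

end compile

/-! ### Primitive recursive functions on index registers -/

section calculate
variable {A : FOStruct}

/-- `s'` has the same `Z`-registers as `s` and the same index registers below `b`, except
possibly register `o`. -/
def Frame (b o : ℕ) (s s' : St A) : Prop :=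
  s'.reg = s.reg ∧ ∀ r < b, r ≠ o → s'.idx r = s.idx r

theorem exists_move (o a : ℕ) : ∃ c : Cmd A, ∀ s : St A, 1 ≤ s.idx a →
    Ter c s fun s' => s'.reg = s.reg ∧ s'.idx = Function.update s.idx o (s.idx a) := by
  by_cases hoa : o = a
  · subst hoa
    exact ⟨.skip, fun s _ => .skip ⟨rfl, by simp⟩⟩
  refine ⟨.seq (.rst o) (.whl o a (.inc o)), fun s hs => .seq (.rst ?_)⟩
  refine (Ter.count (s.idx a - 1)
    (fun t s' => s'.reg = s.reg ∧ s'.idx = Function.update s.idx o (t + 1)) ?_ ?_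
    (Nat.zero_le _) (s := ⟨Function.update s.idx o 1, s.reg⟩) ⟨rfl, by simp⟩).mono ?_
  · rintro t s' ⟨-, h⟩
    simp only [h, Function.update_self, Function.update_of_ne (Ne.symm hoa)]
    omega
  · rintro t s' ht ⟨h1, h2⟩
    refine .inc ⟨h1, ?_⟩
    simp [h2]
  · rintro s' ⟨h1, h2⟩
    refine ⟨h1, ?_⟩
    rw [h2, Nat.sub_add_cancel hs]

/-- Every primitive recursive function can be evaluated on index registers, where the number `v`
is represented by the content `v + 1` (contents of index registers are always positive).  The
arguments are read from the registers `args i` and the value is stored in `o`, all of them below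
`b`; the registers from `b` on serve as workspace. -/
theorem Nat.Primrec'.exists_cmd {n : ℕ} {f : List.Vector ℕ n → ℕ} (hf : Nat.Primrec' f) :
    ∀ (args : Fin n → ℕ) (o b : ℕ), (∀ i, args i < b) → o < b →
    ∃ c : Cmd A, ∀ (s : St A) (v : List.Vector ℕ n), (∀ i, s.idx (args i) = v.get i + 1) →
      Ter c s fun s' => Frame b o s s' ∧ s'.idx o = f v + 1 := by
  induction hf with
  | zero =>
    intro args o b _ ho
    refine ⟨.rst o, fun s v _ => .rst ⟨⟨rfl, fun r _ hr => ?_⟩, ?_⟩⟩ <;> simp [*]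
  | succ =>
    intro args o b ha ho
    obtain ⟨c, hc⟩ := exists_move (A := A) o (args 0)
    refine ⟨.seq c (.inc o), fun s v hv => .seq ((hc s (by simp [hv])).mono ?_)⟩
    rintro s' ⟨h1, h2⟩
    refine .inc ⟨⟨h1, fun r _ hr => ?_⟩, ?_⟩
    · simp [h2, hr]
    · simp [h2, hv]
  | get i =>
    intro args o b ha ho
    obtain ⟨c, hc⟩ := exists_move (A := A) o (args i)
    refine ⟨c, fun s v hv => (hc s (by simp [hv])).mono ?_⟩
    rintro s' ⟨h1, h2⟩
    refine ⟨⟨h1, fun r _ hr => ?_⟩, ?_⟩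
    · simp [h2, hr]
    · simp [h2, hv]
  | @comp m n f g hf hg ihf ihg =>
    intro args o b ha ho
    have hall : ∀ k ≤ n, ∃ c : Cmd A, ∀ (s : St A) (v : List.Vector ℕ m),
        (∀ i, s.idx (args i) = v.get i + 1) → Ter c s fun s' => s'.reg = s.reg ∧
          (∀ r < b, s'.idx r = s.idx r) ∧ ∀ i : Fin n, i.1 < k → s'.idx (b + i) = g i v + 1 := by
      intro k hk
      induction k with
      | zero => exact ⟨.skip, fun s v _ => .skip ⟨rfl, fun _ _ => rfl, fun i hi => by omega⟩⟩
      | succ k ih =>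
        obtain ⟨c, hc⟩ := ih (by omega)
        obtain ⟨d, hd⟩ := ihg ⟨k, by omega⟩ args (b + k) (b + n)
          (fun i => by have := ha i; omega) (by omega)
        refine ⟨.seq c d, fun s v hv => .seq ((hc s v hv).mono ?_)⟩
        rintro s1 ⟨h1, h2, h3⟩
        refine (hd s1 v fun i => by rw [h2 _ (ha i), hv]).mono ?_
        rintro s2 ⟨⟨h4, h5⟩, h6⟩
        refine ⟨h4.trans h1, fun r hr => ?_, fun i hi => ?_⟩
        · rw [h5 r (by omega) (by omega), h2 r hr]
        · rcases Nat.lt_succ_iff_lt_or_eq.1 hi with hi' | hi'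
          · rw [h5 _ (by omega) (by omega), h3 i hi']
          · subst hi'
            exact h6
    obtain ⟨c, hc⟩ := hall n le_rfl
    obtain ⟨d, hd⟩ := ihf (fun i => b + i) o (b + n) (fun i => by omega) (by omega)
    refine ⟨.seq c d, fun s v hv => .seq ((hc s v hv).mono ?_)⟩
    rintro s1 ⟨h1, h2, h3⟩
    refine (hd s1 (List.Vector.ofFn fun i => g i v) fun i => by simp [h3]).mono ?_
    rintro s2 ⟨⟨h4, h5⟩, h6⟩
    exact ⟨⟨h4.trans h1, fun r hr hro => by rw [h5 r (by omega) hro, h2 r hr]⟩, h6⟩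
  | @prec n f g hf hg ihf ihg =>
    intro args o b ha ho
    obtain ⟨c, hc⟩ := ihf (fun i => args i.succ) b (b + 2)
      (fun i => by have := ha i.succ; omega) (by omega)
    obtain ⟨d, hd⟩ := ihg (Fin.cons (b + 1) (Fin.cons b fun i => args i.succ)) b (b + 2)
      (fun i => by
        refine Fin.cases ?_ (fun i => Fin.cases ?_ (fun i => ?_) i) i
        · simp
        · simp
        · have := ha i.succ
          simp only [Fin.cons_succ]
          omega) (by omega)
    obtain ⟨e, he⟩ := exists_move (A := A) o b
    refine ⟨.seq c (.seq (.rst (b + 1)) (.seq (.whl (b + 1) (args 0)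
      (.seq d (.inc (b + 1)))) e)), fun s v hv => ?_⟩
    have ha0 := ha 0
    have hhead : v.get 0 = v.head := List.Vector.get_zero v
    refine .seq ((hc s v.tail fun i => by rw [hv, List.Vector.get_tail_succ]).mono ?_)
    rintro s1 ⟨⟨h1, h2⟩, h3⟩
    refine .seq (.rst (.seq ?_))
    refine (Ter.count v.head (fun t s' => s'.reg = s.reg ∧ (∀ r < b, s'.idx r = s.idx r) ∧
      s'.idx (b + 1) = t + 1 ∧ s'.idx b = Nat.rec (f v.tail)
        (fun y IH => g (y ::ᵥ IH ::ᵥ v.tail)) t + 1) ?_ ?_ (Nat.zero_le _) ?_).mono ?_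
    · rintro t s' ⟨-, h5, h6, -⟩
      rw [h6, h5 _ ha0, hv, hhead]
      omega
    · rintro t s' ht ⟨h4, h5, h6, h7⟩
      refine .seq ((hd s' (t ::ᵥ (Nat.rec (f v.tail)
        (fun y IH => g (y ::ᵥ IH ::ᵥ v.tail)) t) ::ᵥ v.tail) fun i => ?_).mono ?_)
      · refine Fin.cases ?_ (fun i => Fin.cases ?_ (fun i => ?_) i) i
        · exact h6
        · exact h7
        · simp only [Fin.cons_succ, List.Vector.get_cons_succ]
          rw [h5 _ (ha _), hv, List.Vector.get_tail_succ]
      · rintro s2 ⟨⟨h8, h9⟩, h10⟩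
        refine .inc ⟨h8.trans h4, fun r hr => ?_, ?_, ?_⟩
        · simp only [Function.update_of_ne (show r ≠ b + 1 by omega)]
          rw [h9 r (by omega) (by omega), h5 r hr]
        · simp [h9 (b + 1) (by omega) (by omega), h6]
        · simpa using h10
    · refine ⟨h1, fun r hr => ?_, by simp, by simpa using h3⟩
      simp only [Function.update_of_ne (show r ≠ b + 1 by omega)]
      exact h2 r (by omega) (by omega)
    · rintro s2 ⟨h4, h5, h6, h7⟩
      refine (he s2 (by omega)).mono ?_
      rintro s3 ⟨h8, h9⟩
      refine ⟨⟨h8.trans h4, fun r hr hro => ?_⟩, ?_⟩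
      · rw [h9, Function.update_of_ne hro, h5 r hr]
      · rw [h9, Function.update_self, h7]

/-- Evaluation of a primitive recursive function of the numbers represented by the index
registers `1`, `2`, `3`, `4`; only register `o` and registers from `20` on are changed. -/
theorem exists_calc {f : ℕ → ℕ → ℕ → ℕ → ℕ}
    (hf : Primrec fun p : ℕ × ℕ × ℕ × ℕ => f p.1 p.2.1 p.2.2.1 p.2.2.2) (o : ℕ) (ho : o < 20) :
    ∃ c : Cmd A, ∀ (s : St A) (m k t a : ℕ), s.idx 1 = m + 1 → s.idx 2 = k + 1 →
      s.idx 3 = t + 1 → s.idx 4 = a + 1 →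
      Ter c s fun s' => Frame 20 o s s' ∧ s'.idx o = f m k t a + 1 := by
  have hf' : Nat.Primrec' fun v : List.Vector ℕ 4 => f (v.get 0) (v.get 1) (v.get 2) (v.get 3) := by
    refine Nat.Primrec'.of_prim ?_
    have hg : ∀ i : Fin 4, Primrec fun v : List.Vector ℕ 4 => v.get i :=
      fun i => Primrec.vector_get.comp .id (.const i)
    exact hf.comp ((hg 0).pair ((hg 1).pair ((hg 2).pair (hg 3))))
  obtain ⟨c, hc⟩ := hf'.exists_cmd (A := A) (fun i => i + 1) o 20 (fun i => by omega) ho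
  refine ⟨c, fun s m k t a h1 h2 h3 h4 => ?_⟩
  refine hc s ⟨[m, k, t, a], rfl⟩ fun i => ?_
  fin_cases i
  · exact h1
  · exact h2
  · exact h3
  · exact h4

end calculate

/-! ### Computations driven by a list of choices -/

section walk
variable {A : FOStruct}

/-- The effect of an instruction when the outcome of tests and guesses is prescribed: a relational
test takes its first exit iff the choice `c` is `0`, and a `ν`-instruction writes the tuple
`(Y 0, …, Y (g c - 1))`. -/
noncomputable def stepIns (g : ℕ → ℕ) (c : ℕ) (Y : ℕ → A.U) (ins : Instr A) (C : Config A) :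
    Config A :=
  match ins with
  | .branchRel _ _ l₁ l₂ => ⟨if c = 0 then l₁ else l₂, C.idx, C.reg⟩
  | .nuGuess j => ⟨C.label + 1, C.idx, writeFrom C.reg j ((List.range (g c)).map Y)⟩
  | ins => execDet ins C

/-- The prescribed outcome `c`, `Y` is legitimate for an instruction: relational tests are answered
truthfully, and the components of a guessed tuple satisfy `D`. -/
def okIns (D : A.U → Prop) (g : ℕ → ℕ) (c : ℕ) (Y : ℕ → A.U) (ins : Instr A) (C : Config A) :
    Prop :=
  match ins with
  | .branchRel i args _ _ => A.rels i (args.map C.reg) ↔ c = 0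
  | .nuGuess _ => ∀ a < g c, D (Y a)
  | _ => True

/-- One prescribed step of a program; beyond the end of the program nothing happens. -/
noncomputable def stepW (prog : List (Instr A)) (g : ℕ → ℕ) (c : ℕ) (Y : ℕ → A.U) (C : Config A) :
    Config A :=
  (prog[C.label]?).elim C fun ins => stepIns g c Y ins C

/-- Legitimacy of a prescribed step of a program. -/
def okW (prog : List (Instr A)) (D : A.U → Prop) (g : ℕ → ℕ) (c : ℕ) (Y : ℕ → A.U)
    (C : Config A) : Prop :=
  ∀ ins, prog[C.label]? = some ins → okIns D g c Y ins C

/-- The configuration after `t` steps with choices `c 0, c 1, …` and guesses `Y 0, Y 1, …`. -/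
noncomputable def runW (prog : List (Instr A)) (g : ℕ → ℕ) (c : ℕ → ℕ) (Y : ℕ → ℕ → A.U)
    (C : Config A) : ℕ → Config A
  | 0 => C
  | t + 1 => stepW prog g (c t) (Y t) (runW prog g c Y C t)

theorem runW_shift (prog : List (Instr A)) (g : ℕ → ℕ) (c : ℕ → ℕ) (Y : ℕ → ℕ → A.U)
    (C : Config A) (t : ℕ) :
    runW prog g c Y C (t + 1) = runW prog g (fun t => c (t + 1)) (fun t => Y (t + 1))
      (stepW prog g (c 0) (Y 0) C) t := by
  induction t with
  | zero => rfl
  | succ t ih => rw [runW, ih, runW]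

theorem stepW_congr (prog : List (Instr A)) (g : ℕ → ℕ) (c : ℕ) {Y Y' : ℕ → A.U} (C : Config A)
    (h : ∀ a < g c, Y a = Y' a) : stepW prog g c Y C = stepW prog g c Y' C := by
  unfold stepW
  congr 1
  funext ins
  cases ins <;> try rfl
  have : (List.range (g c)).map Y = (List.range (g c)).map Y' :=
    List.map_congr_left fun a ha => h a (List.mem_range.1 ha)
  simp only [stepIns, this]

theorem okW_congr (prog : List (Instr A)) (D : A.U → Prop) (g : ℕ → ℕ) (c : ℕ) {Y Y' : ℕ → A.U}
    (C : Config A) (h : ∀ a < g c, Y a = Y' a) (hok : okW prog D g c Y C) :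
    okW prog D g c Y' C := by
  intro ins hi
  have := hok ins hi
  cases ins <;> try exact this
  intro a ha
  rw [← h a ha]
  exact this a ha

theorem runW_congr (prog : List (Instr A)) (g : ℕ → ℕ) (c c' : ℕ → ℕ) (Y Y' : ℕ → ℕ → A.U)
    (C : Config A) (T : ℕ) (hc : ∀ t < T, c t = c' t)
    (h : ∀ t < T, ∀ a < g (c t), Y t a = Y' t a) :
    runW prog g c Y C T = runW prog g c' Y' C T := by
  induction T with
  | zero => rfl
  | succ t ih =>
    rw [runW, runW, ih (fun u hu => hc u (by omega)) (fun u hu => h u (by omega)),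
      ← hc t (by omega)]
    exact stepW_congr _ _ _ _ (h t (by omega))

/-- Guessed components that violate `D` may be replaced without changing a legitimate run, since
they are never written to a register. -/
theorem okW_fix (prog : List (Instr A)) (D : A.U → Prop) (g : ℕ → ℕ) (c : ℕ) {Y Y' : ℕ → A.U}
    (C : Config A) (h : ∀ a, D (Y a) → Y' a = Y a) (hok : okW prog D g c Y C) :
    stepW prog g c Y' C = stepW prog g c Y C ∧ okW prog D g c Y' C := by
  unfold stepW okW
  cases hins : prog[C.label]? with
  | none => simp
  | some ins =>
    have h1 := hok ins hins
    simp only [Option.elim_some, Option.some.injEq, forall_eq']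
    cases ins <;> try exact ⟨rfl, h1⟩
    have h2 : ∀ a < g c, Y' a = Y a := fun a ha => h a (h1 a ha)
    have : (List.range (g c)).map Y' = (List.range (g c)).map Y :=
      List.map_congr_left fun a ha => h2 a (List.mem_range.1 ha)
    refine ⟨by simp only [stepIns, this], fun a ha => ?_⟩
    rw [h2 a ha]
    exact h1 a ha

theorem runW_fix (prog : List (Instr A)) (D : A.U → Prop) (g : ℕ → ℕ) (c : ℕ → ℕ)
    {Y Y' : ℕ → ℕ → A.U} (C : Config A) (h : ∀ t a, D (Y t a) → Y' t a = Y t a) (T : ℕ)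
    (hok : ∀ t < T, okW prog D g (c t) (Y t) (runW prog g c Y C t)) :
    runW prog g c Y' C T = runW prog g c Y C T := by
  induction T with
  | zero => rfl
  | succ t ih =>
    rw [runW, ih fun u hu => hok u (by omega), runW]
    exact (okW_fix _ _ _ _ _ (h t) (hok t (by omega))).1

/-- A step of a machine is a legitimate prescribed step, provided the oracle consists of the tuples
of lengths `g c` whose components satisfy `D`. -/
theorem NStep.exists_stepW {M : Machine A} {D : A.U → Prop} {g : ℕ → ℕ} [Nonempty A.U]
    (hor : ∀ ins ∈ M.prog, ins.noOr)
    (hQ : ∀ y : Tup A, y ∈ M.oracle → (∃ c, y.1.length = g c) ∧ ∀ u ∈ y.1, D u)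
    {C C' : Config A} (h : NStep M C C') :
    ∃ c Y, okW M.prog D g c Y C ∧ C' = stepW M.prog g c Y C := by
  classical
  obtain ⟨u0⟩ := ‹Nonempty A.U›
  obtain ⟨ins, h1, h2⟩ := h
  unfold okW stepW
  simp only [h1, Option.elim_some, Option.some.injEq, forall_eq']
  cases ins with
  | orGoto l₁ l₂ => exact (hor _ (List.mem_of_getElem? h1)).elim
  | nuGuess j =>
    obtain ⟨y, hy, rfl⟩ := h2
    obtain ⟨⟨c, hc⟩, hD⟩ := hQ y hy
    refine ⟨c, fun a => y.1.getD a u0, fun a ha => hD _ ?_, ?_⟩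
    · show y.1.getD a u0 ∈ y.1
      rw [List.getD_eq_getElem _ _ (by omega)]
      exact List.getElem_mem _
    · have : (List.range (g c)).map (fun a => y.1.getD a u0) = y.1 := by
        refine List.ext_getElem (by simp [hc]) fun i hi hi' => ?_
        simp [hi']
      simp only [stepIns, this]
  | branchRel i args l₁ l₂ =>
    refine ⟨if A.rels i (args.map C.reg) then 0 else 1, fun _ => u0, ?_, ?_⟩
    · simp [okIns]
    · rw [h2]
      by_cases hr : A.rels i (args.map C.reg) <;> simp [execDet, stepIns, hr]
  | _ => exact ⟨0, fun _ => u0, trivial, h2⟩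

theorem reaches_stepW {M : Machine A} {D : A.U → Prop} {g : ℕ → ℕ}
    (hor : ∀ ins ∈ M.prog, ins.noOr)
    (hQ : ∀ y : Tup A, (∃ c, y.1.length = g c) → (∀ u ∈ y.1, D u) → y ∈ M.oracle)
    (hg : ∀ ins ∈ M.prog, ins.isDet ∨ ∀ c, g c ≠ 0)
    {C : Config A} {c : ℕ} {Y : ℕ → A.U} (hok : okW M.prog D g c Y C) :
    Reaches M C (stepW M.prog g c Y C) := by
  unfold stepW
  cases h1 : M.prog[C.label]? with
  | none => exact .refl
  | some ins =>
    have hok := hok ins h1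
    refine .single ⟨ins, h1, ?_⟩
    cases ins with
    | orGoto l₁ l₂ => exact (hor _ (List.mem_of_getElem? h1)).elim
    | nuGuess j =>
      have hg' : g c ≠ 0 := (hg _ (List.mem_of_getElem? h1)).resolve_left (by simp [Instr.isDet]) c
      refine ⟨⟨(List.range (g c)).map Y, by simpa using hg'⟩, hQ _ ⟨c, by simp⟩ ?_, rfl⟩
      intro u hu
      obtain ⟨a, ha, rfl⟩ := List.mem_map.1 hu
      exact hok a (List.mem_range.1 ha)
    | branchRel i args l₁ l₂ =>
      have hok : A.rels i (args.map C.reg) ↔ c = 0 := hok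
      simp only [Option.elim_some, stepIns, execDet, hok]
    | _ => rfl

/-- Halting means that some legitimate prescribed run leaves the program. -/
theorem haltsFrom_iff {M : Machine A} {D : A.U → Prop} {g : ℕ → ℕ} [Nonempty A.U]
    (hor : ∀ ins ∈ M.prog, ins.noOr)
    (hQ : ∀ y : Tup A, y ∈ M.oracle ↔ (∃ c, y.1.length = g c) ∧ ∀ u ∈ y.1, D u)
    (hg : ∀ ins ∈ M.prog, ins.isDet ∨ ∀ c, g c ≠ 0) (C : Config A) :
    HaltsFrom M C ↔ ∃ T c Y, (∀ t < T, okW M.prog D g (c t) (Y t) (runW M.prog g c Y C t)) ∧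
      M.prog.length ≤ (runW M.prog g c Y C T).label := by
  constructor
  · rintro ⟨C', h, hh⟩
    induction h using Relation.ReflTransGen.head_induction_on with
    | refl => exact ⟨0, fun _ => 0, fun _ _ => Classical.arbitrary _, by omega, hh⟩
    | head h1 _ ih =>
      obtain ⟨T, c, Y, h2, h3⟩ := ih
      obtain ⟨c0, Y0, h4, rfl⟩ := h1.exists_stepW hor fun y hy => (hQ y).1 hy
      refine ⟨T + 1, fun t => Nat.casesOn t c0 c, fun t => Nat.casesOn t Y0 Y, fun t ht => ?_, ?_⟩
      · cases t with
        | zero => exact h4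
        | succ t =>
          rw [runW_shift]
          exact h2 t (by omega)
      · rw [runW_shift]
        exact h3
  · rintro ⟨T, c, Y, h1, h2⟩
    refine ⟨_, ?_, h2⟩
    clear h2
    induction T with
    | zero => exact .refl
    | succ t ih =>
      exact (ih fun u hu => h1 u (by omega)).trans
        (reaches_stepW hor (fun y h h' => (hQ y).2 ⟨h, h'⟩) hg (h1 t (by omega)))

/-- The oracle set is irrelevant for deterministic machines. -/
theorem haltsFrom_oracle {p : List (Instr A)} {O O' : Set (Tup A)} (hp : ∀ ins ∈ p, ins.isDet)
    (C : Config A) (h : HaltsFrom ⟨p, O⟩ C) : HaltsFrom ⟨p, O'⟩ C := by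
  obtain ⟨C', h1, h2⟩ := h
  refine ⟨C', Relation.ReflTransGen.mono ?_ _ _ h1, h2⟩
  intro a b hab
  obtain ⟨ins, h3, rfl⟩ := hab.eq_of_det (M := ⟨p, O⟩) hp
  exact NStep.of_det (M := ⟨p, O'⟩) h3 (hp _ (List.mem_of_getElem? h3))

/-- The case of deterministic machines. -/
theorem haltsFrom_iff_of_det {M : Machine A} (D : A.U → Prop) [Nonempty A.U] (hM : M.Det)
    (C : Config A) :
    HaltsFrom M C ↔ ∃ T c Y, (∀ t < T, okW M.prog D (fun _ => 0) (c t) (Y t)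
      (runW M.prog (fun _ => 0) c Y C t)) ∧
      M.prog.length ≤ (runW M.prog (fun _ => 0) c Y C T).label := by
  rw [← haltsFrom_iff (M := ⟨M.prog, ∅⟩) ?_ ?_ ?_ C]
  · exact ⟨haltsFrom_oracle hM C, haltsFrom_oracle hM C⟩
  · intro ins h
    have := hM ins h
    cases ins <;> trivial
  · intro y
    have := y.2
    simp [this]
  · exact fun ins h => .inl (hM ins h)

end walk

/-! ### Symbolic execution -/

section symbolic

/-- Lookup in an association list, with default value `d`. -/
def lk (l : List (ℕ × ℕ)) (d i : ℕ) : ℕ := l.foldr (fun p acc => if p.1 = i then p.2 else acc) d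

@[simp] theorem lk_nil (d i : ℕ) : lk [] d i = d := rfl

@[simp] theorem lk_cons (p : ℕ × ℕ) (l : List (ℕ × ℕ)) (d i : ℕ) :
    lk (p :: l) d i = if p.1 = i then p.2 else lk l d i := rfl

theorem lk_append (l l' : List (ℕ × ℕ)) (d i : ℕ) : lk (l ++ l') d i = lk l (lk l' d i) i := by
  simp [lk]

theorem lk_range (j t n d i : ℕ) :
    lk ((List.range n).map fun a => (j + a, Nat.pair (t + 1) (a + 1))) d i =
      if j ≤ i ∧ i - j < n then Nat.pair (t + 1) (i - j + 1) else d := by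
  induction n generalizing d with
  | zero => simp
  | succ n ih =>
    rw [List.range_succ, List.map_append, lk_append, ih]
    simp only [List.map_cons, List.map_nil, lk_cons, lk_nil]
    by_cases h1 : j ≤ i ∧ i - j < n
    · rw [if_pos h1, if_pos ⟨h1.1, by omega⟩]
    · rw [if_neg h1]
      by_cases h2 : j + n = i
      · rw [if_pos h2, if_pos ⟨by omega, by omega⟩, show i - j = n by omega]
      · rw [if_neg h2, if_neg (by omega)]

/-- A symbolic configuration: the label, the contents of the index registers (an association list
with default `1`), and for each `Z`-register a pointer to the value it holds (an association list).
The pointer `Nat.pair 0 i` stands for the initial content of register `i`, `Nat.pair (t + 1) 0` for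
the value computed in step `t` by an operation or constant, and `Nat.pair (t + 1) (a + 1)` for
component `a` of the tuple guessed in step `t`. -/
abbrev SC : Type := ℕ × List (ℕ × ℕ) × List (ℕ × ℕ)

/-- The content of index register `j`. -/
def idxOf (σ : SC) (j : ℕ) : ℕ := lk σ.2.1 1 j

/-- The pointer held by register `i`.  Initially the registers from `b` on repeat the value of
register `m`. -/
def envOf (b m : ℕ) (σ : SC) (i : ℕ) : ℕ :=
  lk σ.2.2 (if i < b then Nat.pair 0 i else Nat.pair 0 m) i

/-- Symbolic effect of an instruction executed in step `t` with choice `c`. -/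
def symIns {A : FOStruct} (g : ℕ → ℕ) (b m t c : ℕ) (ins : Instr A) (σ : SC) : SC :=
  match ins with
  | .apply j _ _ => (σ.1 + 1, σ.2.1, (j, Nat.pair (t + 1) 0) :: σ.2.2)
  | .const j _ => (σ.1 + 1, σ.2.1, (j, Nat.pair (t + 1) 0) :: σ.2.2)
  | .copy j k => (σ.1 + 1, σ.2.1, (idxOf σ j, envOf b m σ (idxOf σ k)) :: σ.2.2)
  | .branchRel _ _ l₁ l₂ => (if c = 0 then l₁ else l₂, σ.2)
  | .branchIdx j k l₁ l₂ => (if idxOf σ j = idxOf σ k then l₁ else l₂, σ.2)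
  | .incIdx j => (σ.1 + 1, (j, idxOf σ j + 1) :: σ.2.1, σ.2.2)
  | .resetIdx j => (σ.1 + 1, (j, 1) :: σ.2.1, σ.2.2)
  | .orGoto l₁ _ => (l₁, σ.2)
  | .nuGuess j => (σ.1 + 1, σ.2.1,
      ((List.range (g c)).map fun a => (j + a, Nat.pair (t + 1) (a + 1))) ++ σ.2.2)

/-- Symbolic effect of step `t` of a program. -/
def symStep {A : FOStruct} (prog : List (Instr A)) (g : ℕ → ℕ) (b m t c : ℕ) (σ : SC) : SC :=
  (prog[σ.1]?).elim σ fun ins => symIns g b m t c ins σ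

/-- Symbolic execution with choices `c 0, c 1, …` on an input of length `m + 1`. -/
def symRun {A : FOStruct} (prog : List (Instr A)) (g : ℕ → ℕ) (b m : ℕ) (c : ℕ → ℕ) : ℕ → SC
  | 0 => (0, [(1, m + 1)], [])
  | t + 1 => symStep prog g b m t (c t) (symRun prog g b m c t)

theorem time_envOf_symIns {A : FOStruct} (g : ℕ → ℕ) {b m t c : ℕ} (ins : Instr A) {σ : SC}
    (h : ∀ i, (Nat.unpair (envOf b m σ i)).1 ≤ t) (i : ℕ) :
    (Nat.unpair (envOf b m (symIns g b m t c ins σ) i)).1 ≤ t + 1 := by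
  have h' := fun i => (h i).trans (Nat.le_succ t)
  have h'' := h' i
  cases ins <;> unfold symIns <;> try exact h''
  · simp only [envOf, lk_cons] at h'' ⊢
    split_ifs <;> simp_all
  · simp only [envOf, lk_cons] at h'' ⊢
    split_ifs <;> simp_all
  · rename_i j k
    have h3 := h' (idxOf σ k)
    simp only [envOf, lk_cons] at h'' h3 ⊢
    split_ifs <;> simp_all
  · simp only [envOf, lk_append, lk_range] at h'' ⊢
    split_ifs <;> simp_all

/-- After `t` steps only values created in the first `t` steps are referred to. -/
theorem time_envOf_symRun {A : FOStruct} (prog : List (Instr A)) (g : ℕ → ℕ) (b m : ℕ) (c : ℕ → ℕ)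
    (t i : ℕ) : (Nat.unpair (envOf b m (symRun prog g b m c t) i)).1 ≤ t := by
  induction t generalizing i with
  | zero =>
    simp only [symRun, envOf, lk_nil]
    split_ifs <;> simp
  | succ t ih =>
    simp only [symRun, symStep]
    cases prog[(symRun prog g b m c t).1]? with
    | none => exact (ih i).trans (Nat.le_succ t)
    | some ins => exact time_envOf_symIns g ins ih i

/-- The symbolic configuration `σ` represents `C` when pointers are interpreted by `h`. -/
def Corr {A : FOStruct} (h : ℕ → A.U) (b m : ℕ) (σ : SC) (C : Config A) : Prop :=
  C.label = σ.1 ∧ (∀ j, C.idx j = idxOf σ j) ∧ ∀ i, C.reg i = h (envOf b m σ i)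

/-- The new value produced by an instruction in step `t` is stored under its pointer. -/
def NewVal {A : FOStruct} (h : ℕ → A.U) (t : ℕ) (ins : Instr A) (C : Config A) : Prop :=
  match ins with
  | .apply _ i args => h (Nat.pair (t + 1) 0) = A.ops i (args.map C.reg)
  | .const _ i => h (Nat.pair (t + 1) 0) = A.consts i
  | _ => True

theorem Corr.stepIns {A : FOStruct} {h h' : ℕ → A.U} {b m : ℕ} {σ : SC} {C : Config A}
    (hC : Corr h b m σ C) {g : ℕ → ℕ} {t c : ℕ} {ins : Instr A} {Y : ℕ → A.U}
    (hh : ∀ i, h' (envOf b m σ i) = h (envOf b m σ i)) (hnew : NewVal h' t ins C)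
    (hY : ∀ a < g c, h' (Nat.pair (t + 1) (a + 1)) = Y a) :
    Corr h' b m (symIns g b m t c ins σ) (stepIns g c Y ins C) := by
  obtain ⟨h1, h2, h3⟩ := hC
  simp only [← hh] at h3
  cases ins with
  | apply j i args =>
    refine ⟨by simp [symIns, _root_.stepIns, execDet, h1], h2, fun r => ?_⟩
    have h4 := h3 r
    simp only [symIns, _root_.stepIns, execDet, envOf, lk_cons, Function.update_apply] at h4 ⊢
    by_cases hr : r = j
    · rw [if_pos hr, if_pos hr.symm]
      exact hnew.symm
    · rw [if_neg hr, if_neg (Ne.symm hr), h4]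
  | const j i =>
    refine ⟨by simp [symIns, _root_.stepIns, execDet, h1], h2, fun r => ?_⟩
    have h4 := h3 r
    simp only [symIns, _root_.stepIns, execDet, envOf, lk_cons, Function.update_apply] at h4 ⊢
    by_cases hr : r = j
    · rw [if_pos hr, if_pos hr.symm]
      exact hnew.symm
    · rw [if_neg hr, if_neg (Ne.symm hr), h4]
  | copy j k =>
    refine ⟨by simp [symIns, _root_.stepIns, execDet, h1], h2, fun r => ?_⟩
    have h4 := h3 r
    have h5 := h3 (idxOf σ k)
    simp only [symIns, _root_.stepIns, execDet, envOf, lk_cons, Function.update_apply, h2]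
      at h4 h5 ⊢
    by_cases hr : r = idxOf σ j
    · rw [if_pos hr, if_pos hr.symm, h5]
    · rw [if_neg hr, if_neg (Ne.symm hr), h4]
  | branchRel i args l₁ l₂ => exact ⟨rfl, h2, h3⟩
  | branchIdx j k l₁ l₂ =>
    exact ⟨by simp [symIns, _root_.stepIns, execDet, h2], h2, h3⟩
  | incIdx j =>
    refine ⟨by simp [symIns, _root_.stepIns, execDet, h1], fun r => ?_, h3⟩
    have h4 := h2 r
    have h5 := h2 j
    simp only [symIns, _root_.stepIns, execDet, idxOf, lk_cons, Function.update_apply] at h4 h5 ⊢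
    by_cases hr : r = j
    · rw [if_pos hr, if_pos hr.symm, h5]
    · rw [if_neg hr, if_neg (Ne.symm hr), h4]
  | resetIdx j =>
    refine ⟨by simp [symIns, _root_.stepIns, execDet, h1], fun r => ?_, h3⟩
    have h4 := h2 r
    simp only [symIns, _root_.stepIns, execDet, idxOf, lk_cons, Function.update_apply] at h4 ⊢
    by_cases hr : r = j
    · rw [if_pos hr, if_pos hr.symm]
    · rw [if_neg hr, if_neg (Ne.symm hr), h4]
  | orGoto l₁ l₂ => exact ⟨rfl, h2, h3⟩
  | nuGuess j =>
    refine ⟨by simp [symIns, _root_.stepIns, h1], h2, fun r => ?_⟩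
    have h4 := h3 r
    simp only [symIns, _root_.stepIns, writeFrom, envOf, lk_append, lk_range, List.length_map,
      List.length_range] at h4 ⊢
    by_cases hr : j ≤ r ∧ r - j < g c
    · rw [if_pos hr, if_pos hr, hY _ hr.2, List.getD_eq_getElem _ _ (by simpa using hr.2)]
      simp
    · rw [if_neg hr, if_neg hr, h4]

theorem symRun_succ_of_none {A : FOStruct} {prog : List (Instr A)} {g : ℕ → ℕ} {b m : ℕ}
    {c : ℕ → ℕ} {t : ℕ} (h : prog[(symRun prog g b m c t).1]? = none) :
    symRun prog g b m c (t + 1) = symRun prog g b m c t := by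
  simp [symRun, symStep, h]

theorem symRun_succ_of_some {A : FOStruct} {prog : List (Instr A)} {g : ℕ → ℕ} {b m : ℕ}
    {c : ℕ → ℕ} {t : ℕ} {ins : Instr A} (h : prog[(symRun prog g b m c t).1]? = some ins) :
    symRun prog g b m c (t + 1) = symIns g b m t (c t) ins (symRun prog g b m c t) := by
  simp [symRun, symStep, h]

/-! ### Symbolic execution is primitive recursive -/

variable {α : Type} [Primcodable α]

theorem primrec_lk {l : α → List (ℕ × ℕ)} {d i : α → ℕ} (hl : Primrec l) (hd : Primrec d)
    (hi : Primrec i) : Primrec fun a => lk (l a) (d a) (i a) := by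
  refine Primrec.list_foldr (h := fun a p => if p.1.1 = i a then p.1.2 else p.2) hl hd ?_
  refine Primrec.ite (Primrec.eq.comp ?_ (hi.comp .fst)) ?_ ?_
  · exact Primrec.fst.comp (Primrec.fst.comp .snd)
  · exact Primrec.snd.comp (Primrec.fst.comp .snd)
  · exact Primrec.snd.comp .snd

theorem primrec_idxOf {σ : α → SC} {j : α → ℕ} (hσ : Primrec σ) (hj : Primrec j) :
    Primrec fun a => idxOf (σ a) (j a) :=
  primrec_lk (Primrec.fst.comp (Primrec.snd.comp hσ)) (.const 1) hj

theorem primrec_envOf {b m : α → ℕ} {σ : α → SC} {i : α → ℕ} (hb : Primrec b) (hm : Primrec m)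
    (hσ : Primrec σ) (hi : Primrec i) : Primrec fun a => envOf (b a) (m a) (σ a) (i a) :=
  primrec_lk (Primrec.snd.comp (Primrec.snd.comp hσ))
    (Primrec.ite (Primrec.nat_lt.comp hi hb) (Primrec₂.natPair.comp (.const 0) hi)
      (Primrec₂.natPair.comp (.const 0) hm)) hi

/-- A case distinction over the instructions of a fixed program is primitive recursive. -/
theorem primrec_dispatch {ι β : Type} [Primcodable β] (prog : List ι) {lab : α → ℕ}
    {d : α → β} {F : ι → α → β} (hlab : Primrec lab) (hd : Primrec d)
    (hF : ∀ ins, Primrec (F ins)) :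
    Primrec fun a => (prog[lab a]?).elim (d a) fun ins => F ins a := by
  induction prog generalizing lab with
  | nil => simpa using hd
  | cons ins prog ih =>
    have h := Primrec.ite (Primrec.eq.comp hlab (.const 0)) (hF ins) (ih (Primrec.pred.comp hlab))
    refine h.of_eq fun a => ?_
    cases lab a <;> simp

theorem primrec_symIns {A : FOStruct} {g : ℕ → ℕ} (hg : Primrec g) (ins : Instr A)
    {b m t c : α → ℕ} {σ : α → SC} (hb : Primrec b) (hm : Primrec m) (ht : Primrec t)
    (hc : Primrec c) (hσ : Primrec σ) :
    Primrec fun a => symIns g (b a) (m a) (t a) (c a) ins (σ a) := by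
  have h1 : Primrec fun a => (σ a).1 := Primrec.fst.comp hσ
  have h1' : Primrec fun a => (σ a).1 + 1 := Primrec.succ.comp h1
  have h2 : Primrec fun a => (σ a).2 := Primrec.snd.comp hσ
  have h3 : Primrec fun a => (σ a).2.1 := Primrec.fst.comp h2
  have h4 : Primrec fun a => (σ a).2.2 := Primrec.snd.comp h2
  have ht' : Primrec fun a => t a + 1 := Primrec.succ.comp ht
  cases ins with
  | apply j i args =>
    exact h1'.pair (h3.pair (Primrec.list_cons.comp
      ((Primrec.const j).pair (Primrec₂.natPair.comp ht' (.const 0))) h4))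
  | const j i =>
    exact h1'.pair (h3.pair (Primrec.list_cons.comp
      ((Primrec.const j).pair (Primrec₂.natPair.comp ht' (.const 0))) h4))
  | copy j k =>
    exact h1'.pair (h3.pair (Primrec.list_cons.comp ((primrec_idxOf hσ (.const j)).pair
      (primrec_envOf hb hm hσ (primrec_idxOf hσ (.const k)))) h4))
  | branchRel i args l₁ l₂ =>
    exact (Primrec.ite (Primrec.eq.comp hc (.const 0)) (.const l₁) (.const l₂)).pair h2
  | branchIdx j k l₁ l₂ =>
    exact (Primrec.ite (Primrec.eq.comp (primrec_idxOf hσ (.const j))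
      (primrec_idxOf hσ (.const k))) (.const l₁) (.const l₂)).pair h2
  | incIdx j =>
    exact h1'.pair ((Primrec.list_cons.comp
      ((Primrec.const j).pair (Primrec.succ.comp (primrec_idxOf hσ (.const j)))) h3).pair h4)
  | resetIdx j =>
    exact h1'.pair ((Primrec.list_cons.comp (.const (j, 1)) h3).pair h4)
  | orGoto l₁ l₂ => exact (Primrec.const l₁).pair h2
  | nuGuess j =>
    refine h1'.pair (h3.pair (Primrec.list_append.comp (Primrec.list_map
      (g := fun a i => (j + i, Nat.pair (t a + 1) (i + 1)))
      (Primrec.list_range.comp (hg.comp hc)) ?_) h4))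
    exact (Primrec.nat_add.comp (.const j) .snd).pair
      (Primrec₂.natPair.comp (ht'.comp .fst) (Primrec.succ.comp .snd))

theorem primrec_symRun {A : FOStruct} (prog : List (Instr A)) {g : ℕ → ℕ} (hg : Primrec g)
    {b m t : α → ℕ} {c : α → ℕ → ℕ} (hb : Primrec b) (hm : Primrec m) (ht : Primrec t)
    (hc : Primrec₂ c) : Primrec fun a => symRun prog g (b a) (m a) (c a) (t a) := by
  have h0 : Primrec fun a => ((0, [(1, m a + 1)], []) : SC) :=
    (Primrec.const 0).pair ((Primrec.list_cons.comp
      ((Primrec.const 1).pair (Primrec.succ.comp hm)) (.const [])).pair (.const []))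
  have hs : Primrec₂ fun (a : α) (p : ℕ × SC) => symStep prog g (b a) (m a) p.1 (c a p.1) p.2 := by
    have hσ : Primrec fun q : α × ℕ × SC => q.2.2 := Primrec.snd.comp .snd
    have ht : Primrec fun q : α × ℕ × SC => q.2.1 := Primrec.fst.comp .snd
    exact primrec_dispatch prog (Primrec.fst.comp hσ) hσ fun ins =>
      primrec_symIns hg ins (hb.comp .fst) (hm.comp .fst) ht (hc.comp .fst ht) hσ
  refine (Primrec.nat_rec' ht h0 hs).of_eq fun a => ?_
  induction t a with
  | zero => rfl
  | succ t ih =>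
    rw [symRun, ← ih]

end symbolic

/-! ### Testing for the two constants -/

section digit
variable {A : FOStruct}

theorem exists_set (r v : ℕ) : ∃ c : Cmd A, ∀ s : St A,
    Ter c s fun s' => s' = ⟨Function.update s.idx r (v + 1), s.reg⟩ := by
  induction v with
  | zero => exact ⟨.rst r, fun s => .rst rfl⟩
  | succ v ih =>
    obtain ⟨c, hc⟩ := ih
    refine ⟨.seq c (.inc r), fun s => .seq ((hc s).mono ?_)⟩
    rintro s' rfl
    exact .inc (by simp)

/-- Marks index register `r` as failed, unless the proposition `p` holds. -/
theorem exists_assert (r : ℕ) (p : Prop) : ∃ c : Cmd A, ∀ s : St A,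
    Ter c s fun s' => (∀ q, q ≠ r → s'.idx q = s.idx q) ∧ s'.reg = s.reg ∧
      (s'.idx r = 1 ↔ s.idx r = 1 ∧ p) := by
  by_cases hp : p
  · exact ⟨.skip, fun s => .skip ⟨fun _ _ => rfl, rfl, by simp [hp]⟩⟩
  · obtain ⟨c, hc⟩ := exists_set (A := A) r 1
    refine ⟨c, fun s => (hc s).mono ?_⟩
    rintro s' rfl
    exact ⟨fun q hq => by simp [hq], rfl, by simp [hp]⟩

/-- The heap used by the digit test: values created at time `t` live in register `t + 1`. -/
def pathHeap (s : St A) (p : ℕ) : A.U := s.reg ((Nat.unpair p).1 + 1)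

theorem exists_pathIns (D : A.U → Prop) (σ : SC) (t c : ℕ) (ins : Instr A) (Y : ℕ → A.U) :
    ∃ d : Cmd A, ∀ (s : St A) (C : Config A), Corr (pathHeap s) 1 0 σ C →
      Ter d s fun s' => (∀ q, q ≠ 12 → s'.idx q = s.idx q) ∧
        (∀ x, x ≠ t + 2 → s'.reg x = s.reg x) ∧
        (s'.idx 12 = 1 ↔ s.idx 12 = 1 ∧ okIns D (fun _ => 0) c Y ins C) ∧
        NewVal (pathHeap s') t ins C := by
  have hmap : ∀ (s : St A) (C : Config A), Corr (pathHeap s) 1 0 σ C → ∀ args : List ℕ,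
      (args.map fun a => (Nat.unpair (envOf 1 0 σ a)).1 + 1).map s.reg = args.map C.reg := by
    intro s C hC args
    rw [List.map_map]
    exact List.map_congr_left fun a _ => (hC.2.2 a).symm
  cases ins with
  | apply j i args =>
    refine ⟨.app (t + 2) i (args.map fun a => (Nat.unpair (envOf 1 0 σ a)).1 + 1), fun s C hC =>
      .app ⟨fun _ _ => rfl, fun x hx => by simp [hx], by simp [okIns], ?_⟩⟩
    simp [NewVal, pathHeap, hmap s C hC]
  | const j i =>
    refine ⟨.con (t + 2) i, fun s C hC =>
      .con ⟨fun _ _ => rfl, fun x hx => by simp [hx], by simp [okIns], ?_⟩⟩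
    simp [NewVal, pathHeap]
  | branchRel i args l₁ l₂ =>
    obtain ⟨d₁, h₁⟩ := exists_assert (A := A) 12 (c = 0)
    obtain ⟨d₂, h₂⟩ := exists_assert (A := A) 12 (c ≠ 0)
    refine ⟨.ifR i (args.map fun a => (Nat.unpair (envOf 1 0 σ a)).1 + 1) d₁ d₂, fun s C hC =>
      .ifR (fun hr => (h₁ s).mono ?_) fun hr => (h₂ s).mono ?_⟩
    · rw [hmap s C hC] at hr
      rintro s' ⟨h3, h4, h5⟩
      exact ⟨h3, fun x _ => by rw [h4], by simp [h5, okIns, hr], trivial⟩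
    · rw [hmap s C hC] at hr
      rintro s' ⟨h3, h4, h5⟩
      exact ⟨h3, fun x _ => by rw [h4], by simp [h5, okIns, hr], trivial⟩
  | nuGuess j =>
    exact ⟨.skip, fun s C hC => .skip ⟨fun _ _ => rfl, fun _ _ => rfl, by simp [okIns], trivial⟩⟩
  | _ =>
    exact ⟨.skip, fun s C hC => .skip ⟨fun _ _ => rfl, fun _ _ => rfl, by simp [okIns], trivial⟩⟩

/-- Loop-free code checking whether `c 0, c 1, …` are the correct outcomes of the relational tests
in the first `T` steps of a program run on the one-element tuple held by register `1`. -/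
theorem exists_path (D : A.U → Prop) (prog : List (Instr A)) (c : ℕ → ℕ) (Y : ℕ → ℕ → A.U)
    (T : ℕ) :
    ∃ d : Cmd A, ∀ s : St A, Ter d s fun s' => (∀ q, q ≠ 12 → s'.idx q = s.idx q) ∧
      (∀ x, x ≤ 1 ∨ T + 1 < x → s'.reg x = s.reg x) ∧
      (s'.idx 12 = 1 ↔ s.idx 12 = 1 ∧ ∀ t < T, okW prog D (fun _ => 0) (c t) (Y t)
        (runW prog (fun _ => 0) c Y (inputConfig A (singTup A (s.reg 1))) t)) ∧
      Corr (pathHeap s') 1 0 (symRun prog (fun _ => 0) 1 0 c T)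
        (runW prog (fun _ => 0) c Y (inputConfig A (singTup A (s.reg 1))) T) := by
  induction T with
  | zero =>
    refine ⟨.skip, fun s => .skip ⟨fun _ _ => rfl, fun _ _ => rfl, by simp, rfl, fun j => ?_,
      fun i => ?_⟩⟩
    · simp [runW, inputConfig, singTup, idxOf, symRun, eq_comm]
    · have : envOf 1 0 (symRun prog (fun _ => 0) 1 0 c 0) i = 0 := by
        simp only [symRun, envOf, lk_nil]
        split_ifs with h
        · obtain rfl : i = 0 := by omega
          rfl
        · rfl
      rw [this]
      cases i <;> simp [runW, inputConfig, singTup, pathHeap]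
  | succ T ih =>
    obtain ⟨d, hd⟩ := ih
    cases hins : prog[(symRun prog (fun _ => 0) 1 0 c T).1]? with
    | none =>
      refine ⟨d, fun s => (hd s).mono ?_⟩
      rintro s' ⟨h1, h2, h3, h4⟩
      have h5 : runW prog (fun _ => 0) c Y (inputConfig A (singTup A (s.reg 1))) (T + 1) =
          runW prog (fun _ => 0) c Y (inputConfig A (singTup A (s.reg 1))) T := by
        simp [runW, stepW, h4.1, hins]
      refine ⟨h1, fun x hx => h2 x (by omega), ?_, ?_⟩
      · rw [h3]
        refine and_congr_right fun _ => ⟨fun h t ht => ?_, fun h t ht => h t (by omega)⟩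
        rcases Nat.lt_succ_iff_lt_or_eq.1 ht with ht | rfl
        · exact h t ht
        · intro ins hi
          rw [h4.1, hins] at hi
          cases hi
      · rw [h5, symRun_succ_of_none hins]
        exact h4
    | some ins =>
      have htime := fun i => time_envOf_symRun prog (fun _ => 0) 1 0 c T i
      obtain ⟨e, he⟩ := exists_pathIns D _ T (c T) ins (Y T)
      refine ⟨.seq d e, fun s => .seq ((hd s).mono ?_)⟩
      rintro s1 ⟨h1, h2, h3, h4⟩
      refine (he s1 _ h4).mono ?_
      rintro s2 ⟨h5, h6, h7, h8⟩
      have hins' : prog[(runW prog (fun _ => 0) c Y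
          (inputConfig A (singTup A (s.reg 1))) T).label]? = some ins := by
        rw [h4.1, hins]
      refine ⟨fun q hq => (h5 q hq).trans (h1 q hq), fun x hx => ?_, ?_, ?_⟩
      · rw [h6 x (by omega), h2 x (by omega)]
      · rw [h7, h3, and_assoc]
        refine and_congr_right fun _ => ⟨fun h t ht => ?_, fun h => ⟨fun t ht => h t (by omega),
          h T (by omega) ins hins'⟩⟩
        rcases Nat.lt_succ_iff_lt_or_eq.1 ht with ht | rfl
        · exact h.1 t ht
        · intro ins' hi
          rw [hins'] at hi
          cases hi
          exact h.2
      · rw [symRun_succ_of_some hins, runW, stepW, hins', Option.elim_some]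
        refine h4.stepIns (fun i => ?_) h8 fun a ha => absurd ha (by omega)
        have := htime i
        exact h6 _ (by omega)

/-- `s'` agrees with `s` on the index registers below `10` except register `5`, and on all
`Z`-registers except the registers `1, …, S`. -/
def Keep (S : ℕ) (s s' : St A) : Prop :=
  (∀ r < 10, r ≠ 5 → s'.idx r = s.idx r) ∧ ∀ x, x = 0 ∨ S < x → s'.reg x = s.reg x

/-- If `{c₁, c₂}` is semi-decidable, some command always terminates and marks index register `5` as
failed unless the content of register `1` is one of `c₁`, `c₂`.  It compares the run of a
semi-deciding machine on this element with the two fixed halting runs on `c₁` and `c₂`: following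
one of these runs means being accepted, and `c₁`, `c₂` do so. -/
theorem exists_digitTest {c₁ c₂ : A.U} (hcc : constPair A c₁ c₂ ∈ SDEC A) :
    ∃ S0, ∀ S, S0 ≤ S → ∃ d : Cmd A, ∀ s : St A, s.idx 8 = 1 → Ter d s fun s' => Keep S s s' ∧
      (s'.idx 5 = 1 ↔ s.idx 5 = 1 ∧ (s.reg 1 = c₁ ∨ s.reg 1 = c₂)) := by
  obtain ⟨N, hN, hNp⟩ := hcc
  have : Nonempty A.U := ⟨c₁⟩
  have hiff := fun u => haltsFrom_iff_of_det (fun _ : A.U => True) hN (inputConfig A (singTup A u))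
  have hmem : ∀ u, singTup A u ∈ constPair A c₁ c₂ ↔ u = c₁ ∨ u = c₂ := by
    intro u
    simp [constPair, singTup]
  obtain ⟨T₁, b₁, Y₁, hok₁, hh₁⟩ := (hiff c₁).1 ((hNp _).1 ((hmem _).2 (.inl rfl)))
  obtain ⟨T₂, b₂, Y₂, hok₂, hh₂⟩ := (hiff c₂).1 ((hNp _).1 ((hmem _).2 (.inr rfl)))
  obtain ⟨d₁, hd₁⟩ := exists_path (fun _ : A.U => True) N.prog b₁ Y₁ T₁
  obtain ⟨d₂, hd₂⟩ := exists_path (fun _ : A.U => True) N.prog b₂ Y₂ T₂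
  obtain ⟨e, he⟩ := exists_assert (A := A) 5 False
  -- the label reached along a fixed sequence of choices does not depend on the input element
  have hlab : ∀ (b : ℕ → ℕ) (Y : ℕ → ℕ → A.U) (T : ℕ) (u : A.U),
      (runW N.prog (fun _ => 0) b Y (inputConfig A (singTup A u)) T).label =
        (symRun N.prog (fun _ => 0) 1 0 b T).1 := by
    intro b Y T u
    obtain ⟨d, hd⟩ := exists_path (fun _ : A.U => True) N.prog b Y T
    obtain ⟨s', -, -, -, -, h⟩ := hd ⟨fun _ => 1, fun _ => u⟩
    exact h.1
  rw [hlab] at hh₁ hh₂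
  refine ⟨max (T₁ + 1) (T₂ + 1), fun S hS => ⟨.seq (.rst 12) (.seq d₁ (.ifI 12 8 .skip
    (.seq (.rst 12) (.seq d₂ (.ifI 12 8 .skip e))))), fun s hs => .seq (.rst (.seq ?_))⟩⟩
  refine (hd₁ _).mono ?_
  rintro s1 ⟨h1, h2, h3, -⟩
  simp only [Function.update_self, true_and] at h3
  have h8 : s1.idx 8 = 1 := by rw [h1 8 (by omega)]; simpa using hs
  refine .ifI (fun h4 => .skip ?_) fun h4 => .seq (.rst (.seq ((hd₂ _).mono ?_)))
  · refine ⟨⟨fun r hr _ => by rw [h1 r (by omega)]; simp [show r ≠ 12 by omega], fun x hx =>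
      h2 x (by omega)⟩, ?_⟩
    have h5 : s.reg 1 = c₁ ∨ s.reg 1 = c₂ := by
      rw [← hmem, hNp, hiff]
      exact ⟨T₁, b₁, Y₁, h3.1 (h4.trans h8), by rw [hlab]; exact hh₁⟩
    rw [h1 5 (by omega)]
    simp [h5]
  · rintro s2 ⟨h5, h6, h7, -⟩
    have h9 : s1.reg 1 = s.reg 1 := h2 1 (by omega)
    simp only [Function.update_self, true_and, h9] at h7
    have h8' : s2.idx 8 = 1 := by rw [h5 8 (by omega)]; simpa using h8
    have hk : ∀ r, r ≠ 12 → s2.idx r = s.idx r := fun r hr => by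
      rw [h5 r hr]
      simp [hr, h1 r hr]
    have hreg : ∀ x, x = 0 ∨ S < x → s2.reg x = s.reg x := fun x hx => by
      rw [h6 x (by omega)]
      exact h2 x (by omega)
    refine .ifI (fun h10 => .skip ?_) fun h10 => (he s2).mono ?_
    · refine ⟨⟨fun r hr _ => hk r (by omega), hreg⟩, ?_⟩
      have h5 : s.reg 1 = c₁ ∨ s.reg 1 = c₂ := by
        rw [← hmem, hNp, hiff]
        exact ⟨T₂, b₂, Y₂, h7.1 (h10.trans h8'), by rw [hlab]; exact hh₂⟩
      rw [hk 5 (by omega)]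
      simp [h5]
    · rintro s3 ⟨h11, h12, h13⟩
      refine ⟨⟨fun r hr hr5 => by rw [h11 r hr5, hk r (by omega)], fun x hx => by
        rw [h12, hreg x hx]⟩, ?_⟩
      rw [h13]
      refine ⟨fun h => h.2.elim, fun h => ?_⟩
      rcases h.2 with hu | hu
      · refine absurd ?_ h4
        rw [h8, h3, hu]
        exact hok₁
      · refine absurd ?_ h10
        rw [h8', h7, hu]
        exact hok₂

end digit

/-! ### Simulating one script -/

section simulate
variable {A : FOStruct}

/-- The list of choices coded by the script `k`. -/
def script (k : ℕ) : ℕ × List ℕ := Denumerable.ofNat (ℕ × List ℕ) k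

/-- Choice number `t` of the script `k`. -/
def choice (k t : ℕ) : ℕ := (script k).2.getD t 0

theorem primrec_script : Primrec script := Primrec.ofNat _

theorem primrec_choice : Primrec₂ choice :=
  Primrec.list_getD 0 |>.comp (Primrec.snd.comp (primrec_script.comp .fst)) .snd

/-- The symbolic configuration after `t` steps of the run described by script `k`. -/
def symAt (prog : List (Instr A)) (g g0 : ℕ → ℕ) (m k t : ℕ) : SC :=
  symRun prog g (m + 1 + g0 (script k).1) m (choice k) t

/-- The pointer held by register `r` after `t` steps of the run described by script `k`. -/
def ptrAt (prog : List (Instr A)) (g g0 : ℕ → ℕ) (m k t r : ℕ) : ℕ :=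
  envOf (m + 1 + g0 (script k).1) m (symAt prog g g0 m k t) r

/-- The `Z`-register in which the simulating machine keeps the value of the pointer `p`.  Pointer
`0` denotes the content of register `0`, which no copy instruction can access and which therefore
has to stay in place; the registers `1, …, S` are workspace. -/
def cell (S m p : ℕ) : ℕ := if p = 0 then 0 else m + S + 2 + p

theorem cell_of_ne {S m p : ℕ} (h : p ≠ 0) : cell S m p = m + S + 1 + p + 1 := by
  rw [cell, if_neg h]
  omega

theorem cell_inj {S m p q : ℕ} (h : cell S m p = cell S m q) : p = q := by
  unfold cell at h
  split_ifs at h <;> omega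

theorem cell_spec (S m p : ℕ) : cell S m p = 0 ∨ S < cell S m p := by
  unfold cell
  split_ifs <;> omega

theorem pair_succ_ne (t a : ℕ) : Nat.pair (t + 1) a ≠ 0 := by
  have := Nat.left_le_pair (t + 1) a
  omega

/-- The heap represented by a state of the simulating machine. -/
def heapOf (S m : ℕ) (s : St A) (p : ℕ) : A.U := s.reg (cell S m p)

/-- The index registers `1`, `2`, `3`, `4` hold `m`, `k`, `t`, `a`, and register `8` holds the
constant `1`. -/
def Ctl (m k t a : ℕ) (s : St A) : Prop :=
  s.idx 1 = m + 1 ∧ s.idx 2 = k + 1 ∧ s.idx 3 = t + 1 ∧ s.idx 4 = a + 1 ∧ s.idx 8 = 1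

theorem Ctl.congr {m k t a : ℕ} {s s' : St A} (h : Ctl m k t a s)
    (hs : ∀ r < 10, s'.idx r = s.idx r) : Ctl m k t a s' := by
  unfold Ctl at *
  rwa [hs 1 (by omega), hs 2 (by omega), hs 3 (by omega), hs 4 (by omega), hs 8 (by omega)]

theorem exists_calc' {f : ℕ → ℕ → ℕ → ℕ → ℕ}
    (hf : Primrec fun p : ℕ × ℕ × ℕ × ℕ => f p.1 p.2.1 p.2.2.1 p.2.2.2) (o : ℕ) (ho : o < 20) :
    ∃ c : Cmd A, ∀ (s : St A) (m k t a : ℕ), Ctl m k t a s →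
      Ter c s fun s' => Frame 20 o s s' ∧ s'.idx o = f m k t a + 1 := by
  obtain ⟨c, hc⟩ := exists_calc (A := A) hf o ho
  exact ⟨c, fun s m k t a h => hc s m k t a h.1 h.2.1 h.2.2.1 h.2.2.2.1⟩

section primrec
variable {α : Type} [Primcodable α]

theorem primrec_symAt (prog : List (Instr A)) {g g0 : ℕ → ℕ} (hg : Primrec g) (hg0 : Primrec g0)
    {m k t : α → ℕ} (hm : Primrec m) (hk : Primrec k) (ht : Primrec t) :
    Primrec fun a => symAt prog g g0 (m a) (k a) (t a) :=
  primrec_symRun prog hg (Primrec.nat_add.comp (Primrec.succ.comp hm)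
    (hg0.comp (Primrec.fst.comp (primrec_script.comp hk)))) hm ht
    (primrec_choice.comp (hk.comp .fst) .snd)

theorem primrec_ptrAt (prog : List (Instr A)) {g g0 : ℕ → ℕ} (hg : Primrec g) (hg0 : Primrec g0)
    (r : ℕ) {m k t : α → ℕ} (hm : Primrec m) (hk : Primrec k) (ht : Primrec t) :
    Primrec fun a => ptrAt prog g g0 (m a) (k a) (t a) r :=
  primrec_envOf (Primrec.nat_add.comp (Primrec.succ.comp hm)
    (hg0.comp (Primrec.fst.comp (primrec_script.comp hk)))) hm
    (primrec_symAt prog hg hg0 hm hk ht) (.const r)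

theorem primrec_addr (S : ℕ) {m p : α → ℕ} (hm : Primrec m) (hp : Primrec p) :
    Primrec fun a => m a + S + 1 + p a :=
  Primrec.nat_add.comp (Primrec.nat_add.comp (Primrec.nat_add.comp hm (.const S)) (.const 1)) hp

end primrec

/-- Fetching the arguments of an instruction: the values of the registers `args` of the simulated
configuration are made available in some registers `l`, and the rest of the computation `fin`
continues with this list.  An argument held by register `0` is used in place, the others are copied
to the workspace registers `j, j + 1, …`. -/
theorem exists_args (prog : List (Instr A)) {g g0 : ℕ → ℕ} (hg : Primrec g) (hg0 : Primrec g0)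
    (S : ℕ) (fin : List ℕ → Cmd A) (args : List ℕ) :
    ∀ (acc : List ℕ) (j : ℕ), 2 ≤ j → j + args.length ≤ S + 1 →
    ∃ d : Cmd A, ∀ (s : St A) (m k t a : ℕ) (Q : St A → Prop), Ctl m k t a s →
      (∀ s' l, (∀ r < 10, s'.idx r = s.idx r) → (∀ x, x < j ∨ S < x → s'.reg x = s.reg x) →
        l.map s'.reg = args.map (fun r => heapOf S m s (ptrAt prog g g0 m k t r)) →
        Ter (fin (acc ++ l)) s' Q) → Ter d s Q := by
  induction args with
  | nil =>
    intro acc j _ _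
    refine ⟨fin acc, fun s m k t a Q _ h => ?_⟩
    simpa using h s [] (fun _ _ => rfl) (fun _ _ => rfl) rfl
  | cons r args ih =>
    intro acc j hj hlen
    simp only [List.length_cons] at hlen
    have hpr : Primrec fun p : ℕ × ℕ × ℕ × ℕ => ptrAt prog g g0 p.1 p.2.1 p.2.2.1 r :=
      primrec_ptrAt prog hg hg0 r .fst (Primrec.fst.comp .snd)
        (Primrec.fst.comp (Primrec.snd.comp .snd))
    obtain ⟨c, hc⟩ := exists_calc' (A := A)
      (f := fun m k t _ => if ptrAt prog g g0 m k t r = 0 then 0 else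
        m + S + 1 + ptrAt prog g g0 m k t r)
      (Primrec.ite (Primrec.eq.comp hpr (.const 0)) (.const 0) (primrec_addr S .fst hpr)) 10
      (by omega)
    obtain ⟨d₁, h₁⟩ := ih (acc ++ [0]) (j + 1) (by omega) (by omega)
    obtain ⟨d₂, h₂⟩ := ih (acc ++ [j]) (j + 1) (by omega) (by omega)
    obtain ⟨e, he⟩ := exists_set (A := A) 11 (j - 1)
    refine ⟨.seq c (.ifI 10 8 d₁ (.seq e (.seq (.cpy 11 10) d₂))), fun s m k t a Q hs h => ?_⟩
    refine .seq ((hc s m k t a hs).mono ?_)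
    rintro s1 ⟨⟨h3, h4⟩, h5⟩
    have hs1 : Ctl m k t a s1 := hs.congr fun r hr => h4 r (by omega) (by omega)
    have h8 : s1.idx 8 = 1 := hs1.2.2.2.2
    refine .ifI (fun h6 => ?_) fun h6 => .seq ((he s1).mono ?_)
    · have hp : ptrAt prog g g0 m k t r = 0 := by
        by_contra hp
        rw [h5, if_neg hp, h8] at h6
        omega
      refine h₁ s1 m k t a Q hs1 fun s' l h9 h10 h11 => ?_
      have := h s' (0 :: l) (fun r hr => (h9 r hr).trans (h4 r (by omega) (by omega)))
        (fun x hx => by rw [h10 x (by omega), h3]) ?_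
      · simpa using this
      · rw [List.map_cons, List.map_cons, h11]
        congr 1
        · rw [h10 0 (by omega), h3, hp]
          rfl
        · simp only [heapOf, h3]
    · have hp : ptrAt prog g g0 m k t r ≠ 0 := by
        intro hp
        rw [h5, if_pos hp, h8] at h6
        exact h6 rfl
      rw [if_neg hp] at h5
      rintro s2 rfl
      refine .seq (.cpy ?_)
      simp only [Function.update_self, Function.update_of_ne (show 10 ≠ 11 by omega), h5, h3]
      rw [Nat.sub_add_cancel (show 1 ≤ j by omega), ← cell_of_ne hp]
      refine h₂ _ m k t a Q (hs1.congr fun r hr => ?_) fun s' l h9 h10 h11 => ?_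
      · simp [show r ≠ 11 by omega]
      · have := h s' (j :: l) (fun r hr => ?_) (fun x hx => ?_) ?_
        · simpa using this
        · rw [h9 r hr]
          simp only [Function.update_of_ne (show r ≠ 11 by omega)]
          exact h4 r (by omega) (by omega)
        · rw [h10 x (by omega)]
          simp [show x ≠ j by omega]
        · rw [List.map_cons, List.map_cons, h11]
          congr 1
          · rw [h10 j (by omega)]
            simp [heapOf]
          · refine List.map_congr_left fun q _ => ?_
            have := cell_spec S m (ptrAt prog g g0 m k t q)
            simp [heapOf, show cell S m (ptrAt prog g g0 m k t q) ≠ j by omega]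

/-- The index registers below `10` are unchanged, except the loop counter `4`, its bound `7`, and
the failure flag `5`. -/
def KeepIdx (s s' : St A) : Prop :=
  (∀ r < 10, r ≠ 4 → r ≠ 5 → r ≠ 7 → s'.idx r = s.idx r) ∧ 1 ≤ s'.idx 4

/-- A command that tests the values of a computable finite family of pointers. -/
theorem exists_digitLoop {D : A.U → Prop} {S : ℕ} (hS : 1 ≤ S)
    (htest : ∃ d : Cmd A, ∀ s : St A, s.idx 8 = 1 → Ter d s fun s' => Keep S s s' ∧
      (s'.idx 5 = 1 ↔ s.idx 5 = 1 ∧ D (s.reg 1)))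
    {n : ℕ → ℕ → ℕ → ℕ} {q : ℕ → ℕ → ℕ → ℕ → ℕ}
    (hn : Primrec fun p : ℕ × ℕ × ℕ × ℕ => n p.1 p.2.1 p.2.2.1)
    (hq : Primrec fun p : ℕ × ℕ × ℕ × ℕ => q p.1 p.2.1 p.2.2.1 p.2.2.2)
    (hq0 : ∀ m k t a, q m k t a ≠ 0) :
    ∃ d : Cmd A, ∀ (s : St A) (m k t a : ℕ), Ctl m k t a s → Ter d s fun s' => KeepIdx s s' ∧
      (∀ p, heapOf S m s' p = heapOf S m s p) ∧
      (s'.idx 5 = 1 ↔ s.idx 5 = 1 ∧ ∀ a < n m k t, D (heapOf S m s (q m k t a))) := by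
  obtain ⟨d, hd⟩ := htest
  obtain ⟨c₁, hc₁⟩ := exists_calc' (A := A) (f := fun m k t _ => n m k t) hn 7 (by omega)
  obtain ⟨c₂, hc₂⟩ := exists_calc' (A := A) (f := fun m k t a => m + S + 1 + q m k t a)
    (primrec_addr S .fst hq) 10 (by omega)
  refine ⟨.seq (.rst 4) (.seq c₁ (.whl 4 7 (.seq c₂ (.seq (.rst 11) (.seq (.cpy 11 10)
    (.seq d (.inc 4))))))), fun s m k t a hs => .seq (.rst (.seq ?_))⟩
  obtain ⟨i1, i2, i3, i4, i8⟩ := hs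
  refine (hc₁ _ m k t 0 ⟨by simpa, by simpa, by simpa, by simp, by simpa⟩).mono ?_
  rintro s1 ⟨⟨h1, h2⟩, h3⟩
  have hs1 : ∀ r < 10, r ≠ 4 → r ≠ 7 → s1.idx r = s.idx r := fun r hr hr4 hr7 => by
    rw [h2 r (by omega) hr7]
    simp [hr4]
  refine (Ter.count (n m k t) (fun a s' => (∀ r < 10, r ≠ 4 → r ≠ 5 → s'.idx r = s1.idx r) ∧
    s'.idx 4 = a + 1 ∧ (∀ p, heapOf S m s' p = heapOf S m s p) ∧
    (s'.idx 5 = 1 ↔ s.idx 5 = 1 ∧ ∀ b < a, D (heapOf S m s (q m k t b))))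
    ?_ ?_ (Nat.zero_le _) ⟨fun _ _ _ _ => rfl, ?_, fun p => ?_, ?_⟩).mono ?_
  · rintro a s' ⟨h4, h5, -⟩
    rw [h5, h4 7 (by omega) (by omega) (by omega), h3]
    omega
  · rintro a s2 ha ⟨h4, h5, h6, h7⟩
    have hs2 : ∀ r < 10, r ≠ 4 → r ≠ 5 → r ≠ 7 → s2.idx r = s.idx r := fun r hr a b c => by
      rw [h4 r hr a b, hs1 r hr a c]
    have e8 : s2.idx 8 = 1 := by rw [hs2 8 (by omega) (by omega) (by omega) (by omega), i8]
    refine .seq ((hc₂ s2 m k t a ⟨?_, ?_, ?_, h5, e8⟩).mono ?_)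
    · rw [hs2 1 (by omega) (by omega) (by omega) (by omega), i1]
    · rw [hs2 2 (by omega) (by omega) (by omega) (by omega), i2]
    · rw [hs2 3 (by omega) (by omega) (by omega) (by omega), i3]
    rintro s3 ⟨⟨h8, h9⟩, h10⟩
    refine .seq (.rst (.seq (.cpy (.seq ?_))))
    simp only [Function.update_self, Function.update_of_ne (show 10 ≠ 11 by omega), h10, h8]
    rw [← cell_of_ne (hq0 m k t a)]
    refine (hd _ ?_).mono ?_
    · show Function.update s3.idx 11 1 8 = 1
      rw [Function.update_of_ne (by omega), h9 8 (by omega) (by omega), e8]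
    rintro s4 ⟨⟨h11, h12⟩, h13⟩
    simp only [Function.update_self, Function.update_of_ne (show 5 ≠ 11 by omega)] at h13
    have e4 : ∀ r < 10, r ≠ 5 → s4.idx r = s2.idx r := fun r hr hr5 => by
      rw [h11 r hr hr5]
      simp only [Function.update_of_ne (show r ≠ 11 by omega)]
      exact h9 r (by omega) (by omega)
    refine .inc ⟨fun r hr hr4 hr5 => ?_, ?_, fun p => ?_, ?_⟩
    · simp only [Function.update_of_ne hr4]
      rw [e4 r hr hr5, h4 r hr hr4 hr5]
    · simp [e4 4 (by omega) (by omega), h5]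
    · rw [← h6]
      have := cell_spec S m p
      simp only [heapOf]
      rw [h12 _ this]
      simp [show cell S m p ≠ 1 by omega]
    · simp only [Function.update_of_ne (show 5 ≠ 4 by omega)]
      rw [h13, h9 5 (by omega) (by omega), h7, and_assoc]
      refine and_congr_right fun _ => ?_
      have e : s2.reg (cell S m (q m k t a)) = heapOf S m s (q m k t a) := h6 _
      rw [e]
      constructor
      · rintro ⟨h, h'⟩ b hb
        rcases Nat.lt_succ_iff_lt_or_eq.1 hb with hb | rfl
        · exact h b hb
        · exact h'
      · exact fun h => ⟨fun b hb => h b (by omega), h a (by omega)⟩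
  · rw [h2 4 (by omega) (by omega)]
    simp
  · simp only [heapOf, h1]
  · rw [hs1 5 (by omega) (by omega) (by omega)]
    simp
  · rintro s' ⟨h4, h5, h6, h7⟩
    refine ⟨⟨fun r hr hr4 hr5 hr7 => ?_, by omega⟩, h6, h7⟩
    rw [h4 r hr hr4 hr5, hs1 r hr hr4 hr7]

end simulate

section simulateStep
variable {A : FOStruct}

/-- The argument registers of operations and relational tests. -/
def insArgs : Instr A → List ℕ
  | .apply _ _ args => args
  | .branchRel _ args _ _ => args
  | _ => []

/-- The bound on the registers holding initial values in the run described by script `k`. -/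
def bnd (g0 : ℕ → ℕ) (m k : ℕ) : ℕ := m + 1 + g0 (script k).1

theorem primrec_t : Primrec fun p : ℕ × ℕ × ℕ × ℕ => p.2.2.1 :=
  Primrec.fst.comp (Primrec.snd.comp .snd)

theorem primrec_k : Primrec fun p : ℕ × ℕ × ℕ × ℕ => p.2.1 := Primrec.fst.comp .snd

theorem primrec_a : Primrec fun p : ℕ × ℕ × ℕ × ℕ => p.2.2.2 :=
  Primrec.snd.comp (Primrec.snd.comp .snd)

theorem primrec_newPtr :
    Primrec fun p : ℕ × ℕ × ℕ × ℕ => Nat.pair (p.2.2.1 + 1) 0 :=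
  Primrec₂.natPair.comp (Primrec.succ.comp primrec_t) (.const 0)

/-- Moves the content of workspace register `1` to the cell of the pointer created in step `t`. -/
theorem exists_store (S : ℕ) : ∃ d : Cmd A, ∀ (s : St A) (m k t a : ℕ), Ctl m k t a s →
    Ter d s fun s' => KeepIdx s s' ∧ s'.idx 5 = s.idx 5 ∧
      (∀ p, p ≠ Nat.pair (t + 1) 0 → heapOf S m s' p = heapOf S m s p) ∧
      heapOf S m s' (Nat.pair (t + 1) 0) = s.reg 1 := by
  obtain ⟨c, hc⟩ := exists_calc' (A := A) (f := fun m _ t _ => m + S + 1 + Nat.pair (t + 1) 0)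
    (primrec_addr S .fst primrec_newPtr) 10 (by omega)
  refine ⟨.seq c (.seq (.rst 11) (.cpy 10 11)), fun s m k t a hs =>
    .seq ((hc s m k t a hs).mono ?_)⟩
  rintro s1 ⟨⟨h1, h2⟩, h3⟩
  refine .seq (.rst (.cpy ?_))
  simp only [Function.update_self, Function.update_of_ne (show 10 ≠ 11 by omega), h3, h1]
  rw [← cell_of_ne (pair_succ_ne t 0)]
  have h4 : ∀ r < 10, Function.update s1.idx 11 1 r = s.idx r := fun r hr => by
    rw [Function.update_of_ne (by omega), h2 r (by omega) (by omega)]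
  refine ⟨⟨fun r hr _ _ _ => h4 r hr, ?_⟩, h4 5 (by omega), fun p hp => ?_, ?_⟩
  · show 1 ≤ Function.update s1.idx 11 1 4
    rw [h4 4 (by omega), hs.2.2.2.1]
    omega
  · have : cell S m p ≠ cell S m (Nat.pair (t + 1) 0) := fun h => hp (cell_inj h)
    simp [heapOf, this]
  · simp [heapOf]

/-- Simulation of one instruction. -/
theorem exists_simIns (prog : List (Instr A)) {D : A.U → Prop} {g g0 : ℕ → ℕ} (hg : Primrec g)
    (hg0 : Primrec g0) {S : ℕ}
    (htest : ∃ d : Cmd A, ∀ s : St A, s.idx 8 = 1 → Ter d s fun s' => Keep S s s' ∧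
      (s'.idx 5 = 1 ↔ s.idx 5 = 1 ∧ D (s.reg 1)))
    (ins : Instr A) (hS : (insArgs ins).length + 1 ≤ S) :
    ∃ d : Cmd A, ∀ (s : St A) (m k t a : ℕ) (C : Config A), Ctl m k t a s →
      Corr (heapOf S m s) (bnd g0 m k) m (symAt prog g g0 m k t) C →
      Ter d s fun s' => KeepIdx s s' ∧
        (∀ p, p ≠ Nat.pair (t + 1) 0 → heapOf S m s' p = heapOf S m s p) ∧
        (s'.idx 5 = 1 ↔ s.idx 5 = 1 ∧ okIns D g (choice k t)
          (fun a => heapOf S m s (Nat.pair (t + 1) (a + 1))) ins C) ∧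
        NewVal (heapOf S m s') t ins C := by
  obtain ⟨st, hst⟩ := exists_store (A := A) S
  have hskip : ∀ (s : St A) (m k t a : ℕ), Ctl m k t a s → KeepIdx s s := fun s m k t a hs =>
    ⟨fun _ _ _ _ _ => rfl, by rw [hs.2.2.2.1]; omega⟩
  cases ins with
  | apply j i args =>
    simp only [insArgs] at hS
    obtain ⟨d, hd⟩ := exists_args prog hg hg0 S (fun l => .seq (.app 1 i l) st) args [] 2 le_rfl
      (by omega)
    refine ⟨d, fun s m k t a C hs hC => hd s m k t a _ hs fun s1 l h1 h2 h3 => .seq (.app ?_)⟩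
    refine (hst ⟨s1.idx, Function.update s1.reg 1 (A.ops i (([] ++ l).map s1.reg))⟩ m k t a
      (hs.congr h1)).mono ?_
    rintro s2 ⟨⟨h4, h4'⟩, h5, h6, h7⟩
    refine ⟨⟨fun r hr a b c => (h4 r hr a b c).trans (h1 r hr), h4'⟩, fun p hp => ?_, ?_, ?_⟩
    · rw [h6 p hp]
      have := cell_spec S m p
      simp only [heapOf]
      rw [Function.update_of_ne (by omega), h2 _ (by omega)]
    · have : s2.idx 5 = s.idx 5 := h5.trans (h1 5 (by omega))
      simp [this, okIns]
    · show heapOf S m s2 _ = _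
      rw [h7]
      have : args.map C.reg = args.map fun r => heapOf S m s (ptrAt prog g g0 m k t r) :=
        List.map_congr_left fun r _ => hC.2.2 r
      simp [h3, this]
  | const j i =>
    refine ⟨.seq (.con 1 i) st, fun s m k t a C hs hC => .seq (.con ?_)⟩
    refine (hst ⟨s.idx, Function.update s.reg 1 (A.consts i)⟩ m k t a
      (hs.congr fun _ _ => rfl)).mono ?_
    rintro s2 ⟨h4, h5, h6, h7⟩
    refine ⟨h4, fun p hp => ?_, ?_, ?_⟩
    · rw [h6 p hp]
      have := cell_spec S m p
      simp only [heapOf]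
      rw [Function.update_of_ne (by omega)]
    · have : s2.idx 5 = s.idx 5 := h5
      simp [this, okIns]
    · show heapOf S m s2 _ = _
      rw [h7]
      simp
  | branchRel i args l₁ l₂ =>
    simp only [insArgs] at hS
    obtain ⟨c, hc⟩ := exists_calc' (A := A) (f := fun _ k t _ => if choice k t = 0 then 0 else 1)
      (Primrec.ite (Primrec.eq.comp (primrec_choice.comp primrec_k primrec_t) (.const 0))
        (.const 0) (.const 1)) 10 (by omega)
    obtain ⟨e, he⟩ := exists_assert (A := A) 5 False
    obtain ⟨d, hd⟩ := exists_args prog hg hg0 S (fun l => .seq c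
      (.ifR i l (.ifI 10 8 .skip e) (.ifI 10 8 e .skip))) args [] 2 le_rfl (by omega)
    refine ⟨d, fun s m k t a C hs hC => hd s m k t a _ hs fun s1 l h1 h2 h3 => .seq ?_⟩
    refine (hc s1 m k t a (hs.congr h1)).mono ?_
    rintro s2 ⟨⟨h4, h5⟩, h6⟩
    have hidx : ∀ r < 10, s2.idx r = s.idx r := fun r hr =>
      (h5 r (by omega) (by omega)).trans (h1 r hr)
    have h8 : s2.idx 8 = 1 := (hidx 8 (by omega)).trans hs.2.2.2.2
    have hreg : ∀ p, heapOf S m s2 p = heapOf S m s p := fun p => by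
      have := cell_spec S m p
      simp only [heapOf]
      rw [h4, h2 _ (by omega)]
    have hl : l.map s2.reg = args.map C.reg := by
      rw [h4, h3]
      exact List.map_congr_left fun r _ => (hC.2.2 r).symm
    have hch : s2.idx 10 = s2.idx 8 ↔ choice k t = 0 := by
      rw [h6, h8]
      split_ifs with h <;> simp [h]
    have h4pos : 1 ≤ s2.idx 4 := by
      rw [hidx 4 (by omega), hs.2.2.2.1]
      omega
    -- the two ways in which the test may end
    have good : (A.rels i (args.map C.reg) ↔ choice k t = 0) →
        Ter .skip s2 fun s' => KeepIdx s s' ∧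
        (∀ p, p ≠ Nat.pair (t + 1) 0 → heapOf S m s' p = heapOf S m s p) ∧
        (s'.idx 5 = 1 ↔ s.idx 5 = 1 ∧ okIns D g (choice k t)
          (fun a => heapOf S m s (Nat.pair (t + 1) (a + 1))) (.branchRel i args l₁ l₂) C) ∧
        NewVal (heapOf S m s') t (.branchRel i args l₁ l₂) C := fun h =>
      .skip ⟨⟨fun r hr _ _ _ => hidx r hr, h4pos⟩, fun p _ => hreg p,
        by rw [hidx 5 (by omega)]; simp only [okIns, h, and_true], trivial⟩
    have bad : ¬ (A.rels i (args.map C.reg) ↔ choice k t = 0) →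
        Ter e s2 fun s' => KeepIdx s s' ∧
        (∀ p, p ≠ Nat.pair (t + 1) 0 → heapOf S m s' p = heapOf S m s p) ∧
        (s'.idx 5 = 1 ↔ s.idx 5 = 1 ∧ okIns D g (choice k t)
          (fun a => heapOf S m s (Nat.pair (t + 1) (a + 1))) (.branchRel i args l₁ l₂) C) ∧
        NewVal (heapOf S m s') t (.branchRel i args l₁ l₂) C := fun h => by
      refine (he s2).mono ?_
      rintro s3 ⟨h9, h10, h11⟩
      refine ⟨⟨fun r hr _ h5 _ => (h9 r h5).trans (hidx r hr), ?_⟩, fun p _ => ?_, ?_, trivial⟩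
      · rw [h9 4 (by omega)]
        exact h4pos
      · rw [← hreg]
        simp only [heapOf, h10]
      · rw [h11]
        simp only [okIns, h, and_false]
    refine .ifR (fun hr => .ifI (fun hch' => good ?_) fun hch' => bad ?_)
      fun hr => .ifI (fun hch' => bad ?_) fun hch' => good ?_ <;>
      rw [List.nil_append, hl] at hr <;> rw [← hch] <;> simp [hr, hch']
  | nuGuess j =>
    obtain ⟨d, hd⟩ := exists_digitLoop (S := S) (by omega) htest
      (n := fun _ k t => g (choice k t)) (q := fun _ _ t a => Nat.pair (t + 1) (a + 1))
      (hg.comp (primrec_choice.comp primrec_k primrec_t))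
      (Primrec₂.natPair.comp (Primrec.succ.comp primrec_t) (Primrec.succ.comp primrec_a))
      fun _ _ t a => pair_succ_ne t _
    refine ⟨d, fun s m k t a C hs hC => (hd s m k t a hs).mono ?_⟩
    rintro s' ⟨h1, h2, h3⟩
    exact ⟨h1, fun p _ => h2 p, h3, trivial⟩
  | _ =>
    exact ⟨.skip, fun s m k t a C hs hC => .skip ⟨hskip s m k t a hs, fun _ _ => rfl,
      by simp [okIns], trivial⟩⟩

/-- Simulation of one step, for the first `L` labels of the program. -/
theorem exists_simStep (prog : List (Instr A)) {D : A.U → Prop} {g g0 : ℕ → ℕ} (hg : Primrec g)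
    (hg0 : Primrec g0) {S : ℕ}
    (htest : ∃ d : Cmd A, ∀ s : St A, s.idx 8 = 1 → Ter d s fun s' => Keep S s s' ∧
      (s'.idx 5 = 1 ↔ s.idx 5 = 1 ∧ D (s.reg 1)))
    (hS : ∀ ins ∈ prog, (insArgs ins).length + 1 ≤ S) (L : ℕ) :
    ∃ d : Cmd A, ∀ (s : St A) (m k t a : ℕ) (C : Config A), Ctl m k t a s →
      Corr (heapOf S m s) (bnd g0 m k) m (symAt prog g g0 m k t) C →
      (C.label < L ∨ prog.length ≤ C.label) →
      Ter d s fun s' => KeepIdx s s' ∧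
        (∀ p, p ≠ Nat.pair (t + 1) 0 → heapOf S m s' p = heapOf S m s p) ∧
        (s'.idx 5 = 1 ↔ s.idx 5 = 1 ∧ okW prog D g (choice k t)
          (fun a => heapOf S m s (Nat.pair (t + 1) (a + 1))) C) ∧
        Corr (heapOf S m s') (bnd g0 m k) m (symAt prog g g0 m k (t + 1))
          (stepW prog g (choice k t) (fun a => heapOf S m s (Nat.pair (t + 1) (a + 1))) C) := by
  induction L with
  | zero =>
    refine ⟨.skip, fun s m k t a C hs hC hl => .skip ?_⟩
    have hnone : prog[C.label]? = none := List.getElem?_eq_none (hl.resolve_left (by omega))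
    refine ⟨⟨fun _ _ _ _ _ => rfl, by rw [hs.2.2.2.1]; omega⟩, fun _ _ => rfl, ?_, ?_⟩
    · simp [okW, hnone]
    · rw [stepW, hnone]
      rw [hC.1] at hnone
      rw [symAt, symRun_succ_of_none hnone]
      exact hC
  | succ L ih =>
    obtain ⟨d, hd⟩ := ih
    by_cases hL : prog.length ≤ L
    · exact ⟨d, fun s m k t a C hs hC hl => hd s m k t a C hs hC (by omega)⟩
    obtain ⟨ins, hins⟩ : ∃ ins, prog[L]? = some ins := ⟨_, List.getElem?_eq_getElem (by omega)⟩
    obtain ⟨e, he⟩ := exists_simIns prog hg hg0 htest ins (hS _ (List.mem_of_getElem? hins))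
    obtain ⟨c, hc⟩ := exists_calc' (A := A)
      (f := fun m k t _ => if (symAt prog g g0 m k t).1 = L then 0 else 1)
      (Primrec.ite (Primrec.eq.comp (Primrec.fst.comp
        (primrec_symAt prog hg hg0 .fst primrec_k primrec_t)) (.const L))
        (.const 0) (.const 1)) 10 (by omega)
    refine ⟨.seq c (.ifI 10 8 e d), fun s m k t a C hs hC hl =>
      .seq ((hc s m k t a hs).mono ?_)⟩
    rintro s1 ⟨⟨h1, h2⟩, h3⟩
    have hidx : ∀ r < 10, s1.idx r = s.idx r := fun r hr => h2 r (by omega) (by omega)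
    have hs1 := hs.congr hidx
    have hheap : heapOf S m s1 = heapOf S m s := by
      funext p
      simp only [heapOf, h1]
    have hC1 := hC
    rw [← hheap] at hC1
    have hch : s1.idx 10 = s1.idx 8 ↔ C.label = L := by
      rw [h3, hs1.2.2.2.2, hC.1]
      split_ifs with h <;> simp [h]
    refine .ifI (fun h4 => ?_) fun h4 => ?_
    · rw [hch] at h4
      refine (he s1 m k t a C hs1 hC1).mono ?_
      rintro s' ⟨⟨h5, h5'⟩, h6, h7, h8⟩
      rw [hheap] at h6 h7
      have hins' : prog[C.label]? = some ins := by rw [h4, hins]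
      refine ⟨⟨fun r hr a b c => (h5 r hr a b c).trans (hidx r hr), h5'⟩, h6, ?_, ?_⟩
      · rw [h7, hidx 5 (by omega)]
        simp [okW, hins']
      · rw [stepW, hins', Option.elim_some]
        rw [hC.1] at hins'
        rw [symAt, symRun_succ_of_some hins']
        refine hC.stepIns (fun i => h6 _ fun h => ?_) h8 fun a _ => h6 _ fun h => ?_
        · have := time_envOf_symRun prog g (m + 1 + g0 (script k).1) m (choice k) t i
          unfold bnd symAt at h
          rw [h] at this
          simp at this
        · simp [Nat.pair_eq_pair] at h
    · rw [Ne, hch] at h4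
      refine (hd s1 m k t a C hs1 hC1 (by omega)).mono ?_
      rintro s' ⟨⟨h5, h5'⟩, h6, h7, h8⟩
      rw [hheap] at h6 h7 h8
      exact ⟨⟨fun r hr a b c => (h5 r hr a b c).trans (hidx r hr), h5'⟩, h6,
        by rw [h7, hidx 5 (by omega)], h8⟩

/-- The initial configuration of the run described by script `k`, with values taken from the
heap `h`. -/
def simInit (g0 : ℕ → ℕ) (h : ℕ → A.U) (m k : ℕ) : Config A :=
  ⟨0, fun j => if j = 1 then m + 1 else 1,
    fun i => h (if i < bnd g0 m k then Nat.pair 0 i else Nat.pair 0 m)⟩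

/-- The run described by script `k`, with all guessed values taken from the heap `h`. -/
noncomputable def simRun (prog : List (Instr A)) (g g0 : ℕ → ℕ) (h : ℕ → A.U) (m k t : ℕ) :
    Config A :=
  runW prog g (choice k) (fun t a => h (Nat.pair (t + 1) (a + 1))) (simInit g0 h m k) t

/-- Script `k` describes a legitimate halting run, with guessed values taken from the heap `h`. -/
def Accepts (prog : List (Instr A)) (D : A.U → Prop) (g g0 : ℕ → ℕ) (h : ℕ → A.U) (m k : ℕ) :
    Prop :=
  (∀ a < g0 (script k).1, D (h (Nat.pair 0 (m + 1 + a)))) ∧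
  (∀ t < (script k).2.length, okW prog D g (choice k t) (fun a => h (Nat.pair (t + 1) (a + 1)))
    (simRun prog g g0 h m k t)) ∧
  prog.length ≤ (simRun prog g g0 h m k (script k).2.length).label

/-- A state of the simulating machine still has the values of `h` in all cells that hold initial or
guessed values. -/
def HeapOK (S m : ℕ) (h : ℕ → A.U) (s : St A) : Prop :=
  ∀ p, (∀ t, p ≠ Nat.pair (t + 1) 0) → heapOf S m s p = h p

/-- A command that decides whether a script describes a legitimate halting run. -/
theorem exists_round (prog : List (Instr A)) {D : A.U → Prop} {g g0 : ℕ → ℕ} (hg : Primrec g)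
    (hg0 : Primrec g0) {S : ℕ} (hS1 : 1 ≤ S)
    (htest : ∃ d : Cmd A, ∀ s : St A, s.idx 8 = 1 → Ter d s fun s' => Keep S s s' ∧
      (s'.idx 5 = 1 ↔ s.idx 5 = 1 ∧ D (s.reg 1)))
    (hS : ∀ ins ∈ prog, (insArgs ins).length + 1 ≤ S) :
    ∃ d : Cmd A, ∀ (s : St A) (m k : ℕ) (h : ℕ → A.U), s.idx 1 = m + 1 → s.idx 2 = k + 1 →
      s.idx 8 = 1 → HeapOK S m h s →
      Ter d s fun s' => s'.idx 1 = m + 1 ∧ s'.idx 2 = k + 1 ∧ s'.idx 8 = 1 ∧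
        s'.idx 9 = s.idx 9 ∧ HeapOK S m h s' ∧ (s'.idx 5 = 1 ↔ Accepts prog D g g0 h m k) := by
  have hl0 : Primrec fun p : ℕ × ℕ × ℕ × ℕ => g0 (script p.2.1).1 :=
    hg0.comp (Primrec.fst.comp (primrec_script.comp primrec_k))
  obtain ⟨d₁, h₁⟩ := exists_digitLoop hS1 htest (n := fun _ k _ => g0 (script k).1)
    (q := fun m _ _ a => Nat.pair 0 (m + 1 + a)) hl0
    (Primrec₂.natPair.comp (.const 0) (Primrec.nat_add.comp (Primrec.succ.comp .fst) primrec_a))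
    (fun m _ _ a => by
      have := Nat.right_le_pair 0 (m + 1 + a)
      omega)
  obtain ⟨c₁, hc₁⟩ := exists_calc' (A := A) (f := fun _ k _ _ => (script k).2.length)
    (Primrec.list_length.comp (Primrec.snd.comp (primrec_script.comp primrec_k))) 6 (by omega)
  obtain ⟨d₂, h₂⟩ := exists_simStep prog hg hg0 htest hS prog.length
  obtain ⟨c₂, hc₂⟩ := exists_calc' (A := A)
    (f := fun m k t _ => if prog.length ≤ (symAt prog g g0 m k t).1 then 0 else 1)
    (Primrec.ite (Primrec.nat_le.comp (.const _) (Primrec.fst.comp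
      (primrec_symAt prog hg hg0 .fst primrec_k primrec_t))) (.const 0) (.const 1)) 10 (by omega)
  obtain ⟨e, he⟩ := exists_assert (A := A) 5 False
  refine ⟨.seq (.rst 3) (.seq (.rst 4) (.seq (.rst 5) (.seq d₁ (.seq c₁ (.seq
    (.whl 3 6 (.seq d₂ (.inc 3))) (.seq c₂ (.ifI 10 8 .skip e))))))),
    fun s m k h i1 i2 i8 hheap => .seq (.rst (.seq (.rst (.seq (.rst (.seq ?_))))))⟩
  refine (h₁ _ m k 0 0 ⟨by simpa, by simpa, by simp, by simp, by simpa⟩).mono ?_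
  rintro s1 ⟨⟨h1, h1'⟩, h2, h3⟩
  obtain ⟨a, ha⟩ : ∃ a, s1.idx 4 = a + 1 := ⟨s1.idx 4 - 1, by omega⟩
  have hs1 : Ctl m k 0 a s1 := by
    refine ⟨?_, ?_, ?_, ha, ?_⟩
    · rw [h1 1 (by omega) (by omega) (by omega) (by omega)]; simpa
    · rw [h1 2 (by omega) (by omega) (by omega) (by omega)]; simpa
    · rw [h1 3 (by omega) (by omega) (by omega) (by omega)]; simp
    · rw [h1 8 (by omega) (by omega) (by omega) (by omega)]; simpa
  have h9 : s1.idx 9 = s.idx 9 := by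
    rw [h1 9 (by omega) (by omega) (by omega) (by omega)]
    simp
  have hpair : ∀ i t, Nat.pair 0 i ≠ Nat.pair (t + 1) 0 := fun i t h => by
    simp [Nat.pair_eq_pair] at h
  have hheap1 : HeapOK S m h s1 := fun p hp => (h2 p).trans (hheap p hp)
  have h5 : s1.idx 5 = 1 ↔ ∀ a < g0 (script k).1, D (h (Nat.pair 0 (m + 1 + a))) := by
    rw [h3]
    simp only [Function.update_self, true_and]
    refine forall₂_congr fun a _ => ?_
    rw [← hheap _ (hpair _)]
    rfl
  clear h1 h2 h3
  refine .seq ((hc₁ s1 m k 0 a hs1).mono ?_)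
  rintro s2 ⟨⟨h1, h2⟩, h3⟩
  have hidx : ∀ r < 10, r ≠ 6 → s2.idx r = s1.idx r := fun r hr hr6 => h2 r (by omega) hr6
  refine .seq ((Ter.count (script k).2.length (fun t s' => s'.idx 6 = (script k).2.length + 1 ∧
    s'.idx 9 = s.idx 9 ∧ (∃ a, Ctl m k t a s') ∧ HeapOK S m h s' ∧
    Corr (heapOf S m s') (bnd g0 m k) m (symAt prog g g0 m k t) (simRun prog g g0 h m k t) ∧
    (s'.idx 5 = 1 ↔ (∀ a < g0 (script k).1, D (h (Nat.pair 0 (m + 1 + a)))) ∧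
      ∀ u < t, okW prog D g (choice k u) (fun a => h (Nat.pair (u + 1) (a + 1)))
        (simRun prog g g0 h m k u))) ?_ ?_ (Nat.zero_le _)
    ⟨h3, (hidx 9 (by omega) (by omega)).trans h9, ⟨a, ?_⟩, fun p hp => ?_, ⟨rfl, fun j => ?_,
      fun i => ?_⟩, ?_⟩).mono ?_)
  · rintro t s' ⟨h4, -, ⟨a, ha⟩, -⟩
    rw [h4, ha.2.2.1]
    omega
  · rintro t s3 ht ⟨i6, i9, ⟨a, i⟩, j1, j2, j3⟩
    have hY : (fun a => heapOf S m s3 (Nat.pair (t + 1) (a + 1))) =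
        fun a => h (Nat.pair (t + 1) (a + 1)) := by
      funext a
      exact j1 _ fun u hu => by simp [Nat.pair_eq_pair] at hu
    refine .seq ((h₂ s3 m k t a _ i j2 (by omega)).mono ?_)
    rintro s4 ⟨⟨k1, k1'⟩, k2, k3, k4⟩
    rw [hY] at k3 k4
    obtain ⟨i1, i2, i3, -, i8⟩ := i
    have kk : ∀ r < 10, r ≠ 3 → r ≠ 4 → r ≠ 5 → r ≠ 7 →
        Function.update s4.idx 3 (s4.idx 3 + 1) r = s3.idx r := fun r hr a b c d => by
      rw [Function.update_of_ne a, k1 r hr b c d]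
    refine .inc ⟨?_, ?_, ⟨s4.idx 4 - 1, ?_, ?_, ?_, ?_, ?_⟩, fun p hp => ?_, k4, ?_⟩
    · exact (kk 6 (by omega) (by omega) (by omega) (by omega) (by omega)).trans i6
    · exact (kk 9 (by omega) (by omega) (by omega) (by omega) (by omega)).trans i9
    · exact (kk 1 (by omega) (by omega) (by omega) (by omega) (by omega)).trans i1
    · exact (kk 2 (by omega) (by omega) (by omega) (by omega) (by omega)).trans i2
    · simp [k1 3 (by omega) (by omega) (by omega) (by omega), i3]
    · simp only [Function.update_of_ne (show 4 ≠ 3 by omega)]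
      omega
    · exact (kk 8 (by omega) (by omega) (by omega) (by omega) (by omega)).trans i8
    · exact (k2 p (hp t)).trans (j1 p hp)
    · simp only [Function.update_of_ne (show 5 ≠ 3 by omega)]
      rw [k3, j3, and_assoc]
      refine and_congr_right fun _ => ⟨fun h u hu => ?_, fun h =>
        ⟨fun u hu => h u (by omega), h t (by omega)⟩⟩
      rcases Nat.lt_succ_iff_lt_or_eq.1 hu with hu | rfl
      · exact h.1 u hu
      · exact h.2
  · obtain ⟨i1, i2, i3, i4, i8⟩ := hs1
    exact ⟨by rw [hidx 1 (by omega) (by omega), i1], by rw [hidx 2 (by omega) (by omega), i2],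
      by rw [hidx 3 (by omega) (by omega), i3], by rw [hidx 4 (by omega) (by omega), i4],
      by rw [hidx 8 (by omega) (by omega), i8]⟩
  · rw [← hheap1 p hp]
    simp only [heapOf, h1]
  · by_cases hj : j = 1
    · simp [simRun, runW, simInit, symAt, symRun, idxOf, hj]
    · simp [simRun, runW, simInit, symAt, symRun, idxOf, hj, Ne.symm hj]
  · have : ∀ i, heapOf S m s2 (Nat.pair 0 i) = h (Nat.pair 0 i) := fun i => by
      rw [← hheap1 _ (hpair i)]
      simp only [heapOf, h1]
    simp only [simRun, runW, simInit, symAt, symRun, envOf, lk_nil]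
    split_ifs <;> rw [this]
  · rw [hidx 5 (by omega) (by omega), h5]
    simp
  · rintro s3 ⟨i6, i9, ⟨a, i⟩, j1, j2, j3⟩
    refine .seq ((hc₂ s3 m k _ a i).mono ?_)
    rintro s4 ⟨⟨k1, k2⟩, k3⟩
    have kk : ∀ r < 10, s4.idx r = s3.idx r := fun r hr => k2 r (by omega) (by omega)
    have i' := i.congr kk
    have hch : s4.idx 10 = s4.idx 8 ↔
        prog.length ≤ (simRun prog g g0 h m k (script k).2.length).label := by
      rw [k3, i'.2.2.2.2, j2.1]
      split_ifs with h <;> simp [h]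
    have hheap4 : HeapOK S m h s4 := fun p hp => by
      rw [← j1 p hp]
      simp only [heapOf, k1]
    have i9' : s4.idx 9 = s.idx 9 := (kk 9 (by omega)).trans i9
    refine .ifI (fun hy => .skip ?_) fun hy => (he s4).mono ?_
    · rw [hch] at hy
      refine ⟨i'.1, i'.2.1, i'.2.2.2.2, i9', hheap4, ?_⟩
      rw [kk 5 (by omega), j3, Accepts]
      simp only [hy, and_true]
    · rw [Ne, hch] at hy
      rintro s5 ⟨l1, l2, l3⟩
      refine ⟨by rw [l1 1 (by omega), i'.1], by rw [l1 2 (by omega), i'.2.1],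
        by rw [l1 8 (by omega), i'.2.2.2.2], by rw [l1 9 (by omega), i9'], fun p hp => ?_, ?_⟩
      · rw [← hheap4 p hp]
        simp only [heapOf, l2]
      · rw [l3, Accepts]
        simp only [hy, and_false]

end simulateStep

/-! ### The simulating machine -/

section machine
variable {A : FOStruct}

/-- The `Z`-register that initially holds the value of the pointer `p`.  The registers below
`m + S + 2` have to be moved away because of the workspace; all other values stay in place. -/
def oaddr (S m p : ℕ) : ℕ :=
  if p.unpair.1 = 0 ∧ p.unpair.2 < m + S + 2 then p.unpair.2 else m + S + 2 + p

theorem oaddr_inj {S m p q : ℕ} (h : oaddr S m p = oaddr S m q) : p = q := by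
  unfold oaddr at h
  split_ifs at h with h1 h2 h2
  · rw [← Nat.pair_unpair p, ← Nat.pair_unpair q, h1.1, h2.1, h]
  all_goals omega

/-- A command that moves the initial registers into the cells of their pointers. -/
theorem exists_prologue (S : ℕ) : ∃ d : Cmd A, ∀ (s : St A) (m : ℕ), s.idx 1 = m + 1 →
    (∀ r, r ≠ 1 → s.idx r = 1) → Ter d s fun s' => s'.idx 1 = m + 1 ∧ s'.idx 2 = 1 ∧
      s'.idx 8 = 1 ∧ s'.idx 9 = 1 ∧ HeapOK S m (fun p => s.reg (oaddr S m p)) s' := by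
  obtain ⟨c₁, hc₁⟩ := exists_calc' (A := A) (f := fun m _ _ _ => m + S + 1)
    (Primrec.nat_add.comp (Primrec.nat_add.comp .fst (.const S)) (.const 1)) 6 (by omega)
  obtain ⟨c₂, hc₂⟩ := exists_calc' (A := A) (f := fun m _ t _ => m + S + 1 + Nat.pair 0 (t + 1))
    (primrec_addr S .fst (Primrec₂.natPair.comp (.const 0) (Primrec.succ.comp primrec_t))) 10
    (by omega)
  refine ⟨.seq c₁ (.whl 3 6 (.seq c₂ (.seq (.cpy 10 3) (.inc 3)))), fun s m i1 ir =>
    .seq ((hc₁ s m 0 0 0 ⟨i1, ir 2 (by omega), ir 3 (by omega), ir 4 (by omega),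
      ir 8 (by omega)⟩).mono ?_)⟩
  rintro s1 ⟨⟨h1, h2⟩, h3⟩
  have hne : ∀ i, Nat.pair 0 (i + 1) ≠ 0 := fun i h => by
    have := Nat.right_le_pair 0 (i + 1)
    omega
  refine (Ter.count (m + S + 1) (fun t s' => s'.idx 6 = m + S + 2 ∧ s'.idx 9 = 1 ∧
    Ctl m 0 t 0 s' ∧ (∀ i < t, s'.reg (cell S m (Nat.pair 0 (i + 1))) = s.reg (i + 1)) ∧
    ∀ x, (∀ i < t, x ≠ cell S m (Nat.pair 0 (i + 1))) → s'.reg x = s.reg x) ?_ ?_ (Nat.zero_le _)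
    ⟨h3, ?_, ⟨?_, ?_, ?_, ?_, ?_⟩, fun i hi => by omega, fun x _ => by rw [h1]⟩).mono ?_
  · rintro t s' ⟨h4, -, h5, -⟩
    rw [h4, h5.2.2.1]
    omega
  · rintro t s2 ht ⟨i6, i9, i, j1, j2⟩
    refine .seq ((hc₂ s2 m 0 t 0 i).mono ?_)
    rintro s3 ⟨⟨k1, k2⟩, k3⟩
    have i' := i.congr fun r hr => k2 r (by omega) (by omega)
    refine .seq (.cpy (.inc ?_))
    rw [← cell_of_ne (hne t)] at k3
    simp only [k3, i'.2.2.1, k1]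
    -- the register that is copied has not been overwritten before
    have hsrc : s2.reg (t + 1) = s.reg (t + 1) := j2 _ fun i _ => by
      rw [cell_of_ne (hne i)]
      omega
    refine ⟨?_, ?_, ⟨?_, ?_, ?_, ?_, ?_⟩, fun i hi => ?_, fun x hx => ?_⟩
    · simp [k2 6, i6]
    · simp [k2 9, i9]
    · simp [i'.1]
    · simp [i'.2.1]
    · simp
    · simp [i'.2.2.2.1]
    · simp [i'.2.2.2.2]
    · rcases Nat.lt_succ_iff_lt_or_eq.1 hi with hi | rfl
      · rw [Function.update_of_ne, j1 i hi]
        intro h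
        have := cell_inj h
        simp [Nat.pair_eq_pair] at this
        omega
      · simp [hsrc]
    · rw [Function.update_of_ne (hx t (by omega)), j2 x fun i hi => hx i (by omega)]
  · rw [h2 9 (by omega) (by omega), ir 9 (by omega)]
  · rw [h2 1 (by omega) (by omega), i1]
  · rw [h2 2 (by omega) (by omega), ir 2 (by omega)]
  · rw [h2 3 (by omega) (by omega), ir 3 (by omega)]
  · rw [h2 4 (by omega) (by omega), ir 4 (by omega)]
  · rw [h2 8 (by omega) (by omega), ir 8 (by omega)]
  · rintro s' ⟨-, i9, i, j1, j2⟩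
    refine ⟨i.1, i.2.1, i.2.2.2.2, i9, fun p _ => ?_⟩
    by_cases hp : p.unpair.1 = 0 ∧ p.unpair.2 < m + S + 2
    · obtain ⟨a, rfl⟩ : ∃ a, p = Nat.pair 0 a := ⟨p.unpair.2, by rw [← hp.1, Nat.pair_unpair]⟩
      rw [Nat.unpair_pair] at hp
      rcases a with _ | a
      · rw [show Nat.pair 0 0 = 0 from rfl, heapOf]
        rw [j2 _ fun i _ h => hne i (cell_inj h).symm]
        simp [cell, oaddr]
      · rw [heapOf, j1 a (by simp at hp; omega)]
        simp only [oaddr, Nat.unpair_pair, true_and]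
        rw [if_pos hp.2]
    · have hp0 : p ≠ 0 := by
        rintro rfl
        simp at hp
      rw [heapOf, j2 _ fun i hi h => hp ?_]
      · simp only [oaddr, hp, if_false, cell, if_neg hp0]
      · rw [cell_inj h, Nat.unpair_pair]
        simp only [true_and]
        omega

theorem St.at_label (s : St A) (l : ℕ) : (s.at l).label = l := rfl

/-- A deterministic machine that searches for an accepted script. -/
theorem exists_search (prog : List (Instr A)) {D : A.U → Prop} {g g0 : ℕ → ℕ} (hg : Primrec g)
    (hg0 : Primrec g0) {S : ℕ} (hS1 : 1 ≤ S)
    (htest : ∃ d : Cmd A, ∀ s : St A, s.idx 8 = 1 → Ter d s fun s' => Keep S s s' ∧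
      (s'.idx 5 = 1 ↔ s.idx 5 = 1 ∧ D (s.reg 1)))
    (hS : ∀ ins ∈ prog, (insArgs ins).length + 1 ≤ S) :
    ∃ M : Machine A, M.Det ∧ ∀ (s : St A) (m : ℕ), s.idx 1 = m + 1 →
      (∀ r, r ≠ 1 → s.idx r = 1) →
      (HaltsFrom M (s.at 0) ↔ ∃ k, Accepts prog D g g0 (fun p => s.reg (oaddr S m p)) m k) := by
  obtain ⟨pre, hpre⟩ := exists_prologue (A := A) S
  obtain ⟨rd, hrd⟩ := exists_round prog hg hg0 hS1 htest hS
  set body : Cmd A := .seq rd (.ifI 5 8 (.rst 9) (.inc 2)) with hbody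
  set start : Cmd A := .seq pre (.inc 9) with hstart
  refine ⟨⟨(Cmd.seq start (.whl 9 8 body)).code 0, ∅⟩, Cmd.isDet_code _ _, fun s m i1 ir => ?_⟩
  set M : Machine A := ⟨(Cmd.seq start (.whl 9 8 body)).code 0, ∅⟩ with hM
  have hdet : M.Det := Cmd.isDet_code _ _
  set h : ℕ → A.U := fun p => s.reg (oaddr S m p) with hh
  have hlen : M.prog.length = (Cmd.seq start (.whl 9 8 body)).len := Cmd.length_code _ _
  have hcode : CodeAt M.prog 0 ((Cmd.seq start (.whl 9 8 body)).code 0) := fun i _ => by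
    rw [Nat.zero_add]
  -- the loop invariant: script `k` is examined next
  let Inv : ℕ → St A → Prop := fun k s' => s'.idx 1 = m + 1 ∧ s'.idx 2 = k + 1 ∧ s'.idx 8 = 1 ∧
    s'.idx 9 = 2 ∧ HeapOK S m h s'
  have hbegin : Ter start s (Inv 0) := .seq ((hpre s m i1 ir).mono fun s' hs' => by
    obtain ⟨h1, h2, h3, h4, h5⟩ := hs'
    exact .inc ⟨by simp [h1], by simp [h2], by simp [h3], by simp [h4], h5⟩)
  have hround : ∀ k s', Inv k s' → Ter body s' fun t =>
      (Accepts prog D g g0 h m k → t.idx 9 = t.idx 8) ∧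
      (¬ Accepts prog D g g0 h m k → Inv (k + 1) t) := by
    rintro k s' ⟨h1, h2, h3, h4, h5⟩
    refine .seq ((hrd s' m k h h1 h2 h3 h5).mono ?_)
    rintro t ⟨j1, j2, j3, j4, j5, j6⟩
    refine .ifI (fun e => .rst ?_) fun e => .inc ?_
    · rw [j3, j6] at e
      exact ⟨fun _ => by simp [j3], fun hn => (hn e).elim⟩
    · rw [j3, Ne, j6] at e
      exact ⟨fun hp => (e hp).elim, fun _ => ⟨by simp [j1], by simp [j2], by simp [j3],
        by simp [j4, h4], j5⟩⟩
  have hInv : ∀ k s', Inv k s' → s'.idx 9 ≠ s'.idx 8 := by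
    rintro k s' ⟨-, -, h3, h4, -⟩
    omega
  constructor
  · rintro ⟨z, hz, hhalt⟩
    by_contra! hno
    obtain ⟨h1, h2⟩ := CodeAt.append hcode
    rw [Cmd.length_code] at h2
    obtain ⟨h3, h4⟩ := CodeAt.append h2
    obtain ⟨h5, h6⟩ := CodeAt.append h4
    simp only [Cmd.length_code, List.length_singleton] at h3 h5 h6
    -- the start of the loop is visited again and again
    refine no_halt_of_recurrent (r := NStep M) (fun a b c => NStep.unique hdet)
      {c | c = s.at 0 ∨ ∃ k s', Inv k s' ∧ c = s'.at (0 + start.len)} ?_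
      (Or.inl rfl) hz fun b hb => ?_
    · have hloop : ∀ k s', Inv k s' → ∃ b, (∃ k s', Inv k s' ∧ b = s'.at (0 + start.len)) ∧
          Relation.TransGen (NStep M) (s'.at (0 + start.len)) b := by
        intro k s' hs'
        obtain ⟨t, ht, -, ht'⟩ := hround k s' hs'
        refine ⟨_, ⟨k + 1, t, ht' (hno k), rfl⟩, ?_⟩
        have e1 := step_branchIdx s' h3.single
        rw [if_neg (hInv k s' hs')] at e1
        have e3 := step_branchIdx t h6.single
        rw [if_pos rfl] at e3
        exact .tail' ((Relation.ReflTransGen.single e1).trans (ht.reaches _ h5)) e3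
      rintro c (rfl | ⟨k, s', hs', rfl⟩)
      · obtain ⟨t, ht, ht'⟩ := hbegin
        obtain ⟨b, hb, hb'⟩ := hloop 0 t ht'
        exact ⟨b, Or.inr hb, Relation.TransGen.trans_right (ht.reaches 0 h1) hb'⟩
      · obtain ⟨b, hb, hb'⟩ := hloop k s' hs'
        exact ⟨b, Or.inr hb, hb'⟩
    · obtain ⟨ins, hins, -⟩ := hb
      rw [List.getElem?_eq_none hhalt] at hins
      cases hins
  · rintro ⟨k₀, hk₀⟩
    have hwhl : ∀ n k s', k + n = k₀ → Inv k s' → Ter (.whl 9 8 body) s' fun _ => True := by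
      intro n
      induction n with
      | zero =>
        rintro k s' rfl hs'
        obtain ⟨t, ht, ht', -⟩ := hround k s' hs'
        exact ⟨t, .whl_step (hInv k s' hs') ht (.whl_exit (ht' hk₀)), trivial⟩
      | succ n ih =>
        intro k s' hk hs'
        obtain ⟨t, ht, ht', ht''⟩ := hround k s' hs'
        by_cases hacc : Accepts prog D g g0 h m k
        · exact ⟨t, .whl_step (hInv k s' hs') ht (.whl_exit (ht' hacc)), trivial⟩
        · obtain ⟨u, hu, -⟩ := ih (k + 1) t (by omega) (ht'' hacc)
          exact ⟨u, .whl_step (hInv k s' hs') ht hu, trivial⟩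
    obtain ⟨t, ht, ht'⟩ := hbegin
    obtain ⟨u, hu, -⟩ := hwhl k₀ 0 t (by omega) ht'
    refine ⟨_, (Cmd.Exec.seq ht hu).reaches 0 hcode, ?_⟩
    rw [Halted, hlen, St.at_label, Nat.zero_add]

end machine

/-! ### Replacing guesses during the run by an initial digital guess -/

section transfer
variable {A : FOStruct}

/-- The initial configuration for the input `x` and a possibly empty list `l` of guesses. -/
def initCfg (x : Tup A) (l : List A.U) : Config A :=
  ⟨0, fun j => if j = 1 then x.1.length else 1, fun i => (x.1 ++ l).getD i (x.1.getLast x.2)⟩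

theorem inputConfig_eq (x : Tup A) : inputConfig A x = initCfg x [] := by
  simp [inputConfig, initCfg]

theorem inputConfigG_eq (x y : Tup A) : inputConfigG A x y = initCfg x y.1 := rfl

theorem oaddr_zero {S m i : ℕ} (hi : i < m + S + 2) : oaddr S m (Nat.pair 0 i) = i := by
  simp [oaddr, hi]

theorem le_oaddr_zero {S m i : ℕ} (hi : m + 1 ≤ i) : m + 1 ≤ oaddr S m (Nat.pair 0 i) := by
  unfold oaddr
  split_ifs
  · simpa using hi
  · omega

theorem le_oaddr_succ {S m t a : ℕ} : m + 1 ≤ oaddr S m (Nat.pair (t + 1) a) := by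
  unfold oaddr
  simp only [Nat.unpair_pair, Nat.succ_ne_zero, false_and, if_false]
  omega

/-- The simulated run starts in the initial configuration given by the guesses on the heap. -/
theorem simInit_eq {g0 : ℕ → ℕ} {h : ℕ → A.U} {m k : ℕ} (x : Tup A) (l : List A.U)
    (hm : x.1.length = m + 1) (hl : l.length = g0 (script k).1)
    (hx : ∀ i < m + 1, h (Nat.pair 0 i) = x.1.getD i (x.1.getLast x.2))
    (hy : ∀ a < l.length, h (Nat.pair 0 (m + 1 + a)) = l.getD a (x.1.getLast x.2)) :
    simInit g0 h m k = initCfg x l := by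
  unfold simInit initCfg bnd
  rw [hm, ← hl]
  congr 1
  funext i
  by_cases h1 : i < m + 1 + l.length
  · rw [if_pos h1]
    by_cases h2 : i < m + 1
    · rw [hx i h2, List.getD_append _ _ _ _ (by omega)]
    · obtain ⟨a, rfl⟩ := Nat.exists_eq_add_of_le (not_lt.1 h2)
      rw [hy a (by omega), List.getD_append_right _ _ _ _ (by omega), hm, Nat.add_sub_cancel_left]
  · rw [if_neg h1, hx m (by omega), List.getD_eq_default (x.1 ++ l) _ (by simp; omega),
      List.getD_eq_getElem _ _ (by omega), List.getLast_eq_getElem]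
    congr 1
    omega

/-- A machine whose halting computations are described by choices and digital guesses can be
replaced by a deterministic machine that obtains all guesses from one initial digital guess.  The
original machine may also use guesses in its input, whose numbers range over the values of `g0`.
Every guess of the new machine leads to sound acceptance, whether or not it is digital. -/
theorem exists_guess_machine {c₁ c₂ : A.U} (hcc : constPair A c₁ c₂ ∈ SDEC A) {M : Machine A}
    {g g0 : ℕ → ℕ} (hg : Primrec g) (hg0 : Primrec g0)
    (hM : ∀ C, HaltsFrom M C ↔ ∃ T c Y,
      (∀ t < T, okW M.prog (fun u => u = c₁ ∨ u = c₂) g (c t) (Y t) (runW M.prog g c Y C t)) ∧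
      M.prog.length ≤ (runW M.prog g c Y C T).label) :
    ∃ M' : Machine A, M'.Det ∧ ∀ x : Tup A,
      (∀ y : Tup A, HaltsFrom M' (inputConfigG A x y) → ∃ l : List A.U,
        (∃ c, l.length = g0 c) ∧ (∀ u ∈ l, u = c₁ ∨ u = c₂) ∧ HaltsFrom M (initCfg x l)) ∧
      (∀ l : List A.U, (∃ c, l.length = g0 c) → (∀ u ∈ l, u = c₁ ∨ u = c₂) →
        HaltsFrom M (initCfg x l) →
        ∃ y : Tup A, Digital c₁ c₂ y ∧ HaltsFrom M' (inputConfigG A x y)) := by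
  classical
  set D : A.U → Prop := fun u => u = c₁ ∨ u = c₂ with hD
  have hD1 : D c₁ := Or.inl rfl
  obtain ⟨S0, hS0⟩ := exists_digitTest hcc
  set S := S0 + 1 + (M.prog.map fun ins => (insArgs ins).length + 1).sum with hS
  obtain ⟨M', hdet, hM'⟩ := exists_search M.prog (D := D) hg hg0 (S := S) (by omega)
    (hS0 S (by omega)) fun ins hins => by
      have := List.single_le_sum (l := M.prog.map fun ins => (insArgs ins).length + 1)
        (fun _ _ => Nat.zero_le _) _ (List.mem_map_of_mem hins)
      omega
  refine ⟨M', hdet, fun x => ?_⟩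
  obtain ⟨m, hm⟩ : ∃ m, x.1.length = m + 1 :=
    ⟨x.1.length - 1, by have := List.length_pos_iff.2 x.2; omega⟩
  have hiff : ∀ y : Tup A, HaltsFrom M' (inputConfigG A x y) ↔ ∃ k, Accepts M.prog D g g0
      (fun p => (x.1 ++ y.1).getD (oaddr S m p) (x.1.getLast x.2)) m k := fun y =>
    hM' ⟨(inputConfigG A x y).idx, (inputConfigG A x y).reg⟩ m (by simp [inputConfigG, hm])
      fun r hr => by simp [inputConfigG, hr]
  have hinit : ∀ (y : Tup A), ∀ i < m + 1, (x.1 ++ y.1).getD (oaddr S m (Nat.pair 0 i))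
      (x.1.getLast x.2) = x.1.getD i (x.1.getLast x.2) := fun y i hi => by
    rw [oaddr_zero (by omega), List.getD_append _ _ _ _ (by omega)]
  refine ⟨fun y hy => ?_, fun l hl hlD hhalt => ?_⟩
  · obtain ⟨k, h1, h2, h3⟩ := (hiff y).1 hy
    set h : ℕ → A.U := fun p => (x.1 ++ y.1).getD (oaddr S m p) (x.1.getLast x.2) with hh
    refine ⟨(List.range (g0 (script k).1)).map fun a => h (Nat.pair 0 (m + 1 + a)),
      ⟨(script k).1, by simp⟩, fun u hu => ?_, ?_⟩
    · obtain ⟨a, ha, rfl⟩ := List.mem_map.1 hu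
      exact h1 a (List.mem_range.1 ha)
    · rw [← simInit_eq (g0 := g0) (h := h) (k := k) x _ hm (by simp) (hinit y) fun a ha => by
        simp only [List.length_map, List.length_range] at ha
        simp [ha]]
      exact (hM _).2 ⟨_, _, _, h2, h3⟩
  · obtain ⟨c0, hc0⟩ := hl
    obtain ⟨T, c, Y, hok, hend⟩ := (hM _).1 hhalt
    set k := Encodable.encode (c0, (List.range T).map c) with hk
    have hsk : script k = (c0, (List.range T).map c) := Denumerable.ofNat_encode _
    have hch : ∀ t < T, c t = choice k t := fun t ht => by simp [choice, hsk, ht]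
    have hT : (script k).2.length = T := by simp [hsk]
    let Y' : ℕ → ℕ → A.U := fun t a => if D (Y t a) then Y t a else c₁
    have hY' : ∀ t a, D (Y t a) → Y' t a = Y t a := fun t a h => if_pos h
    have hY'D : ∀ t a, D (Y' t a) := fun t a => by
      by_cases h : D (Y t a) <;> simp only [Y', h, if_true, if_false, hD1]
    -- the value that the guess has to provide for each pointer
    let val : ℕ → A.U := fun p =>
      if p.unpair.1 = 0 then l.getD (p.unpair.2 - (m + 1)) c₁
      else Y' (p.unpair.1 - 1) (p.unpair.2 - 1)
    have hvalD : ∀ p, D (val p) := fun p => by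
      by_cases h : p.unpair.1 = 0
      · simp only [val, h, if_true]
        by_cases h2 : p.unpair.2 - (m + 1) < l.length
        · rw [List.getD_eq_getElem _ _ h2]
          exact hlD _ (List.getElem_mem _)
        · rw [List.getD_eq_default _ _ (by omega)]
          exact hD1
      · simp only [val, h, if_false]
        exact hY'D _ _
    let V : ℕ → A.U := Function.extend (oaddr S m) val fun _ => c₁
    have hVo : ∀ p, V (oaddr S m p) = val p := fun p =>
      Function.Injective.extend_apply (fun _ _ => oaddr_inj) _ _ _
    have hVD : ∀ a, D (V a) := fun a => by
      by_cases h : ∃ p, oaddr S m p = a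
      · obtain ⟨p, rfl⟩ := h
        rw [hVo]
        exact hvalD p
      · rw [show V a = c₁ from Function.extend_apply' _ _ _ h]
        exact hD1
    -- a bound for the registers from which the run takes guessed values
    set L := (Finset.range l.length).sup (fun a => oaddr S m (Nat.pair 0 (m + 1 + a))) +
      (Finset.range T).sup (fun t => (Finset.range (g (c t))).sup
        fun a => oaddr S m (Nat.pair (t + 1) (a + 1))) with hL
    let y : Tup A := ⟨(List.range (L + 1)).map fun j => V (m + 1 + j), by simp⟩
    refine ⟨y, fun u hu => ?_, (hiff y).2 ⟨k, ?_⟩⟩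
    · obtain ⟨j, -, rfl⟩ := List.mem_map.1 hu
      exact hVD _
    set h : ℕ → A.U := fun p => (x.1 ++ y.1).getD (oaddr S m p) (x.1.getLast x.2) with hh
    have hval : ∀ p, m + 1 ≤ oaddr S m p → oaddr S m p ≤ L → h p = val p := fun p h1 h2 => by
      rw [hh, ← hVo]
      simp only
      rw [List.getD_append_right _ _ _ _ (by omega), List.getD_eq_getElem _ _ (by simp [y]; omega)]
      simp only [y, List.getElem_map, List.getElem_range]
      congr 1
      omega
    have hval0 : ∀ a < l.length, h (Nat.pair 0 (m + 1 + a)) = l.getD a c₁ := fun a ha => by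
      rw [hval _ (le_oaddr_zero (by omega))]
      · simp [val]
      · have := Finset.le_sup (f := fun a => oaddr S m (Nat.pair 0 (m + 1 + a)))
          (Finset.mem_range.2 ha)
        omega
    have hval1 : ∀ t < T, ∀ a < g (c t), Y' t a = h (Nat.pair (t + 1) (a + 1)) :=
      fun t ht a ha => by
      rw [hval _ le_oaddr_succ]
      · simp [val]
      · have h1 := Finset.le_sup (f := fun a => oaddr S m (Nat.pair (t + 1) (a + 1)))
          (Finset.mem_range.2 ha)
        have h2 := Finset.le_sup (f := fun t => (Finset.range (g (c t))).sup
          fun a => oaddr S m (Nat.pair (t + 1) (a + 1))) (Finset.mem_range.2 ht)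
        omega
    have hsim : simInit g0 h m k = initCfg x l :=
      simInit_eq x l hm (by rw [hc0, hsk]) (hinit y) fun a ha => by
        rw [hval0 a ha, List.getD_eq_getElem _ _ ha, List.getD_eq_getElem _ _ ha]
    have hrun : ∀ t ≤ T, simRun M.prog g g0 h m k t = runW M.prog g c Y (initCfg x l) t := by
      intro t ht
      rw [simRun, hsim, ← runW_fix M.prog D g c (initCfg x l) hY' t fun u hu => hok u (by omega)]
      exact (runW_congr _ _ _ _ _ _ _ _ (fun u hu => hch u (by omega))
        fun u hu => hval1 u (by omega)).symm
    refine ⟨fun a ha => ?_, fun t ht => ?_, ?_⟩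
    · simp only [hsk, ← hc0] at ha
      show D (h _)
      rw [hval0 a (by omega), List.getD_eq_getElem _ _ (by omega)]
      exact hlD _ (List.getElem_mem _)
    · rw [hT] at ht
      rw [hrun t ht.le, ← hch t ht]
      exact okW_congr _ _ _ _ _ (hval1 t ht) (okW_fix _ _ _ _ _ (hY' t) (hok t ht)).2
    · rw [hT, hrun T le_rfl]
      exact hend

theorem mem_binTups_iff {c₁ c₂ : A.U} (y : Tup A) : y ∈ binTups A c₁ c₂ ↔
    (∃ c, y.1.length = c + 1) ∧ ∀ u ∈ y.1, u = c₁ ∨ u = c₂ :=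
  ⟨fun h => ⟨⟨y.1.length - 1, by have := List.length_pos_iff.2 y.2; omega⟩, h⟩, fun h => h.2⟩

theorem mem_pairTups_iff {c₁ c₂ : A.U} (y : Tup A) : y ∈ pairTups A c₁ c₂ ↔
    (∃ _ : ℕ, y.1.length = 2) ∧ ∀ u ∈ y.1, u = c₁ ∨ u = c₂ := by
  constructor
  · rintro ⟨u, v, hu, hv, h⟩
    rw [h]
    exact ⟨⟨0, rfl⟩, by simp [hu, hv]⟩
  · rintro ⟨⟨-, h1⟩, h2⟩
    obtain ⟨u, v, h⟩ := List.length_eq_two.1 h1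
    rw [h] at h2
    exact ⟨u, v, h2 u (by simp), h2 v (by simp), h⟩

theorem sdec_subset_sdecnu (Q : Set (Tup A)) {P : Set (Tup A)} (hP : P ∈ SDEC A) :
    P ∈ SDECnu A Q := by
  obtain ⟨⟨p, O⟩, hM, hP⟩ := hP
  refine ⟨⟨p, Q⟩, ⟨fun ins h => ?_, rfl⟩, fun x => (hP x).trans
    ⟨haltsFrom_oracle hM _, haltsFrom_oracle hM _⟩⟩
  have := hM ins h
  cases ins <;> trivial

theorem sdecnu_subset_sdecdnd {c₁ c₂ : A.U} (hcc : constPair A c₁ c₂ ∈ SDEC A) {Q P : Set (Tup A)}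
    (hQ : Q = binTups A c₁ c₂ ∨ Q = pairTups A c₁ c₂) (hP : P ∈ SDECnu A Q) :
    P ∈ SDECdnd A c₁ c₂ := by
  have : Nonempty A.U := ⟨c₁⟩
  obtain ⟨M, ⟨hor, hMQ⟩, hP⟩ := hP
  obtain ⟨g, hg, hg0, hQg⟩ : ∃ g : ℕ → ℕ, Primrec g ∧ (∀ c, g c ≠ 0) ∧ ∀ y : Tup A,
      y ∈ M.oracle ↔ (∃ c, y.1.length = g c) ∧ ∀ u ∈ y.1, u = c₁ ∨ u = c₂ := by
    rw [hMQ]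
    rcases hQ with rfl | rfl
    · exact ⟨Nat.succ, Primrec.succ, fun _ => Nat.succ_ne_zero _, mem_binTups_iff⟩
    · exact ⟨fun _ => 2, .const 2, fun _ => two_ne_zero, mem_pairTups_iff⟩
  -- the input of a `ν`-machine contains no guesses
  obtain ⟨M', hdet, hM'⟩ := exists_guess_machine hcc hg (g0 := fun _ => 0) (.const 0)
    (haltsFrom_iff hor hQg fun _ _ => .inr hg0)
  refine ⟨M', hdet, fun x => ?_⟩
  rw [hP x, inputConfig_eq]
  refine ⟨fun h => (hM' x).2 [] ⟨0, rfl⟩ (by simp) h, ?_⟩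
  rintro ⟨y, -, h⟩
  obtain ⟨l, ⟨_, hl⟩, -, h⟩ := (hM' x).1 y h
  rwa [List.length_eq_zero_iff.1 hl] at h

theorem sdecdnd_subset_sdecnd {c₁ c₂ : A.U} (hcc : constPair A c₁ c₂ ∈ SDEC A) {P : Set (Tup A)}
    (hP : P ∈ SDECdnd A c₁ c₂) : P ∈ SDECnd A := by
  have : Nonempty A.U := ⟨c₁⟩
  obtain ⟨M, hdet, hP⟩ := hP
  -- there are no guesses during the run, but the input contains a nonempty guessed tuple
  obtain ⟨M', hdet', hM'⟩ := exists_guess_machine hcc (g := fun _ => 0) (.const 0)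
    (g0 := Nat.succ) Primrec.succ (haltsFrom_iff_of_det _ hdet)
  refine ⟨M', hdet', fun x => ?_⟩
  rw [hP x]
  constructor
  · rintro ⟨y, hy, h⟩
    obtain ⟨y', -, h'⟩ := (hM' x).2 y.1 ((mem_binTups_iff y).1 hy).1 hy h
    exact ⟨y', h'⟩
  · rintro ⟨y, h⟩
    obtain ⟨l, ⟨c, hl⟩, hlD, h⟩ := (hM' x).1 y h
    exact ⟨⟨l, by rintro rfl; simp at hl⟩, hlD, h⟩

end transfer

/-- Proposition: Basic properties — semi-decidable
problems.  Let `A ∈ Struc_{c₁,c₂}` with `{c₁,c₂} ∈ SDEC_A`, let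
`Q = {c₁,c₂}^∞` or `Q = {c₁,c₂}²`, and let `P ⊆ U_A^∞`.  Then
`P ∈ SDEC_A → P ∈ (SDEC_A^ν)^Q`, `P ∈ (SDEC_A^ν)^Q → P ∈ SDEC_A^{DND}`, and
`P ∈ SDEC_A^{DND} → P ∈ SDEC_A^{ND}`. -/
theorem semidecidability_nondeterminism_chain
    (A : FOStruct) (c₁ c₂ : A.U)
    (h₁ : HasConst A c₁) (h₂ : HasConst A c₂) (hne : c₁ ≠ c₂)
    (hcc : constPair A c₁ c₂ ∈ SDEC A)
    (Q : Set (Tup A)) (hQ : Q = binTups A c₁ c₂ ∨ Q = pairTups A c₁ c₂)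
    (P : Set (Tup A)) :
    (P ∈ SDEC A → P ∈ SDECnu A Q) ∧
    (P ∈ SDECnu A Q → P ∈ SDECdnd A c₁ c₂) ∧
    (P ∈ SDECdnd A c₁ c₂ → P ∈ SDECnd A) :=
  ⟨sdec_subset_sdecnu Q, sdecnu_subset_sdecdnd hcc hQ, sdecdnd_subset_sdecnd hcc⟩
end

section
/- Let 𝒜 be a structure in Struc_{c1,c2} and Q = {c1,c2}^∞. Then {Res_ℳ | ℳ ∈ M_𝒜^ν(Q)} ⊆ {Res_ℳ | ℳ ∈ M_𝒜^{NDB}}: every ν-oracle instruction with oracle Q can be simulated by binary non-deterministic branchings that assign c1 or c2 to the target register. -/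
/-! ### The compiled machine -/

/-- A bound for the numbers of the index registers used by an instruction, and for the register
number of a `ν`-instruction. -/
def Instr.weight {A : FOStruct} : Instr A → ℕ
  | .copy j k => j + k
  | .branchIdx j k _ _ => j + k
  | .incIdx j => j
  | .resetIdx j => j
  | .nuGuess j => j
  | _ => 0

/-- The instruction at offset `q` of the block (of length `B`, starting at `B * l`) simulating the
instruction with label `l`.  In the block of `nuGuess j`, offsets `0`-`3` choose `Z_j`, offsets
`4`-`10` form the guessing loop, and the offsets from `11` on set the index registers `N + 1`
and `N + 2` to `j + 1` and `j + 2`, the positions of the scratch register and of the first free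
register. -/
def blk {A : FOStruct} (i₁ i₂ : A.constIdx) (B N l : ℕ) : Instr A → ℕ → Instr A
  | .nuGuess j, 0 => .const j i₂
  | .nuGuess _, 1 => .orGoto (B * l + 2) (B * l + 3)
  | .nuGuess j, 2 => .const j i₁
  | .nuGuess _, 3 => .orGoto (B * l + 11) (B * (l + 1))
  | .nuGuess j, 4 => .const (j + 1) i₂
  | .nuGuess _, 5 => .orGoto (B * l + 6) (B * l + 7)
  | .nuGuess j, 6 => .const (j + 1) i₁
  | .nuGuess _, 7 => .orGoto (B * l + 8) (B * (l + 1))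
  | .nuGuess _, 8 => .copy (N + 2) (N + 1)
  | .nuGuess _, 9 => .incIdx (N + 2)
  | .nuGuess _, 10 => .orGoto (B * l + 4) (B * l + 4)
  | .nuGuess _, 11 => .resetIdx (N + 1)
  | .nuGuess _, 12 => .resetIdx (N + 2)
  | .nuGuess _, 13 => .incIdx (N + 2)
  | .nuGuess j, (p + 14) =>
      if p < j then .incIdx (N + 1) else if p < 2 * j then .incIdx (N + 2)
      else .orGoto (B * l + 4) (B * l + 4)
  | .branchRel i args l₁ l₂, _ => .branchRel i args (B * l₁) (B * l₂)
  | .branchIdx j k l₁ l₂, _ => .branchIdx j k (B * l₁) (B * l₂)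
  | .orGoto l₁ l₂, _ => .orGoto (B * l₁) (B * l₂)
  | ins, 0 => ins
  | _, _ + 1 => .orGoto (B * (l + 1)) (B * (l + 1))

/-- The concatenation of the blocks of all instructions of `M`. -/
def ndbMachine {A : FOStruct} (i₁ i₂ : A.constIdx) (B N : ℕ) (M : Machine A) : Machine A where
  prog := (List.range (B * M.prog.length)).map fun n =>
    match M.prog[n / B]? with
    | some ins => blk i₁ i₂ B N (n / B) ins (n % B)
    | none => .orGoto 0 0
  oracle := ∅

section Compile

variable {A : FOStruct} {i₁ i₂ : A.constIdx} {B N : ℕ} {M : Machine A}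

theorem ndbMachine_length :
    (ndbMachine i₁ i₂ B N M).prog.length = B * M.prog.length := by
  simp [ndbMachine]

theorem ndbMachine_get {l q : ℕ} {ins : Instr A} (h : M.prog[l]? = some ins) (hq : q < B) :
    (ndbMachine i₁ i₂ B N M).prog[B * l + q]? = some (blk i₁ i₂ B N l ins q) := by
  obtain ⟨hl, -⟩ := List.getElem?_eq_some_iff.1 h
  have h1 : B * l + q < B * M.prog.length := by nlinarith
  have h2 : (B * l + q) / B = l := by
    rw [Nat.mul_add_div (by omega), Nat.div_eq_of_lt hq, Nat.add_zero]
  have h3 : (B * l + q) % B = q := by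
    rw [Nat.mul_add_mod, Nat.mod_eq_of_lt hq]
  simp only [ndbMachine, List.getElem?_map, List.getElem?_range h1, Option.map_some, h2, h3, h]

theorem ndbMachine_get_zero {l : ℕ} {ins : Instr A} (h : M.prog[l]? = some ins) (hB : 0 < B) :
    (ndbMachine i₁ i₂ B N M).prog[B * l]? = some (blk i₁ i₂ B N l ins 0) :=
  ndbMachine_get (q := 0) h hB

theorem blk_noNu (l : ℕ) (ins : Instr A) (q : ℕ) : (blk i₁ i₂ B N l ins q).noNu := by
  unfold blk
  split <;> try trivial
  · split_ifs <;> trivial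
  · rename_i ins _ _ _ _ _
    cases ins <;> simp_all [Instr.noNu]

theorem ndbMachine_NDB : (ndbMachine i₁ i₂ B N M).NDB := by
  intro ins hins
  simp only [ndbMachine, List.mem_map] at hins
  obtain ⟨n, -, rfl⟩ := hins
  split
  · exact blk_noNu _ _ _
  · trivial

/-! ### Writing tuples into registers -/

theorem writeFrom_single (r : ℕ → A.U) (j : ℕ) (u : A.U) :
    writeFrom r j [u] = Function.update r j u := by
  funext i
  by_cases h : i = j
  · subst h; simp [writeFrom]
  · have : ¬ (j ≤ i ∧ i - j < 1) := by omega
    simp [writeFrom, h]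
    intros; omega

theorem writeFrom_pair (r : ℕ → A.U) (j : ℕ) (u : A.U) :
    writeFrom r j [u] = writeFrom r j [u, r (j + 1)] := by
  funext i
  rcases lt_trichotomy i (j + 1) with h | h | h
  · by_cases h' : i = j
    · subst h'; simp [writeFrom]
    · have : ¬ j ≤ i := by omega
      simp [writeFrom, this]
  · subst h; simp [writeFrom]
  · have h1 : ¬ (i - j < 1) := by omega
    have h2 : ¬ (i - j < 2) := by omega
    simp only [writeFrom, List.length_cons, List.length_nil, Nat.zero_add, h1, Nat.reduceAdd, h2]
    simp

theorem writeFrom_second (r : ℕ → A.U) (j : ℕ) (u v : A.U) (w : List A.U) :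
    writeFrom r j (u :: v :: w) (j + 1) = v := by
  simp [writeFrom]

theorem update_second (r : ℕ → A.U) (j : ℕ) (u v v' : A.U) (w : List A.U) :
    Function.update (writeFrom r j (u :: v :: w)) (j + 1) v' = writeFrom r j (u :: v' :: w) := by
  funext i
  by_cases h : i = j + 1
  · subst h; simp [writeFrom]
  · rw [Function.update_of_ne h]
    rcases lt_trichotomy i (j + 1) with h1 | h1 | h1
    · by_cases h' : i = j
      · subst h'; simp [writeFrom]
      · have : ¬ j ≤ i := by omega
        simp [writeFrom, this]
    · exact absurd h1 h
    · obtain ⟨m, rfl⟩ : ∃ m, i = j + (m + 2) := ⟨i - j - 2, by omega⟩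
      simp [writeFrom]

theorem update_append (r : ℕ → A.U) (j : ℕ) (l : List A.U) (x : A.U) :
    Function.update (writeFrom r j l) (j + l.length) x = writeFrom r j (l ++ [x]) := by
  funext i
  by_cases h : i = j + l.length
  · subst h; simp [writeFrom]
  · rw [Function.update_of_ne h]
    by_cases h1 : j ≤ i
    · obtain ⟨m, rfl⟩ := Nat.exists_eq_add_of_le h1
      have hm : m ≠ l.length := by omega
      rcases lt_or_gt_of_ne hm with h2 | h2
      · have h3 : m < l.length + 1 := by omega
        simp [writeFrom, h2, h3]
      · have h3 : ¬ m < l.length := by omega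
        have h4 : ¬ m < l.length + 1 := by omega
        simp [writeFrom, h3, h4]
    · simp [writeFrom, h1]

/-! ### Every step of the `ν`-machine is simulated -/

theorem NStep.reaches {M : Machine A} {c d : Config A} (h : NStep M c d) : Reaches M c d :=
  Relation.ReflTransGen.single h

/-- The three instructions `const s i₂`, `goto p+2 or goto p+3`, `const s i₁` store an arbitrary
element of `{c₁, c₂}` in register `s`. -/
theorem choose_reaches {M : Machine A} {p s : ℕ}
    (h0 : M.prog[p]? = some (.const s i₂))
    (h1 : M.prog[p + 1]? = some (.orGoto (p + 2) (p + 3)))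
    (h2 : M.prog[p + 2]? = some (.const s i₁))
    (f : ℕ → ℕ) (r : ℕ → A.U) {v : A.U} (hv : v = A.consts i₁ ∨ v = A.consts i₂) :
    Reaches M ⟨p, f, r⟩ ⟨p + 3, f, Function.update r s v⟩ := by
  have s0 : NStep M ⟨p, f, r⟩ ⟨p + 1, f, Function.update r s (A.consts i₂)⟩ := ⟨_, h0, rfl⟩
  rcases hv with rfl | rfl
  · have s1 : NStep M ⟨p + 1, f, Function.update r s (A.consts i₂)⟩
        ⟨p + 2, f, Function.update r s (A.consts i₂)⟩ := ⟨_, h1, Or.inl rfl⟩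
    have s2 : NStep M ⟨p + 2, f, Function.update r s (A.consts i₂)⟩
        ⟨p + 3, f, Function.update r s (A.consts i₁)⟩ :=
      ⟨_, h2, by simp [execDet]⟩
    exact s0.reaches.trans (s1.reaches.trans s2.reaches)
  · have s1 : NStep M ⟨p + 1, f, Function.update r s (A.consts i₂)⟩
        ⟨p + 3, f, Function.update r s (A.consts i₂)⟩ := ⟨_, h1, Or.inr rfl⟩
    exact s0.reaches.trans s1.reaches

/-- The guessing loop: in the presence of a partial tuple `u, v, w`, it can end with `v` replaced
by any `v'` and `w` extended by any `x`. -/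
theorem loop_reaches {l j : ℕ} (h : M.prog[l]? = some (.nuGuess j)) (hB : 14 < B)
    (r : ℕ → A.U) (u v' : A.U) (hv' : v' = A.consts i₁ ∨ v' = A.consts i₂) (x : List A.U)
    (hx : ∀ a ∈ x, a = A.consts i₁ ∨ a = A.consts i₂) (v : A.U) (w : List A.U) (f : ℕ → ℕ)
    (hk : f (N + 1) = j + 1) (ht : f (N + 2) = j + 2 + w.length) :
    ∃ f', (∀ i ≤ N, f' i = f i) ∧
      Reaches (ndbMachine i₁ i₂ B N M) ⟨B * l + 4, f, writeFrom r j (u :: v :: w)⟩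
        ⟨B * (l + 1), f', writeFrom r j (u :: v' :: (w ++ x))⟩ := by
  have get := fun q (hq : q < B) => ndbMachine_get (i₁ := i₁) (i₂ := i₂) (N := N) h hq
  induction x generalizing v w f with
  | nil =>
    have s0 := choose_reaches (get 4 (by omega)) (get 5 (by omega)) (get 6 (by omega)) f
      (writeFrom r j (u :: v :: w)) hv'
    rw [update_second] at s0
    refine ⟨f, fun _ _ => rfl, s0.trans (NStep.reaches ⟨_, get 7 (by omega), Or.inr ?_⟩)⟩
    simp
  | cons a x ih =>
    have s0 := choose_reaches (get 4 (by omega)) (get 5 (by omega)) (get 6 (by omega)) f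
      (writeFrom r j (u :: v :: w)) (hx a (by simp))
    rw [update_second] at s0
    have s1 : NStep (ndbMachine i₁ i₂ B N M) ⟨B * l + 7, f, writeFrom r j (u :: a :: w)⟩
      ⟨B * l + 8, f, writeFrom r j (u :: a :: w)⟩ := ⟨_, get 7 (by omega), Or.inl rfl⟩
    have s2 : NStep (ndbMachine i₁ i₂ B N M) ⟨B * l + 8, f, writeFrom r j (u :: a :: w)⟩
        ⟨B * l + 9, f, writeFrom r j (u :: a :: (w ++ [a]))⟩ := by
      refine ⟨_, get 8 (by omega), ?_⟩
      have := update_append r j (u :: a :: w) a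
      simp only [List.length_cons, List.cons_append] at this
      simp only [blk, execDet, hk, ht, writeFrom_second, ← this]
      simp only [show j + (w.length + 1 + 1) = j + 2 + w.length by omega]
    have s3 : NStep (ndbMachine i₁ i₂ B N M) ⟨B * l + 9, f, writeFrom r j (u :: a :: (w ++ [a]))⟩
        ⟨B * l + 10, Function.update f (N + 2) (f (N + 2) + 1),
          writeFrom r j (u :: a :: (w ++ [a]))⟩ := ⟨_, get 9 (by omega), rfl⟩
    have s4 : NStep (ndbMachine i₁ i₂ B N M)
        ⟨B * l + 10, Function.update f (N + 2) (f (N + 2) + 1),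
          writeFrom r j (u :: a :: (w ++ [a]))⟩
        ⟨B * l + 4, Function.update f (N + 2) (f (N + 2) + 1),
          writeFrom r j (u :: a :: (w ++ [a]))⟩ := ⟨_, get 10 (by omega), Or.inl rfl⟩
    obtain ⟨f', hf', s5⟩ := ih (fun b hb => hx b (by simp [hb])) a (w ++ [a])
      (Function.update f (N + 2) (f (N + 2) + 1)) (by simp [hk]) (by simp [ht]; omega)
    refine ⟨f', fun i hi => ?_, ?_⟩
    · rw [hf' i hi, Function.update_of_ne (by omega)]
    · simp only [List.append_assoc, List.singleton_append] at s5
      exact s0.trans (s1.reaches.trans (s2.reaches.trans (s3.reaches.trans (s4.reaches.trans s5))))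

/-- The block of `nuGuess j` can set the two pointers to `j + 1` and `j + 2`. -/
theorem init_reaches {l j : ℕ} (h : M.prog[l]? = some (.nuGuess j)) (hB : 14 + 2 * j < B)
    (r : ℕ → A.U) (f : ℕ → ℕ) :
    ∃ f', (∀ i ≤ N, f' i = f i) ∧ f' (N + 1) = j + 1 ∧ f' (N + 2) = j + 2 ∧
      Reaches (ndbMachine i₁ i₂ B N M) ⟨B * l + 11, f, r⟩ ⟨B * l + 4, f', r⟩ := by
  have get := fun q (hq : q < B) => ndbMachine_get (i₁ := i₁) (i₂ := i₂) (N := N) h hq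
  have key : ∀ p ≤ 2 * j, ∃ f', (∀ i ≤ N, f' i = f i) ∧ f' (N + 1) = 1 + min p j ∧
      f' (N + 2) = 2 + (p - j) ∧
      Reaches (ndbMachine i₁ i₂ B N M) ⟨B * l + 11, f, r⟩ ⟨B * l + (p + 14), f', r⟩ := by
    intro p
    induction p with
    | zero =>
      intro _
      let f1 := Function.update f (N + 1) 1
      let f2 := Function.update f1 (N + 2) 1
      let f3 := Function.update f2 (N + 2) (f2 (N + 2) + 1)
      have s1 : NStep (ndbMachine i₁ i₂ B N M) ⟨B * l + 11, f, r⟩ ⟨B * l + 12, f1, r⟩ :=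
        ⟨_, get 11 (by omega), rfl⟩
      have s2 : NStep (ndbMachine i₁ i₂ B N M) ⟨B * l + 12, f1, r⟩ ⟨B * l + 13, f2, r⟩ :=
        ⟨_, get 12 (by omega), rfl⟩
      have s3 : NStep (ndbMachine i₁ i₂ B N M) ⟨B * l + 13, f2, r⟩ ⟨B * l + 14, f3, r⟩ :=
        ⟨_, get 13 (by omega), rfl⟩
      refine ⟨f3, fun i hi => ?_, ?_, ?_, s1.reaches.trans (s2.reaches.trans s3.reaches)⟩
      · have e1 : i ≠ N + 1 := by omega
        have e2 : i ≠ N + 2 := by omega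
        simp [f3, f2, f1, e1, e2]
      · simp [f3, f2, f1]
      · simp [f3, f2]
    | succ p ih =>
      intro hp
      obtain ⟨f', h1, h2, h3, s⟩ := ih (by omega)
      have g := get (p + 14) (by omega)
      by_cases hpj : p < j
      · refine ⟨Function.update f' (N + 1) (f' (N + 1) + 1), fun i hi => ?_, ?_, ?_,
          s.trans (NStep.reaches ⟨_, g, ?_⟩)⟩
        · rw [Function.update_of_ne (by omega), h1 i hi]
        · rw [Function.update_self, h2]; omega
        · rw [Function.update_of_ne (by omega), h3]; omega
        · simp only [blk, if_pos hpj, execDet]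
          congr 1
      · refine ⟨Function.update f' (N + 2) (f' (N + 2) + 1), fun i hi => ?_, ?_, ?_,
          s.trans (NStep.reaches ⟨_, g, ?_⟩)⟩
        · rw [Function.update_of_ne (by omega), h1 i hi]
        · rw [Function.update_of_ne (by omega), h2]; omega
        · rw [Function.update_self, h3]; omega
        · simp only [blk, if_neg hpj, if_pos (show p < 2 * j by omega), execDet]
          congr 1
  obtain ⟨f', h1, h2, h3, s⟩ := key (2 * j) le_rfl
  refine ⟨f', h1, by omega, by omega, s.trans (NStep.reaches ⟨_, get (2 * j + 14) (by omega), ?_⟩)⟩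
  simp only [blk, if_neg (show ¬ 2 * j < j by omega), lt_irrefl, if_false, or_self]

/-- The block of `nuGuess j` can write any tuple over `{c₁, c₂}` into `Z_j, Z_{j+1}, …`. -/
theorem guess_reaches {l j : ℕ} (h : M.prog[l]? = some (.nuGuess j)) (hB : 14 + 2 * j < B)
    (r : ℕ → A.U) (f : ℕ → ℕ) (y : Tup A)
    (hy : y ∈ binTups A (A.consts i₁) (A.consts i₂)) :
    ∃ f', (∀ i ≤ N, f' i = f i) ∧
      Reaches (ndbMachine i₁ i₂ B N M) ⟨B * l, f, r⟩ ⟨B * (l + 1), f', writeFrom r j y.1⟩ := by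
  have get := fun q (hq : q < B) => ndbMachine_get (i₁ := i₁) (i₂ := i₂) (N := N) h hq
  obtain ⟨y, hne⟩ := y
  change ∀ a ∈ y, a = A.consts i₁ ∨ a = A.consts i₂ at hy
  cases y with
  | nil => exact absurd rfl hne
  | cons u y =>
    have s0 := choose_reaches (get 0 (by omega)) (get 1 (by omega)) (get 2 (by omega)) f r
      (hy u (by simp))
    rw [← writeFrom_single] at s0
    cases y with
    | nil => exact ⟨f, fun _ _ => rfl, s0.trans (NStep.reaches ⟨_, get 3 (by omega), Or.inr rfl⟩)⟩
    | cons v x =>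
      have s1 : NStep (ndbMachine i₁ i₂ B N M) ⟨B * l + 3, f, writeFrom r j [u]⟩
        ⟨B * l + 11, f, writeFrom r j [u]⟩ := ⟨_, get 3 (by omega), Or.inl rfl⟩
      obtain ⟨f', a1, a2, a3, s2⟩ := init_reaches (i₁ := i₁) (i₂ := i₂) (N := N) h hB
        (writeFrom r j [u]) f
      rw [writeFrom_pair] at s2
      obtain ⟨f'', b1, s3⟩ := loop_reaches (B := B) (i₁ := i₁) (i₂ := i₂) (N := N) h (by omega) r u v
        (hy v (by simp)) x (fun a ha => hy a (by simp [ha])) (r (j + 1)) [] f' a2 a3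
      refine ⟨f'', fun i hi => (b1 i hi).trans (a1 i hi), ?_⟩
      rw [← writeFrom_pair] at s2 s3
      exact s0.trans (s1.reaches.trans (s2.trans s3))

/-- `d` carries the same data as `c`, up to the label and the pointers `N + 1`, `N + 2`. -/
def SameData (N : ℕ) (c d : Config A) : Prop :=
  d.reg = c.reg ∧ ∀ i ≤ N, d.idx i = c.idx i

/-- `d` is the configuration at the beginning of a block that corresponds to `c`. -/
def Sim (B N : ℕ) (c d : Config A) : Prop :=
  d.label = B * c.label ∧ SameData N c d

/-- Instructions that are deterministic and continue with the next label. -/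
def Instr.isPlain : Instr A → Prop
  | .apply _ _ _ => True
  | .const _ _ => True
  | .copy _ _ => True
  | .incIdx _ => True
  | .resetIdx _ => True
  | _ => False

theorem blk_plain {l q : ℕ} {ins : Instr A} (h : ins.isPlain) :
    blk i₁ i₂ B N l ins 0 = ins ∧
      blk i₁ i₂ B N l ins (q + 1) = .orGoto (B * (l + 1)) (B * (l + 1)) := by
  cases ins <;> first | exact h.elim | exact ⟨rfl, rfl⟩

theorem nstep_plain_iff {M : Machine A} {c c' : Config A} {ins : Instr A}
    (h : M.prog[c.label]? = some ins) (hp : ins.isPlain) :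
    NStep M c c' ↔ c' = execDet ins c := by
  unfold NStep
  simp only [h, Option.some.injEq, exists_eq_left']
  cases ins <;> first | exact hp.elim | exact Iff.rfl

theorem execDet_plain {c d : Config A} {ins : Instr A} (hp : ins.isPlain)
    (hw : ins.weight ≤ N) (hs : SameData N c d) :
    SameData N (execDet ins c) (execDet ins d) ∧ (execDet ins c).label = c.label + 1 ∧
      (execDet ins d).label = d.label + 1 := by
  obtain ⟨hr, hi⟩ := hs
  cases ins with
  | apply j i args => exact ⟨⟨by simp [execDet, hr], hi⟩, rfl, rfl⟩
  | const j i => exact ⟨⟨by simp [execDet, hr], hi⟩, rfl, rfl⟩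
  | copy j k =>
    simp only [Instr.weight] at hw
    exact ⟨⟨by simp [execDet, hr, hi j (by omega), hi k (by omega)], hi⟩, rfl, rfl⟩
  | incIdx j =>
    simp only [Instr.weight] at hw
    refine ⟨⟨hr, fun i h => ?_⟩, rfl, rfl⟩
    simp only [execDet, Function.update_apply, hi i h, hi j hw]
  | resetIdx j =>
    refine ⟨⟨hr, fun i h => ?_⟩, rfl, rfl⟩
    simp only [execDet, Function.update_apply, hi i h]
  | _ => exact hp.elim

theorem simulates_step (hor : ∀ ins ∈ M.prog, ins.noOr)
    (hQ : M.oracle = binTups A (A.consts i₁) (A.consts i₂))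
    (hw : ∀ ins ∈ M.prog, ins.weight ≤ N) (hB : 14 + 2 * N < B)
    {c c' d : Config A} (hs : Sim B N c d) (h : NStep M c c') :
    ∃ d', Reaches (ndbMachine i₁ i₂ B N M) d d' ∧ Sim B N c' d' := by
  have hstep := h
  obtain ⟨ins, hins, h⟩ := h
  have hmem := List.mem_of_getElem? hins
  have hwi := hw ins hmem
  obtain ⟨hl, hsd⟩ := hs
  have g0 := ndbMachine_get_zero (i₁ := i₁) (i₂ := i₂) (N := N) (B := B) hins (by omega)
  rw [← hl] at g0
  by_cases hp : ins.isPlain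
  · obtain rfl := (nstep_plain_iff hins hp).1 hstep
    obtain ⟨e1, e2, e3⟩ := execDet_plain hp hwi hsd
    have g1 := ndbMachine_get (i₁ := i₁) (i₂ := i₂) (N := N) (B := B) (q := 1) hins (by omega)
    rw [(blk_plain (q := 0) hp).1] at g0
    rw [(blk_plain (q := 0) hp).2, ← hl, ← e3] at g1
    refine ⟨_, ((nstep_plain_iff g0 hp).2 rfl).reaches.trans (NStep.reaches ⟨_, g1, Or.inl rfl⟩),
      ?_, e1⟩
    simp [e2]
  · cases ins with
    | branchRel i args l₁ l₂ =>
      refine ⟨_, NStep.reaches ⟨_, g0, rfl⟩, ?_⟩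
      subst h
      obtain ⟨hr, hi⟩ := hsd
      refine ⟨?_, hr, hi⟩
      simp only [blk, execDet]
      rw [hr]
      split_ifs <;> rfl
    | branchIdx j k l₁ l₂ =>
      refine ⟨_, NStep.reaches ⟨_, g0, rfl⟩, ?_⟩
      subst h
      obtain ⟨hr, hi⟩ := hsd
      refine ⟨?_, hr, hi⟩
      simp only [Instr.weight] at hwi
      simp only [blk, execDet, hi j (by omega), hi k (by omega)]
      split_ifs <;> rfl
    | orGoto l₁ l₂ => exact (hor _ hmem).elim
    | nuGuess j =>
      obtain ⟨y, hy, rfl⟩ := h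
      rw [hQ] at hy
      simp only [Instr.weight] at hwi
      obtain ⟨f', hf', s⟩ := guess_reaches (i₁ := i₁) (i₂ := i₂) (N := N) (B := B) hins
        (by omega) d.reg d.idx y hy
      rw [← hl] at s
      refine ⟨_, s, rfl, ?_, fun i hi => ?_⟩
      · simp [hsd.1]
      · simp [hf' i hi, hsd.2 i hi]
    | _ => exact (hp trivial).elim

/-! ### Every step of the compiled machine comes from the `ν`-machine -/

/-- `d` is a configuration inside the block of the instruction `nuGuess j` about to be executed in
the configuration `c`.  The offset of `d` in the block determines which part of the tuple has
been written, and the values of the pointers.  In `loop` and `copied`, `v` is the content of the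
scratch register `Z_{j+1}`; it need not be `c₁` or `c₂` as it will be overwritten. -/
inductive InGuess (i₁ i₂ : A.constIdx) (B N : ℕ) (c : Config A) (j : ℕ) (d : Config A) : Prop
  | first (q : ℕ) (hq : q = 1 ∨ q = 2 ∨ q = 3 ∨ q = 11) (hl : d.label = B * c.label + q)
      (u : A.U) (hu : u = A.consts i₁ ∨ u = A.consts i₂) (hr : d.reg = writeFrom c.reg j [u])
  | init₁ (hl : d.label = B * c.label + 12) (hk : d.idx (N + 1) = 1)
      (u : A.U) (hu : u = A.consts i₁ ∨ u = A.consts i₂) (hr : d.reg = writeFrom c.reg j [u])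
  | init₂ (hl : d.label = B * c.label + 13) (hk : d.idx (N + 1) = 1) (ht : d.idx (N + 2) = 1)
      (u : A.U) (hu : u = A.consts i₁ ∨ u = A.consts i₂) (hr : d.reg = writeFrom c.reg j [u])
  | init₃ (p : ℕ) (hp : p ≤ 2 * j) (hl : d.label = B * c.label + (p + 14))
      (hk : d.idx (N + 1) = 1 + min p j) (ht : d.idx (N + 2) = 2 + (p - j))
      (u : A.U) (hu : u = A.consts i₁ ∨ u = A.consts i₂) (hr : d.reg = writeFrom c.reg j [u])
  | loop (q : ℕ) (hq : q = 4 ∨ q = 10) (hl : d.label = B * c.label + q)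
      (u v : A.U) (w : List A.U) (hk : d.idx (N + 1) = j + 1)
      (ht : d.idx (N + 2) = j + 2 + w.length)
      (hu : u = A.consts i₁ ∨ u = A.consts i₂)
      (hw : ∀ a ∈ w, a = A.consts i₁ ∨ a = A.consts i₂)
      (hr : d.reg = writeFrom c.reg j (u :: v :: w))
  | chosen (q : ℕ) (hq : q = 5 ∨ q = 6 ∨ q = 7 ∨ q = 8) (hl : d.label = B * c.label + q)
      (u v : A.U) (w : List A.U) (hk : d.idx (N + 1) = j + 1)
      (ht : d.idx (N + 2) = j + 2 + w.length)
      (hu : u = A.consts i₁ ∨ u = A.consts i₂) (hv : v = A.consts i₁ ∨ v = A.consts i₂)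
      (hw : ∀ a ∈ w, a = A.consts i₁ ∨ a = A.consts i₂)
      (hr : d.reg = writeFrom c.reg j (u :: v :: w))
  | copied (hl : d.label = B * c.label + 9)
      (u v : A.U) (w : List A.U) (hk : d.idx (N + 1) = j + 1)
      (ht : d.idx (N + 2) = j + 1 + w.length)
      (hu : u = A.consts i₁ ∨ u = A.consts i₂)
      (hw : ∀ a ∈ w, a = A.consts i₁ ∨ a = A.consts i₂)
      (hr : d.reg = writeFrom c.reg j (u :: v :: w))

/-- A step inside the block of `nuGuess j` stays in the block or leaves it, in the latter case with
a tuple over `{c₁, c₂}` written from `Z_j` on. -/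
theorem inGuess_step {c d d' : Config A} {j : ℕ} (h : M.prog[c.label]? = some (.nuGuess j))
    (hB : 14 + 2 * j < B) (hi : ∀ i ≤ N, d.idx i = c.idx i) (hd : InGuess i₁ i₂ B N c j d)
    (hs : NStep (ndbMachine i₁ i₂ B N M) d d') :
    (∀ i ≤ N, d'.idx i = c.idx i) ∧ (InGuess i₁ i₂ B N c j d' ∨
      ∃ y ∈ binTups A (A.consts i₁) (A.consts i₂),
        d'.label = B * (c.label + 1) ∧ d'.reg = writeFrom c.reg j y.1) := by
  have get := fun q (hq : q < B) => ndbMachine_get (i₁ := i₁) (i₂ := i₂) (N := N) h hq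
  -- Index registers up to `N` are unaffected by changes of the pointers.
  have upd : ∀ (m a : ℕ), N < m → ∀ i ≤ N, Function.update d.idx m a i = c.idx i := by
    intro m a hm i hiN
    rw [Function.update_of_ne (by omega), hi i hiN]
  obtain ⟨ins, hins, hs⟩ := hs
  cases hd with
  | first q hq hl u hu hr =>
    rw [hl, get q (by omega), Option.some.injEq] at hins
    subst hins
    rcases hq with rfl | rfl | rfl | rfl
    · rcases hs with rfl | rfl
      · exact ⟨hi, Or.inl (.first 2 (by simp) rfl u hu hr)⟩
      · exact ⟨hi, Or.inl (.first 3 (by simp) rfl u hu hr)⟩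
    · subst hs
      refine ⟨hi, Or.inl (.first 3 (by simp) ?_ (A.consts i₁) (Or.inl rfl) ?_)⟩
      · simp [execDet, blk, hl]
      · simp [execDet, blk, hr, writeFrom_single]
    · rcases hs with rfl | rfl
      · exact ⟨hi, Or.inl (.first 11 (by simp) rfl u hu hr)⟩
      · exact ⟨hi, Or.inr ⟨⟨[u], by simp⟩, by simpa [binTups] using hu, rfl, hr⟩⟩
    · subst hs
      refine ⟨upd _ _ (by omega), Or.inl (.init₁ ?_ ?_ u hu hr)⟩
      · simp [execDet, blk, hl]
      · simp [execDet, blk]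
  | init₁ hl hk u hu hr =>
    rw [hl, get 12 (by omega), Option.some.injEq] at hins
    subst hins
    subst hs
    refine ⟨upd _ _ (by omega), Or.inl (.init₂ ?_ ?_ ?_ u hu hr)⟩
    · simp [execDet, blk, hl]
    · simp [execDet, blk, hk]
    · simp [execDet, blk]
  | init₂ hl hk ht u hu hr =>
    rw [hl, get 13 (by omega), Option.some.injEq] at hins
    subst hins
    subst hs
    refine ⟨upd _ _ (by omega), Or.inl (.init₃ 0 (by omega) ?_ ?_ ?_ u hu hr)⟩
    · simp [execDet, blk, hl]
    · simp [execDet, blk, hk]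
    · simp [execDet, blk, ht]
  | init₃ p hp hl hk ht u hu hr =>
    rw [hl, get (p + 14) (by omega), Option.some.injEq] at hins
    subst hins
    by_cases h1 : p < j
    · simp only [blk, if_pos h1] at hs
      subst hs
      refine ⟨upd _ _ (by omega), Or.inl (.init₃ (p + 1) (by omega) ?_ ?_ ?_ u hu hr)⟩
      · simp only [execDet, hl]; omega
      · simp only [execDet, Function.update_self, hk]; omega
      · simp only [execDet]; rw [Function.update_of_ne (by omega), ht]; omega
    · by_cases h2 : p < 2 * j
      · simp only [blk, if_neg h1, if_pos h2] at hs
        subst hs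
        refine ⟨upd _ _ (by omega), Or.inl (.init₃ (p + 1) (by omega) ?_ ?_ ?_ u hu hr)⟩
        · simp only [execDet, hl]; omega
        · simp only [execDet]; rw [Function.update_of_ne (by omega), hk]; omega
        · simp only [execDet, Function.update_self, ht]; omega
      · simp only [blk, if_neg h1, if_neg h2, or_self] at hs
        subst hs
        refine ⟨hi, Or.inl (.loop 4 (by simp) rfl u (c.reg (j + 1)) [] ?_ ?_ hu (by simp) ?_)⟩
        · simp only [hk]; omega
        · simp only [ht, List.length_nil]; omega
        · simp only [hr, ← writeFrom_pair]
  | loop q hq hl u v w hk ht hu hw hr =>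
    rw [hl, get q (by omega), Option.some.injEq] at hins
    subst hins
    rcases hq with rfl | rfl
    · subst hs
      refine ⟨hi, Or.inl (.chosen 5 (by simp) ?_ u (A.consts i₂) w hk ht hu (Or.inr rfl) hw ?_)⟩
      · simp [execDet, blk, hl]
      · simp [execDet, blk, hr, update_second]
    · simp only [blk, or_self] at hs
      subst hs
      exact ⟨hi, Or.inl (.loop 4 (by simp) rfl u v w hk ht hu hw hr)⟩
  | chosen q hq hl u v w hk ht hu hv hw hr =>
    rw [hl, get q (by omega), Option.some.injEq] at hins
    subst hins
    rcases hq with rfl | rfl | rfl | rfl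
    · rcases hs with rfl | rfl
      · exact ⟨hi, Or.inl (.chosen 6 (by simp) rfl u v w hk ht hu hv hw hr)⟩
      · exact ⟨hi, Or.inl (.chosen 7 (by simp) rfl u v w hk ht hu hv hw hr)⟩
    · subst hs
      refine ⟨hi, Or.inl (.chosen 7 (by simp) ?_ u (A.consts i₁) w hk ht hu (Or.inl rfl) hw ?_)⟩
      · simp [execDet, blk, hl]
      · simp [execDet, blk, hr, update_second]
    · rcases hs with rfl | rfl
      · exact ⟨hi, Or.inl (.chosen 8 (by simp) rfl u v w hk ht hu hv hw hr)⟩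
      · refine ⟨hi, Or.inr ⟨⟨u :: v :: w, by simp⟩, ?_, rfl, hr⟩⟩
        intro a ha
        rcases List.mem_cons.1 ha with rfl | ha
        · exact hu
        · rcases List.mem_cons.1 ha with rfl | ha
          · exact hv
          · exact hw a ha
    · subst hs
      refine ⟨hi, Or.inl (.copied ?_ u v (w ++ [v]) hk ?_ hu ?_ ?_)⟩
      · simp [execDet, blk, hl]
      · simp only [blk, execDet, ht, List.length_append, List.length_singleton]; omega
      · intro a ha
        rcases List.mem_append.1 ha with ha | ha
        · exact hw a ha
        · rw [List.mem_singleton.1 ha]; exact hv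
      · have := update_append c.reg j (u :: v :: w) v
        simp only [List.length_cons, List.cons_append] at this
        simp only [blk, execDet, hk, ht, hr, writeFrom_second, ← this]
        simp only [show j + (w.length + 1 + 1) = j + 2 + w.length by omega]
  | copied hl u v w hk ht hu hw hr =>
    rw [hl, get 9 (by omega), Option.some.injEq] at hins
    subst hins
    subst hs
    refine ⟨upd _ _ (by omega), Or.inl (.loop 10 (by simp) ?_ u v w ?_ ?_ hu hw hr)⟩
    · simp [execDet, blk, hl]
    · simp [execDet, blk, hk]
    · simp only [blk, execDet, Function.update_self, ht]; omega

/-- The configurations `d` of the compiled machine that occur while simulating `M` at `c`: the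
beginning of a block, the jump to the block of `c` after a plain instruction, or the inside of the
block of a `ν`-instruction. -/
inductive Mid (i₁ i₂ : A.constIdx) (B N : ℕ) (M : Machine A) (c d : Config A) : Prop
  | start (h : Sim B N c d)
  | jump (h : SameData N c d) (hj : (ndbMachine i₁ i₂ B N M).prog[d.label]? =
      some (.orGoto (B * c.label) (B * c.label)))
  | guess (j : ℕ) (h : M.prog[c.label]? = some (.nuGuess j)) (hi : ∀ i ≤ N, d.idx i = c.idx i)
      (hd : InGuess i₁ i₂ B N c j d)

theorem InGuess.label_eq {c d : Config A} {j : ℕ} (hd : InGuess i₁ i₂ B N c j d) :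
    ∃ q ≤ 14 + 2 * j, d.label = B * c.label + q := by
  cases hd with
  | first q hq hl => exact ⟨q, by omega, hl⟩
  | init₁ hl => exact ⟨_, by omega, hl⟩
  | init₂ hl => exact ⟨_, by omega, hl⟩
  | init₃ p hp hl => exact ⟨_, by omega, hl⟩
  | loop q hq hl => exact ⟨q, by omega, hl⟩
  | chosen q hq hl => exact ⟨q, by omega, hl⟩
  | copied hl => exact ⟨_, by omega, hl⟩

theorem mid_step (hor : ∀ ins ∈ M.prog, ins.noOr)
    (hQ : M.oracle = binTups A (A.consts i₁) (A.consts i₂))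
    (hw : ∀ ins ∈ M.prog, ins.weight ≤ N) (hB : 14 + 2 * N < B)
    {c d d' : Config A} (hm : Mid i₁ i₂ B N M c d) (hs : NStep (ndbMachine i₁ i₂ B N M) d d') :
    ∃ c', Reaches M c c' ∧ Mid i₁ i₂ B N M c' d' := by
  cases hm with
  | start h =>
    have hstep := hs
    obtain ⟨ins', hins', hs⟩ := hs
    obtain ⟨hl, hsd⟩ := h
    have hlt : c.label < M.prog.length := by
      obtain ⟨hlt, -⟩ := List.getElem?_eq_some_iff.1 hins'
      rw [ndbMachine_length, hl] at hlt
      exact Nat.lt_of_mul_lt_mul_left hlt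
    obtain ⟨ins, hins⟩ : ∃ ins, M.prog[c.label]? = some ins := ⟨_, List.getElem?_eq_getElem hlt⟩
    have hmem := List.mem_of_getElem? hins
    have hwi := hw ins hmem
    have g0 := ndbMachine_get_zero (i₁ := i₁) (i₂ := i₂) (N := N) (B := B) hins (by omega)
    rw [← hl] at g0
    by_cases hp : ins.isPlain
    · rw [(blk_plain (q := 0) hp).1] at g0
      obtain rfl := (nstep_plain_iff g0 hp).1 hstep
      obtain ⟨e1, e2, e3⟩ := execDet_plain hp hwi hsd
      have g1 := ndbMachine_get (i₁ := i₁) (i₂ := i₂) (N := N) (B := B) (q := 1) hins (by omega)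
      rw [(blk_plain (q := 0) hp).2, ← hl, ← e3, ← e2] at g1
      exact ⟨_, ((nstep_plain_iff hins hp).2 rfl).reaches, .jump e1 g1⟩
    · rw [g0, Option.some.injEq] at hins'
      subst hins'
      cases ins with
      | branchRel i args l₁ l₂ =>
        subst hs
        refine ⟨_, NStep.reaches ⟨_, hins, rfl⟩, .start ⟨?_, hsd.1, hsd.2⟩⟩
        simp only [execDet, blk]
        rw [hsd.1]
        split_ifs <;> rfl
      | branchIdx j k l₁ l₂ =>
        subst hs
        refine ⟨_, NStep.reaches ⟨_, hins, rfl⟩, .start ⟨?_, hsd.1, hsd.2⟩⟩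
        simp only [Instr.weight] at hwi
        simp only [execDet, blk, hsd.2 j (by omega), hsd.2 k (by omega)]
        split_ifs <;> rfl
      | orGoto l₁ l₂ => exact (hor _ hmem).elim
      | nuGuess j =>
        subst hs
        refine ⟨c, Relation.ReflTransGen.refl, .guess j hins hsd.2
          (.first 1 (by simp) ?_ (A.consts i₂) (Or.inr rfl) ?_)⟩
        · simp [execDet, blk, hl]
        · simp [execDet, blk, hsd.1, writeFrom_single]
      | _ => exact (hp trivial).elim
  | jump h hj =>
    obtain ⟨ins, hins, hs⟩ := hs
    rw [hj, Option.some.injEq] at hins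
    subst hins
    simp only [or_self] at hs
    subst hs
    exact ⟨c, Relation.ReflTransGen.refl, .start ⟨rfl, h.1, h.2⟩⟩
  | guess j h hi hd =>
    have hwi := hw _ (List.mem_of_getElem? h)
    simp only [Instr.weight] at hwi
    obtain ⟨hi', h' | ⟨y, hy, hl, hr⟩⟩ := inGuess_step h (by omega) hi hd hs
    · exact ⟨c, Relation.ReflTransGen.refl, .guess j h hi' h'⟩
    · exact ⟨{ c with label := c.label + 1, reg := writeFrom c.reg j y.1 },
        NStep.reaches ⟨_, h, y, hQ ▸ hy, rfl⟩, .start ⟨hl, hr, hi'⟩⟩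

/-! ### Equality of the result functions -/

/-- The compiled machine halts only at the beginning of a (non-existent) block. -/
theorem Mid.sim_of_halted (hw : ∀ ins ∈ M.prog, ins.weight ≤ N) (hB : 14 + 2 * N < B)
    {c d : Config A} (hm : Mid i₁ i₂ B N M c d) (hh : Halted (ndbMachine i₁ i₂ B N M) d) :
    Sim B N c d := by
  have hnone := List.getElem?_eq_none hh
  cases hm with
  | start h => exact h
  | jump h hj => rw [hj] at hnone; cases hnone
  | guess j h hi hd =>
    have hwi := hw _ (List.mem_of_getElem? h)
    simp only [Instr.weight] at hwi
    obtain ⟨q, hq, hl⟩ := hd.label_eq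
    rw [hl, ndbMachine_get h (by omega)] at hnone
    cases hnone

theorem Sim.halted_iff (hB : 0 < B) {c d : Config A} (h : Sim B N c d) :
    Halted (ndbMachine i₁ i₂ B N M) d ↔ Halted M c := by
  unfold Halted
  rw [ndbMachine_length, h.1]
  exact Nat.mul_le_mul_left_iff hB

theorem SameData.output_eq (hN : 1 ≤ N) {c d : Config A} (h : SameData N c d) :
    output d = output c := by
  simp only [output, h.1, h.2 1 hN]

theorem ndbMachine_res (hor : ∀ ins ∈ M.prog, ins.noOr)
    (hQ : M.oracle = binTups A (A.consts i₁) (A.consts i₂))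
    (hw : ∀ ins ∈ M.prog, ins.weight ≤ N) (hB : 14 + 2 * N < B) (hN : 1 ≤ N) (x : Tup A) :
    Res (ndbMachine i₁ i₂ B N M) x = Res M x := by
  have h0 : Sim B N (inputConfig A x) (inputConfig A x) := ⟨rfl, rfl, fun _ _ => rfl⟩
  ext z
  constructor
  · rintro ⟨d, hr, hh, rfl⟩
    have : ∃ c, Reaches M (inputConfig A x) c ∧ Mid i₁ i₂ B N M c d := by
      clear hh
      induction hr with
      | refl => exact ⟨_, Relation.ReflTransGen.refl, .start h0⟩
      | tail _ hs ih =>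
        obtain ⟨c, hc, hm⟩ := ih
        obtain ⟨c', hc', hm'⟩ := mid_step hor hQ hw hB hm hs
        exact ⟨c', hc.trans hc', hm'⟩
    obtain ⟨c, hc, hm⟩ := this
    have hsim := hm.sim_of_halted hw hB hh
    exact ⟨c, hc, (hsim.halted_iff (by omega)).1 hh, (hsim.2.output_eq hN).symm⟩
  · rintro ⟨c, hr, hh, rfl⟩
    have : ∃ d, Reaches (ndbMachine i₁ i₂ B N M) (inputConfig A x) d ∧ Sim B N c d := by
      clear hh
      induction hr with
      | refl => exact ⟨_, Relation.ReflTransGen.refl, h0⟩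
      | tail _ hs ih =>
        obtain ⟨d, hd, hm⟩ := ih
        obtain ⟨d', hd', hm'⟩ := simulates_step hor hQ hw hB hm hs
        exact ⟨d', hd.trans hd', hm'⟩
    obtain ⟨d, hd, hsim⟩ := this
    exact ⟨d, hd, (hsim.halted_iff (by omega)).2 hh, hsim.2.output_eq hN⟩

end Compile


/-- Theorem: Binary non-deterministic computability.
Let `A ∈ Struc_{c₁,c₂}` and `Q = {c₁,c₂}^∞`.  Then
`{Res_M | M ∈ M_A^ν(Q)} ⊆ {Res_M | M ∈ M_A^{NDB}}`. -/
theorem nu_res_subset_ndb_res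
    (A : FOStruct) (c₁ c₂ : A.U)
    (h₁ : HasConst A c₁) (h₂ : HasConst A c₂) (hne : c₁ ≠ c₂) :
    ResClassNu A (binTups A c₁ c₂) ⊆ ResClassNDB A := by
  obtain ⟨i₁, rfl⟩ := h₁
  obtain ⟨i₂, rfl⟩ := h₂
  rintro f ⟨M, ⟨hor, hQ⟩, rfl⟩
  -- `N ≥ 1` also keeps the pointers away from index register `1`, which determines the output.
  let N := (M.prog.map Instr.weight).sum + 1
  have hw : ∀ ins ∈ M.prog, ins.weight ≤ N := fun ins h =>
    (List.single_le_sum (fun _ _ => Nat.zero_le _) _ (List.mem_map_of_mem h)).trans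
      (Nat.le_succ _)
  refine ⟨ndbMachine i₁ i₂ (15 + 2 * N) N M, ndbMachine_NDB, ?_⟩
  funext x
  exact (ndbMachine_res hor hQ hw (by omega) (by omega) x).symm
end
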